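/- arXiv:2502.14540 — 14 statements merged into one kernel-verified Lean document; each statement's English description precedes it below -/
import Mathlib

section
/- Let G = (V, E) be a finite simple graph and K a positive integer. Define the temporal graph 𝒢 on vertex set V ∪ {x, y} (where x, y are two new vertices) whose temporal edges are: ({x,y}, 2); for every pair of distinct vertices u, v ∈ V ∪ {y}, the temporal edge ({u,v}, 2) if {u,v} ∈ E, and the temporal edge ({u,v}, 1) otherwise. Then G has a dominating set of size at most K if and only if there exists a set F' of at most K temporal edges (each with endpoints in V ∪ {x,y} and time label 1 or 2, not already in 𝒢) such that 𝒢 ↑ F' is strictly temporally connected. -/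
/-!
STATEMENT 1: Dominating set of size ≤ K in `G` iff the constructed temporal graph `𝒢`
(on V ∪ {x,y}) can be made strictly temporally connected by adding at most K new
temporal edges with time labels 1 or 2.
-/

namespace Stmt1

/-- Strict journeys using temporal edges of `G`, all at times `≥ t₀`,
with strictly increasing time labels (at least one temporal edge is used). -/
inductive SJourney {V : Type*} (G : Finset (Sym2 V × ℕ)) : ℕ → V → V → Prop
  | single {t₀ t : ℕ} {u v : V} (hle : t₀ ≤ t) (h : (s(u, v), t) ∈ G) : SJourney G t₀ u v
  | cons {t₀ t : ℕ} {u v w : V} (hle : t₀ ≤ t) (h : (s(u, v), t) ∈ G)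
      (htail : SJourney G (t + 1) v w) : SJourney G t₀ u w

/-- A temporal graph is strictly temporally connected if every vertex is reachable
from every other vertex by a strict journey. -/
def StrictTemporallyConnected {V : Type*} (G : Finset (Sym2 V × ℕ)) : Prop :=
  ∀ u v : V, u ≠ v → SJourney G 0 u v

/-- The vertex set `V ∪ {x, y}`: old vertices are `Sum.inl`, and the two new
vertices are `x = Sum.inr true` and `y = Sum.inr false`. -/
abbrev W (V : Type*) := V ⊕ Bool

def x {V : Type*} : W V := Sum.inr true
def y {V : Type*} : W V := Sum.inr false

/-!
Without augmentation, the only ordered pairs of vertices not joined by a strict journey are those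
from `x` to the vertices of `G`, and a strict journey has at most two temporal edges because the
labels are `1` and `2`. Adding `({x, v}, 1)` for every `v` in a dominating set therefore suffices.
Conversely, charge each vertex `u` of `G` to the final edge of some journey from `x` to `u`, taking
the edge `{x, u}` itself whenever it carries the label `1`. At most one vertex is then charged
to each edge, so at most `#F` vertices are charged to added edges. These dominate `G`: if the final
edge from `x` to `u` is an original one, then it is an edge `({v, u}, 2)` with `v` adjacent to `u`
in `G`, and `{x, v}` is an added edge to which `v` is charged.
-/

namespace SJourney

variable {α : Type*} {H H' : Finset (Sym2 α × ℕ)} {t₀ T : ℕ} {a b : α}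

theorem mono (hHH' : H ⊆ H') (h : SJourney H t₀ a b) : SJourney H' t₀ a b := by
  induction h with
  | single hle hmem => exact .single hle (hHH' hmem)
  | cons hle hmem _ ih => exact .cons hle (hHH' hmem) ih

theorem exists_mem_le_label (h : SJourney H t₀ a b) : ∃ e ∈ H, t₀ ≤ e.2 := by
  cases h with
  | single hle hmem => exact ⟨_, hmem, hle⟩
  | cons hle hmem _ => exact ⟨_, hmem, hle⟩

theorem mem_of_label_le (hH : ∀ e ∈ H, e.2 ≤ T) (h : SJourney H T a b) : (s(a, b), T) ∈ H := by
  cases h with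
  | single hle hmem => exact le_antisymm hle (hH _ hmem) ▸ hmem
  | cons hle _ htail =>
    obtain ⟨e, he, hte⟩ := htail.exists_mem_le_label
    exact absurd (hH e he) (by omega)

theorem mem_or_exists_mem_of_label_eq (hH : ∀ e ∈ H, e.2 = 1 ∨ e.2 = 2) (h : SJourney H t₀ a b) :
    (∃ t, (s(a, b), t) ∈ H) ∨ ∃ w, (s(a, w), 1) ∈ H ∧ (s(w, b), 2) ∈ H := by
  have label_le : ∀ e ∈ H, e.2 ≤ 2 := fun e he => by have := hH e he; omega
  cases h with
  | single _ hmem => exact .inl ⟨_, hmem⟩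
  | @cons _ t _ w _ _ hmem htail =>
    obtain rfl | rfl : t = 1 ∨ t = 2 := hH _ hmem
    · exact .inr ⟨w, hmem, htail.mem_of_label_le label_le⟩
    · obtain ⟨e, he, hte⟩ := htail.exists_mem_le_label
      exact absurd (label_le e he) (by omega)

end SJourney

/-- In a temporal graph `H` with labels `1` and `2`, `IsFinalEdge H r e a` says that `e` is the last
temporal edge of a strict journey from `r` to `a`; two-edge journeys are only considered when the
edge from `r` to `a` at time `1` is missing, which makes `a` determined by `e`. Membership of `e` in
`H` is not part of the definition, so that one can ask for it in a smaller temporal graph. -/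
def IsFinalEdge {α : Type*} (H : Finset (Sym2 α × ℕ)) (r : α) (e : Sym2 α × ℕ) (a : α) : Prop :=
  e.1 = s(r, a) ∨ (s(r, a), 1) ∉ H ∧ ∃ w, (s(r, w), 1) ∈ H ∧ e = (s(w, a), 2)

section FinalEdge

variable {α : Type*} {H : Finset (Sym2 α × ℕ)} {r a b : α} {e : Sym2 α × ℕ}

theorem IsFinalEdge.eq (ha : a ≠ r) (hb : b ≠ r) (hea : IsFinalEdge H r e a)
    (heb : IsFinalEdge H r e b) : a = b := by
  rcases hea with hea | ⟨-, v, hv, rfl⟩ <;> rcases heb with heb | ⟨hbr, w, -, heb⟩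
  · exact Sym2.congr_right.mp (hea.symm.trans heb)
  · subst heb
    rcases Sym2.eq_iff.mp hea with ⟨-, hba⟩ | ⟨-, hbr'⟩
    exacts [hba.symm, absurd hbr' hb]
  · rcases Sym2.eq_iff.mp heb with ⟨-, hab⟩ | ⟨-, har'⟩
    exacts [hab, absurd har' ha]
  · rcases Sym2.eq_iff.mp (congrArg Prod.fst heb) with ⟨-, hab⟩ | ⟨rfl, -⟩
    exacts [hab, absurd hv hbr]

theorem SJourney.exists_isFinalEdge {t₀ : ℕ} (hH : ∀ e ∈ H, e.2 = 1 ∨ e.2 = 2)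
    (h : SJourney H t₀ r a) : ∃ e ∈ H, IsFinalEdge H r e a := by
  rcases h.mem_or_exists_mem_of_label_eq hH with ⟨t, hra⟩ | ⟨w, hrw, hwa⟩
  · exact ⟨_, hra, .inl rfl⟩
  · by_cases hra : (s(r, a), 1) ∈ H
    · exact ⟨_, hra, .inl rfl⟩
    · exact ⟨_, hwa, .inr ⟨hra, w, hrw, rfl⟩⟩

theorem card_le_of_forall_exists_isFinalEdge {A : Finset α} {F : Finset (Sym2 α × ℕ)}
    (hr : r ∉ A) (hA : ∀ a ∈ A, ∃ e ∈ F, IsFinalEdge H r e a) : A.card ≤ F.card := by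
  refine Finset.card_le_card_of_forall_subsingleton (fun a e => IsFinalEdge H r e a) hA ?_
  rintro e - a ⟨ha, hea⟩ b ⟨hb, heb⟩
  exact hea.eq (ne_of_mem_of_not_mem ha hr) (ne_of_mem_of_not_mem hb hr) heb

end FinalEdge

/-- `D` is a dominating set of `G`: every vertex outside `D` has a neighbour in `D`. -/
def IsDominatingSet {V : Type*} (G : SimpleGraph V) (D : Finset V) : Prop :=
  ∀ u, u ∉ D → ∃ v ∈ D, G.Adj u v

/-- `𝒢` is the temporal graph on `V ∪ {x, y}` that the reduction from dominating set associates
with `G`, specified by its temporal edges. -/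
def IsReductionGraph {V : Type*} (G : SimpleGraph V) (𝒢 : Finset (Sym2 (W V) × ℕ)) : Prop :=
  ∀ et : Sym2 (W V) × ℕ, et ∈ 𝒢 ↔
    et = (s(x, y), 2) ∨
    (∃ u v : V, u ≠ v ∧
      ((G.Adj u v ∧ et = (s(Sum.inl u, Sum.inl v), 2)) ∨
       (¬ G.Adj u v ∧ et = (s(Sum.inl u, Sum.inl v), 1)))) ∨
    (∃ u : V, et = (s(Sum.inl u, y), 1))

/-- The temporal edges `({x, v}, 1)` for `v ∈ D`: the augmentation of the reduction graph obtained
from a dominating set `D`. -/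
def starEdges {V : Type*} (D : Finset V) : Finset (Sym2 (W V) × ℕ) :=
  D.map ⟨fun v => (s(x, Sum.inl v), 1), fun _ _ h =>
    Sum.inl_injective (Sym2.congr_right.mp (congrArg Prod.fst h))⟩

theorem mem_starEdges {V : Type*} {D : Finset V} {e : Sym2 (W V) × ℕ} :
    e ∈ starEdges D ↔ ∃ v ∈ D, (s(x, Sum.inl v), 1) = e :=
  Finset.mem_map

theorem card_starEdges {V : Type*} (D : Finset V) : (starEdges D).card = D.card :=
  Finset.card_map _

namespace IsReductionGraph

variable {V : Type*} {G : SimpleGraph V} {𝒢 : Finset (Sym2 (W V) × ℕ)} {u v : V} {t : ℕ}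

theorem x_y_mem (h𝒢 : IsReductionGraph G 𝒢) : (s(x, y), 2) ∈ 𝒢 :=
  (h𝒢 _).mpr (.inl rfl)

theorem x_inl_notMem (h𝒢 : IsReductionGraph G 𝒢) : (s(x, Sum.inl u), t) ∉ 𝒢 := by
  simp [h𝒢 _, x, y]

theorem inl_y_mem_iff (h𝒢 : IsReductionGraph G 𝒢) : (s(Sum.inl u, y), t) ∈ 𝒢 ↔ t = 1 := by
  simp [h𝒢 _, x, y]

theorem inl_inl_mem_iff (h𝒢 : IsReductionGraph G 𝒢) :
    (s(Sum.inl u, Sum.inl v), t) ∈ 𝒢 ↔ G.Adj u v ∧ t = 2 ∨ u ≠ v ∧ ¬ G.Adj u v ∧ t = 1 := by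
  constructor
  · intro h
    rcases (h𝒢 _).mp h with h | ⟨a, b, hab, h⟩ | ⟨a, h⟩
    · simp [x] at h
    · simp only [Prod.mk.injEq, Sym2.eq_iff, Sum.inl.injEq] at h
      have := G.adj_comm a b
      grind
    · simp [y] at h
  · rintro (⟨huv, rfl⟩ | ⟨hne, huv, rfl⟩)
    · exact (h𝒢 _).mpr (.inr (.inl ⟨u, v, huv.ne, .inl ⟨huv, rfl⟩⟩))
    · exact (h𝒢 _).mpr (.inr (.inl ⟨u, v, hne, .inr ⟨huv, rfl⟩⟩))

theorem label_eq_one_or_two (h𝒢 : IsReductionGraph G 𝒢) {e : Sym2 (W V) × ℕ} (he : e ∈ 𝒢) :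
    e.2 = 1 ∨ e.2 = 2 := by
  rcases (h𝒢 e).mp he with rfl | ⟨_, _, _, ⟨_, rfl⟩ | ⟨_, rfl⟩⟩ | ⟨_, rfl⟩ <;> simp

theorem sjourney_inl_inl (h𝒢 : IsReductionGraph G 𝒢) (huv : u ≠ v) :
    SJourney 𝒢 0 (Sum.inl u) (Sum.inl v) := by
  by_cases h : G.Adj u v
  · exact .single (Nat.zero_le 2) (h𝒢.inl_inl_mem_iff.mpr (.inl ⟨h, rfl⟩))
  · exact .single (Nat.zero_le 1) (h𝒢.inl_inl_mem_iff.mpr (.inr ⟨huv, h, rfl⟩))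

theorem sjourney_of_ne (h𝒢 : IsReductionGraph G 𝒢) {a b : W V} (hab : a ≠ b)
    (hx : a = x → b = y) : SJourney 𝒢 0 a b := by
  have x_to_y : SJourney 𝒢 0 x y := .single (Nat.zero_le 2) h𝒢.x_y_mem
  have y_to_x (t₀ : ℕ) (ht₀ : t₀ ≤ 2) : SJourney 𝒢 t₀ y x :=
    .single ht₀ (Sym2.eq_swap ▸ h𝒢.x_y_mem)
  have inl_y_mem (u : V) : (s(Sum.inl u, y), 1) ∈ 𝒢 := h𝒢.inl_y_mem_iff.mpr rfl
  match a, b with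
  | .inl u, .inl v => exact h𝒢.sjourney_inl_inl (by simpa using hab)
  | .inl u, .inr false => exact .single (Nat.zero_le 1) (inl_y_mem u)
  | .inl u, .inr true => exact .cons (Nat.zero_le 1) (inl_y_mem u) (y_to_x 2 le_rfl)
  | .inr false, .inl v => exact .single (Nat.zero_le 1) (Sym2.eq_swap ▸ inl_y_mem v)
  | .inr false, .inr true => exact y_to_x 0 (Nat.zero_le 2)
  | .inr true, b => exact hx rfl ▸ x_to_y
  | .inr false, .inr false => exact absurd rfl hab

theorem strictTemporallyConnected_of_subset (h𝒢 : IsReductionGraph G 𝒢)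
    {H : Finset (Sym2 (W V) × ℕ)} (h𝒢H : 𝒢 ⊆ H) (hH : ∀ u, SJourney H 0 x (Sum.inl u)) :
    StrictTemporallyConnected H := by
  intro a b hab
  by_cases hx : a = x → b = y
  · exact (h𝒢.sjourney_of_ne hab hx).mono h𝒢H
  · obtain ⟨rfl, hb⟩ := Classical.not_imp.mp hx
    match b with
    | .inl u => exact hH u
    | .inr true => exact absurd rfl hab
    | .inr false => exact absurd rfl hb

theorem strictTemporallyConnected_union_starEdges [DecidableEq V] (h𝒢 : IsReductionGraph G 𝒢)
    {D : Finset V} (hD : IsDominatingSet G D) :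
    StrictTemporallyConnected (𝒢 ∪ starEdges D) := by
  refine h𝒢.strictTemporallyConnected_of_subset Finset.subset_union_left fun u => ?_
  have x_inl_mem {v : V} (hv : v ∈ D) : (s(x, Sum.inl v), 1) ∈ 𝒢 ∪ starEdges D :=
    Finset.mem_union_right _ (mem_starEdges.mpr ⟨v, hv, rfl⟩)
  by_cases hu : u ∈ D
  · exact .single (Nat.zero_le 1) (x_inl_mem hu)
  · obtain ⟨v, hv, huv⟩ := hD u hu
    have v_u_mem : (s(Sum.inl v, Sum.inl u), 2) ∈ 𝒢 := h𝒢.inl_inl_mem_iff.mpr (.inl ⟨huv.symm, rfl⟩)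
    exact .cons (Nat.zero_le 1) (x_inl_mem hv) (.single le_rfl (Finset.mem_union_left _ v_u_mem))

theorem exists_adj_of_isFinalEdge (h𝒢 : IsReductionGraph G 𝒢) {H : Finset (Sym2 (W V) × ℕ)}
    {e : Sym2 (W V) × ℕ} (he : e ∈ 𝒢) (hfinal : IsFinalEdge H x e (Sum.inl u)) :
    ∃ v, G.Adj u v ∧ (s(x, Sum.inl v), 1) ∈ H := by
  rcases hfinal with hxu | ⟨-, w, hxw, rfl⟩
  · obtain ⟨_, t⟩ := e
    subst hxu
    exact absurd he h𝒢.x_inl_notMem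
  · match w with
    | .inl v =>
      obtain ⟨hvu, -⟩ | ⟨-, -, h⟩ := h𝒢.inl_inl_mem_iff.mp he
      · exact ⟨v, hvu.symm, hxw⟩
      · omega
    | .inr true => exact absurd he h𝒢.x_inl_notMem
    | .inr false =>
      have := h𝒢.inl_y_mem_iff.mp (Sym2.eq_swap ▸ he)
      omega

theorem exists_isDominatingSet [Finite V] [DecidableEq V] (h𝒢 : IsReductionGraph G 𝒢)
    {F : Finset (Sym2 (W V) × ℕ)} (hF : ∀ e ∈ F, e.2 = 1 ∨ e.2 = 2)
    (hconn : StrictTemporallyConnected (𝒢 ∪ F)) :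
    ∃ D : Finset V, D.card ≤ F.card ∧ IsDominatingSet G D := by
  let D : Finset V := (Set.toFinite {u | ∃ e ∈ F, IsFinalEdge (𝒢 ∪ F) x e (Sum.inl u)}).toFinset
  have mem_D {u : V} : u ∈ D ↔ ∃ e ∈ F, IsFinalEdge (𝒢 ∪ F) x e (Sum.inl u) := by simp [D]
  have label_eq_union : ∀ e ∈ 𝒢 ∪ F, e.2 = 1 ∨ e.2 = 2 := fun e he =>
    (Finset.mem_union.mp he).elim h𝒢.label_eq_one_or_two (hF e)
  refine ⟨D, ?_, fun u hu => ?_⟩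
  · rw [← Finset.card_map Function.Embedding.inl]
    refine card_le_of_forall_exists_isFinalEdge (H := 𝒢 ∪ F) (r := x) (by simp [x]) fun a ha => ?_
    obtain ⟨u, hu, rfl⟩ := Finset.mem_map.mp ha
    exact mem_D.mp hu
  · obtain ⟨e, he, hfinal⟩ := (hconn x (Sum.inl u) Sum.inr_ne_inl).exists_isFinalEdge label_eq_union
    have he𝒢 : e ∈ 𝒢 := (Finset.mem_union.mp he).resolve_right fun heF =>
      hu (mem_D.mpr ⟨e, heF, hfinal⟩)
    obtain ⟨v, huv, hxv⟩ := h𝒢.exists_adj_of_isFinalEdge he𝒢 hfinal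
    have hxvF : (s(x, Sum.inl v), 1) ∈ F := (Finset.mem_union.mp hxv).resolve_left h𝒢.x_inl_notMem
    exact ⟨v, mem_D.mpr ⟨_, hxvF, .inl rfl⟩, huv⟩

end IsReductionGraph

theorem dominatingSet_iff_strict2TCA {V : Type*} [Fintype V] [DecidableEq V]
    (G : SimpleGraph V) (K : ℕ) (hK : 1 ≤ K)
    (𝒢 : Finset (Sym2 (W V) × ℕ))
    -- 𝒢 consists of: ({x,y},2); for distinct u,v ∈ V, ({u,v},2) if {u,v} ∈ E and
    -- ({u,v},1) otherwise; and ({u,y},1) for u ∈ V (such pairs are never in E).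
    (h𝒢 : ∀ et : Sym2 (W V) × ℕ, et ∈ 𝒢 ↔
      et = (s(x, y), 2) ∨
      (∃ u v : V, u ≠ v ∧
        ((G.Adj u v ∧ et = (s(Sum.inl u, Sum.inl v), 2)) ∨
         (¬ G.Adj u v ∧ et = (s(Sum.inl u, Sum.inl v), 1)))) ∨
      (∃ u : V, et = (s(Sum.inl u, y), 1))) :
    (∃ D : Finset V, D.card ≤ K ∧ ∀ u : V, u ∉ D → ∃ v ∈ D, G.Adj u v) ↔
      (∃ F' : Finset (Sym2 (W V) × ℕ), F'.card ≤ K ∧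
        (∀ et ∈ F', ¬ et.1.IsDiag ∧ (et.2 = 1 ∨ et.2 = 2) ∧ et ∉ 𝒢) ∧
        StrictTemporallyConnected (𝒢 ∪ F')) := by
  have hred : IsReductionGraph G 𝒢 := h𝒢
  constructor
  · rintro ⟨D, hDK, hD⟩
    refine ⟨starEdges D, (card_starEdges D).trans_le hDK, fun e he => ?_,
      hred.strictTemporallyConnected_union_starEdges hD⟩
    obtain ⟨v, -, rfl⟩ := mem_starEdges.mp he
    exact ⟨by simp [x], .inl rfl, hred.x_inl_notMem⟩
  · rintro ⟨F, hFK, hF, hconn⟩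
    obtain ⟨D, hDF, hD⟩ := hred.exists_isDominatingSet (fun e he => (hF e he).2.1) hconn
    exact ⟨D, hDF.trans hFK, hD⟩

end Stmt1
end

section
/- Let G = (V, E) be a finite simple graph and K a positive integer. Define the temporal graph 𝒢 on vertex set V ∪ {x, y} (where x, y are two new vertices) whose temporal edges are: ({x,y}, 2); for every pair of distinct vertices u, v ∈ V ∪ {y}, the temporal edge ({u,v}, 2) if {u,v} ∈ E, and the temporal edge ({u,v}, 1) otherwise. Then G has a dominating set of size at most K if and only if there exists a set F' of at most K temporal edges (each with endpoints in V ∪ {x,y} and time label 1 or 2, not already in 𝒢) such that in 𝒢 ↑ F' the vertex x is a strict source, i.e., every other vertex is reachable from x by a strict journey. -/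
/-!
STATEMENT 2: Dominating set of size ≤ K in `G` iff, in the constructed temporal graph
`𝒢` (on V ∪ {x,y}), the vertex `x` can be made a strict source (every other vertex is
reachable from x by a strict journey) by adding at most K new temporal edges with time
labels 1 or 2.
-/

namespace Stmt2

/-- Strict journeys using temporal edges of `G`, all at times `≥ t₀`,
with strictly increasing time labels (at least one temporal edge is used). -/
inductive SJourney {V : Type*} (G : Finset (Sym2 V × ℕ)) : ℕ → V → V → Prop
  | single {t₀ t : ℕ} {u v : V} (hle : t₀ ≤ t) (h : (s(u, v), t) ∈ G) : SJourney G t₀ u v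
  | cons {t₀ t : ℕ} {u v w : V} (hle : t₀ ≤ t) (h : (s(u, v), t) ∈ G)
      (htail : SJourney G (t + 1) v w) : SJourney G t₀ u w

/-- A temporal graph is strictly temporally connected if every vertex is reachable
from every other vertex by a strict journey. -/
def StrictTemporallyConnected {V : Type*} (G : Finset (Sym2 V × ℕ)) : Prop :=
  ∀ u v : V, u ≠ v → SJourney G 0 u v

/-- The vertex set `V ∪ {x, y}`: old vertices are `Sum.inl`, and the two new
vertices are `x = Sum.inr true` and `y = Sum.inr false`. -/
abbrev W (V : Type*) := V ⊕ Bool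

def x {V : Type*} : W V := Sum.inr true
def y {V : Type*} : W V := Sum.inr false

/-! In a temporal graph, every vertex other than the source that can be reached is first reached
along some *foremost* temporal edge, and a temporal edge is foremost for at most one of its
endpoints, the one reached later. Hence at most `|F|` vertices are first reached along an edge of
`F`, and those in `V` dominate `G`: any other vertex `v` of `V` is first reached along an edge of
`𝒢`. Nothing but `x` is reached before time `1`, and `𝒢` has no edge between `x` and `V`, so this
edge has label `2` and joins `v` to a `G`-neighbour `u`. As `u` was reached before time `2`, its own
foremost edge joins it to `x` at time `1` and therefore belongs to `F`. Conversely, the edges from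
`x` at time `1` to a dominating set make `x` a strict source. -/

section ForemostEdges

variable {V : Type*} {H : Finset (Sym2 V × ℕ)} {a : V}

/-- `ArrivesBefore H a t v`: the vertex `v` is `a` itself or is reached from `a` by a strict journey
of `H` all of whose labels are smaller than `t`. In contrast to `SJourney`, which bounds the
departure time, journeys are extended here at their end, so that the arrival time is bounded. -/
inductive ArrivesBefore (H : Finset (Sym2 V × ℕ)) (a : V) : ℕ → V → Prop
  | source (t : ℕ) : ArrivesBefore H a t a
  | step {t₁ t : ℕ} {u v : V} (hu : ArrivesBefore H a t₁ u) (huv : (s(u, v), t₁) ∈ H)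
      (hlt : t₁ < t) : ArrivesBefore H a t v

/-- The temporal edge `et` of `H` is the last one of a foremost (that is, earliest arriving)
journey from `a` to `v`, where `v ≠ a`. -/
def IsForemostEdge (H : Finset (Sym2 V × ℕ)) (a : V) (et : Sym2 V × ℕ) (v : V) : Prop :=
  et ∈ H ∧ ∃ u t, et = (s(u, v), t) ∧ ArrivesBefore H a t u ∧ ¬ ArrivesBefore H a t v

theorem ArrivesBefore.mono {t₁ t₂ : ℕ} {v : V} (hv : ArrivesBefore H a t₁ v) (hle : t₁ ≤ t₂) :
    ArrivesBefore H a t₂ v := by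
  cases hv with
  | source => exact .source t₂
  | step hu huv hlt => exact .step hu huv (hlt.trans_le hle)

theorem ArrivesBefore.eq_source_of_forall_le_label {t : ℕ} {v : V} (hv : ArrivesBefore H a t v)
    (hlabel : ∀ et ∈ H, t ≤ et.2) : v = a := by
  cases hv with
  | source => rfl
  | step hu huv hlt => exact absurd (hlabel _ huv) hlt.not_ge

theorem SJourney.exists_arrivesBefore {t₀ : ℕ} {u v : V} (h : SJourney H t₀ u v)
    (hu : ArrivesBefore H a t₀ u) : ∃ t, ArrivesBefore H a t v := by
  induction h with
  | @single _ t _ _ hle huv => exact ⟨t + 1, .step (hu.mono hle) huv t.lt_succ_self⟩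
  | @cons _ t _ _ _ hle huw _ ih => exact ih (.step (hu.mono hle) huw t.lt_succ_self)

theorem ArrivesBefore.exists_isForemostEdge {t : ℕ} {v : V} (hv : ArrivesBefore H a t v)
    (hne : v ≠ a) : ∃ et, et.2 < t ∧ IsForemostEdge H a et v := by
  classical
  have hex : ∃ n, ArrivesBefore H a n v := ⟨t, hv⟩
  have hfind_le : Nat.find hex ≤ t := Nat.find_min' hex hv
  cases Nat.find_spec hex with
  | source => exact absurd rfl hne
  | @step t₁ _ u _ hu huv hlt =>
    exact ⟨(s(u, v), t₁), hlt.trans_le hfind_le, huv, u, t₁, rfl, hu, Nat.find_min hex hlt⟩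

theorem IsForemostEdge.unique {et : Sym2 V × ℕ} {v w : V} (hv : IsForemostEdge H a et v)
    (hw : IsForemostEdge H a et w) : v = w := by
  obtain ⟨-, u, t, rfl, hu, -⟩ := hv
  obtain ⟨-, u', t', heq, -, hw⟩ := hw
  obtain ⟨hends, rfl⟩ := Prod.mk.inj heq
  rcases Sym2.eq_iff.1 hends with ⟨-, hvw⟩ | ⟨rfl, -⟩
  · exact hvw
  · exact absurd hu hw

theorem exists_finset_mem_iff_exists_isForemostEdge (H : Finset (Sym2 V × ℕ)) (a : V)
    (F : Finset (Sym2 V × ℕ)) :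
    ∃ D : Finset V, D.card ≤ F.card ∧ ∀ v, v ∈ D ↔ ∃ et ∈ F, IsForemostEdge H a et v := by
  have hfin : (⋃ et ∈ F, {v | IsForemostEdge H a et v}).Finite :=
    F.finite_toSet.biUnion fun et _ => Set.Subsingleton.finite fun _ hv _ hw => hv.unique hw
  have hmem (v : V) : v ∈ hfin.toFinset ↔ ∃ et ∈ F, IsForemostEdge H a et v := by
    simp only [Set.Finite.mem_toFinset, Set.mem_iUnion, Set.mem_ofPred_eq, exists_prop]
  refine ⟨hfin.toFinset, ?_, hmem⟩
  exact Finset.card_le_card_of_forall_subsingleton (fun v et => IsForemostEdge H a et v)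
    (fun v hv => (hmem v).1 hv) fun _ _ _ hv _ hw => hv.2.unique hw.2

end ForemostEdges

section Reduction

variable {V : Type*} {G : SimpleGraph V} {𝒢 F : Finset (Sym2 (W V) × ℕ)}

/-- The finite temporal graph `𝒢` on `V ∪ {x, y}` is the one built from `G` in the reduction from
dominating set. It is a predicate rather than a `Finset` because adjacency in `G` is not assumed to
be decidable. -/
def IsDominationGadget (G : SimpleGraph V) (𝒢 : Finset (Sym2 (W V) × ℕ)) : Prop :=
  ∀ et : Sym2 (W V) × ℕ, et ∈ 𝒢 ↔
    et = (s(x, y), 2) ∨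
    (∃ u v : V, u ≠ v ∧
      ((G.Adj u v ∧ et = (s(Sum.inl u, Sum.inl v), 2)) ∨
       (¬ G.Adj u v ∧ et = (s(Sum.inl u, Sum.inl v), 1)))) ∨
    (∃ u : V, et = (s(Sum.inl u, y), 1))

namespace IsDominationGadget

theorem x_y_mem (h𝒢 : IsDominationGadget G 𝒢) : (s(x, y), 2) ∈ 𝒢 :=
  (h𝒢 _).2 (.inl rfl)

theorem x_inl_notMem (h𝒢 : IsDominationGadget G 𝒢) (v : V) (t : ℕ) :
    (s(x, Sum.inl v), t) ∉ 𝒢 := by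
  rw [h𝒢]
  simp [x, y]

theorem label_eq_one_or_two (h𝒢 : IsDominationGadget G 𝒢) {et : Sym2 (W V) × ℕ} (het : et ∈ 𝒢) :
    et.2 = 1 ∨ et.2 = 2 := by
  rcases (h𝒢 et).1 het with rfl | ⟨_, _, -, ⟨-, rfl⟩ | ⟨-, rfl⟩⟩ | ⟨_, rfl⟩ <;> simp

theorem inl_two_mem_iff (h𝒢 : IsDominationGadget G 𝒢) {w : W V} {v : V} :
    (s(w, Sum.inl v), 2) ∈ 𝒢 ↔ ∃ u, w = Sum.inl u ∧ G.Adj u v := by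
  rw [h𝒢]
  constructor
  · rintro (h | ⟨u, u', -, ⟨hadj, h⟩ | ⟨-, h⟩⟩ | ⟨u, h⟩)
    · simp [x, y] at h
    · rcases Sym2.eq_iff.1 (Prod.mk.inj h).1 with ⟨rfl, hv⟩ | ⟨rfl, hv⟩ <;> cases hv
      · exact ⟨u, rfl, hadj⟩
      · exact ⟨u', rfl, hadj.symm⟩
    · simp at h
    · simp at h
  · rintro ⟨u, rfl, hadj⟩
    exact .inr (.inl ⟨u, v, hadj.ne, .inl ⟨hadj, rfl⟩⟩)

end IsDominationGadget

variable [DecidableEq V]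

/-- The temporal edges at time `1` joining `x` to the vertices of `D`: the augmentation that makes
`x` a strict source when `D` is dominating. -/
def sourceStar (D : Finset V) : Finset (Sym2 (W V) × ℕ) :=
  D.image fun v => (s(x, Sum.inl v), 1)

theorem x_inl_mem_sourceStar {D : Finset V} {v : V} (hv : v ∈ D) :
    (s(x, Sum.inl v), 1) ∈ sourceStar D :=
  Finset.mem_image_of_mem _ hv

namespace IsDominationGadget

theorem sourceStar_isNew (h𝒢 : IsDominationGadget G 𝒢) (D : Finset V) :
    ∀ et ∈ sourceStar D, ¬ et.1.IsDiag ∧ (et.2 = 1 ∨ et.2 = 2) ∧ et ∉ 𝒢 := by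
  intro et het
  obtain ⟨v, -, rfl⟩ := Finset.mem_image.1 het
  exact ⟨by simp [x], .inl rfl, h𝒢.x_inl_notMem v 1⟩

theorem sJourney_union_sourceStar (h𝒢 : IsDominationGadget G 𝒢) {D : Finset V}
    (hdom : ∀ u : V, u ∉ D → ∃ v ∈ D, G.Adj u v) {v : W V} (hv : v ≠ x) :
    SJourney (𝒢 ∪ sourceStar D) 0 x v := by
  have hstar {u : V} (hu : u ∈ D) : (s(x, Sum.inl u), 1) ∈ 𝒢 ∪ sourceStar D :=
    Finset.mem_union_right _ (x_inl_mem_sourceStar hu)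
  rcases v with v | _ | _
  · by_cases hvD : v ∈ D
    · exact .single (Nat.zero_le 1) (hstar hvD)
    · obtain ⟨u, huD, hadj⟩ := hdom v hvD
      have huv : (s(Sum.inl u, Sum.inl v), 2) ∈ 𝒢 := h𝒢.inl_two_mem_iff.2 ⟨u, rfl, hadj.symm⟩
      exact .cons (Nat.zero_le 1) (hstar huD) (.single le_rfl (Finset.mem_union_left _ huv))
  · exact .single (Nat.zero_le 2) (Finset.mem_union_left _ h𝒢.x_y_mem)
  · exact absurd rfl hv

theorem union_label_pos (h𝒢 : IsDominationGadget G 𝒢) (hF : ∀ et ∈ F, 1 ≤ et.2) :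
    ∀ et ∈ 𝒢 ∪ F, 1 ≤ et.2 := by
  intro et het
  rcases Finset.mem_union.1 het with het | het
  · rcases h𝒢.label_eq_one_or_two het with h | h <;> omega
  · exact hF et het

theorem exists_isForemostEdge_of_arrivesBefore_two (h𝒢 : IsDominationGadget G 𝒢)
    (hF : ∀ et ∈ F, 1 ≤ et.2) {u : V} (hu : ArrivesBefore (𝒢 ∪ F) x 2 (Sum.inl u)) :
    ∃ et ∈ F, IsForemostEdge (𝒢 ∪ F) x et (Sum.inl u) := by
  obtain ⟨et, hlt, hfore⟩ := hu.exists_isForemostEdge Sum.inl_ne_inr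
  have ⟨hmem, w, t, het, hw, _⟩ := hfore
  subst het
  obtain rfl : w = x := hw.eq_source_of_forall_le_label fun et het =>
    (Nat.le_of_lt_succ hlt).trans (h𝒢.union_label_pos hF et het)
  exact ⟨_, (Finset.mem_union.1 hmem).resolve_left (h𝒢.x_inl_notMem u t), hfore⟩

theorem exists_adj_arrivesBefore_two (h𝒢 : IsDominationGadget G 𝒢) (hF : ∀ et ∈ F, 1 ≤ et.2)
    {et : Sym2 (W V) × ℕ} (het : et ∈ 𝒢) {v : V}
    (hfore : IsForemostEdge (𝒢 ∪ F) x et (Sum.inl v)) :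
    ∃ u, G.Adj v u ∧ ArrivesBefore (𝒢 ∪ F) x 2 (Sum.inl u) := by
  obtain ⟨-, w, t, rfl, hw, -⟩ := hfore
  rcases h𝒢.label_eq_one_or_two het with rfl | rfl
  · obtain rfl : w = x := hw.eq_source_of_forall_le_label (h𝒢.union_label_pos hF)
    exact absurd het (h𝒢.x_inl_notMem v 1)
  · obtain ⟨u, rfl, hadj⟩ := h𝒢.inl_two_mem_iff.1 het
    exact ⟨u, hadj.symm, hw⟩

theorem exists_dominatingSet_card_le (h𝒢 : IsDominationGadget G 𝒢)
    (hF : ∀ et ∈ F, 1 ≤ et.2) (hreach : ∀ v : V, SJourney (𝒢 ∪ F) 0 x (Sum.inl v)) :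
    ∃ D : Finset V, D.card ≤ F.card ∧ ∀ u : V, u ∉ D → ∃ v ∈ D, G.Adj u v := by
  obtain ⟨D, hDF, mem_D⟩ := exists_finset_mem_iff_exists_isForemostEdge (𝒢 ∪ F) x F
  refine ⟨D.toLeft, Finset.card_toLeft_le.trans hDF, fun v hv => ?_⟩
  obtain ⟨t, ht⟩ := (hreach v).exists_arrivesBefore (.source 0)
  obtain ⟨et, -, hfore⟩ := ht.exists_isForemostEdge Sum.inl_ne_inr
  have het : et ∈ 𝒢 := (Finset.mem_union.1 hfore.1).resolve_right fun hetF =>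
    hv (Finset.mem_toLeft.2 ((mem_D _).2 ⟨et, hetF, hfore⟩))
  obtain ⟨u, hadj, hu⟩ := h𝒢.exists_adj_arrivesBefore_two hF het hfore
  have huD : Sum.inl u ∈ D := (mem_D _).2 (h𝒢.exists_isForemostEdge_of_arrivesBefore_two hF hu)
  exact ⟨u, Finset.mem_toLeft.2 huD, hadj⟩

end IsDominationGadget

end Reduction

theorem dominatingSet_iff_strict2TSA {V : Type*} [Fintype V] [DecidableEq V]
    (G : SimpleGraph V) (K : ℕ) (hK : 1 ≤ K)
    (𝒢 : Finset (Sym2 (W V) × ℕ))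
    -- 𝒢 consists of: ({x,y},2); for distinct u,v ∈ V, ({u,v},2) if {u,v} ∈ E and
    -- ({u,v},1) otherwise; and ({u,y},1) for u ∈ V (such pairs are never in E).
    (h𝒢 : ∀ et : Sym2 (W V) × ℕ, et ∈ 𝒢 ↔
      et = (s(x, y), 2) ∨
      (∃ u v : V, u ≠ v ∧
        ((G.Adj u v ∧ et = (s(Sum.inl u, Sum.inl v), 2)) ∨
         (¬ G.Adj u v ∧ et = (s(Sum.inl u, Sum.inl v), 1)))) ∨
      (∃ u : V, et = (s(Sum.inl u, y), 1))) :
    (∃ D : Finset V, D.card ≤ K ∧ ∀ u : V, u ∉ D → ∃ v ∈ D, G.Adj u v) ↔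
      (∃ F' : Finset (Sym2 (W V) × ℕ), F'.card ≤ K ∧
        (∀ et ∈ F', ¬ et.1.IsDiag ∧ (et.2 = 1 ∨ et.2 = 2) ∧ et ∉ 𝒢) ∧
        ∀ v : W V, v ≠ x → SJourney (𝒢 ∪ F') 0 x v) := by
  have hgadget : IsDominationGadget G 𝒢 := h𝒢
  constructor
  · rintro ⟨D, hDK, hdom⟩
    exact ⟨sourceStar D, Finset.card_image_le.trans hDK, hgadget.sourceStar_isNew D,
      fun v hv => hgadget.sJourney_union_sourceStar hdom hv⟩
  · rintro ⟨F, hFK, hnew, hreach⟩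
    have hpos : ∀ et ∈ F, 1 ≤ et.2 := fun et het => by
      rcases (hnew et het).2.1 with h | h <;> omega
    obtain ⟨D, hDF, hdom⟩ :=
      hgadget.exists_dominatingSet_card_le hpos fun v => hreach (Sum.inl v) Sum.inl_ne_inr
    exact ⟨D, hDF.trans hFK, hdom⟩

end Stmt2
end

section
/- Let 𝒢 be a temporal graph of lifespan T on a finite vertex set V such that every snapshot has at least one component (V nonempty), and for each time t ∈ {1, …, T} let C^t_1, …, C^t_{k_t} denote the snapshot components of 𝒢 at time t. Then 𝒢 is temporally connected (with non-strict journeys) if and only if 𝒢 satisfies property 𝒫: for every i_1 ≤ k_1 and every i_T ≤ k_T there exist indices i_2, …, i_{T−1} such that for all j < T, the components C^j_{i_j} and C^{j+1}_{i_{j+1}} have nonempty intersection. -/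
/-!
STATEMENT 3: A temporal graph of lifespan `T` (on a nonempty finite vertex set) is
temporally connected (non-strict journeys) iff it satisfies property 𝒫: for every
snapshot component at time 1 and every snapshot component at time T, there is a
sequence of snapshot components (one per time step) joining them, in which
consecutive components intersect.
-/

namespace Stmt3

/-- Non-strict journeys using temporal edges of `G`, all at times `≥ t₀`,
with nondecreasing time labels (at least one temporal edge is used). -/
inductive NSJourney {V : Type*} (G : Finset (Sym2 V × ℕ)) : ℕ → V → V → Prop
  | single {t₀ t : ℕ} {u v : V} (hle : t₀ ≤ t) (h : (s(u, v), t) ∈ G) : NSJourney G t₀ u v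
  | cons {t₀ t : ℕ} {u v w : V} (hle : t₀ ≤ t) (h : (s(u, v), t) ∈ G)
      (htail : NSJourney G t v w) : NSJourney G t₀ u w

def TemporallyConnected {V : Type*} (G : Finset (Sym2 V × ℕ)) : Prop :=
  ∀ u v : V, u ≠ v → NSJourney G 0 u v

/-- The snapshot of a temporal graph at time `t`; its connected components are the
snapshot components at time `t`. -/
def snapshot {V : Type*} (G : Finset (Sym2 V × ℕ)) (t : ℕ) : SimpleGraph V :=
  SimpleGraph.fromEdgeSet {e | (e, t) ∈ G}

/-- Property 𝒫: for every snapshot component at time 1 (the component of any `u`) and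
every snapshot component at time `T` (the component of any `v`), there is a choice of a
snapshot component at each time `j` (given by a representative `c j`), starting at the
component of `u` and ending at the component of `v`, such that consecutive components
intersect. -/
def PropertyP {V : Type*} (G : Finset (Sym2 V × ℕ)) (T : ℕ) : Prop :=
  ∀ u v : V, ∃ c : ℕ → V,
    (snapshot G 1).Reachable (c 1) u ∧
    (snapshot G T).Reachable (c T) v ∧
    ∀ j : ℕ, 1 ≤ j → j < T →
      ∃ z : V, (snapshot G j).Reachable (c j) z ∧ (snapshot G (j + 1)).Reachable (c (j + 1)) z

/-!
Waiting at a vertex and walking inside a snapshot component both preserve the existence of a chain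
of intersecting components, so a journey yields such a chain one temporal edge at a time.
Conversely, consecutive components of a chain share a vertex, and walking from one shared vertex to
the next, each time inside a single component, is a non-strict journey.
-/

section

variable {V : Type*} {G : Finset (Sym2 V × ℕ)} {s t T : ℕ} {u v w : V}

/-- Journeys from `u` to `v` using only times `≥ s`, the empty journey included. -/
def JourneyReachable (G : Finset (Sym2 V × ℕ)) (s : ℕ) (u v : V) : Prop :=
  u = v ∨ NSJourney G s u v

/-- A chain of consecutively intersecting snapshot components, one for each time from `s` to `T`,
from the component of `u` at time `s` to the component of `v` at time `T`. The component at time `j`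
is encoded by a representative `c j`, so that property 𝒫 is `ComponentChain G 1 T u v` for all
`u` and `v`. -/
def ComponentChain (G : Finset (Sym2 V × ℕ)) (s T : ℕ) (u v : V) : Prop :=
  ∃ c : ℕ → V,
    (snapshot G s).Reachable (c s) u ∧
    (snapshot G T).Reachable (c T) v ∧
    ∀ j : ℕ, s ≤ j → j < T →
      ∃ z : V, (snapshot G j).Reachable (c j) z ∧ (snapshot G (j + 1)).Reachable (c (j + 1)) z

theorem snapshot_reachable_of_mem (h : (s(u, v), t) ∈ G) : (snapshot G t).Reachable u v := by
  by_cases huv : u = v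
  · exact huv ▸ .rfl
  · exact SimpleGraph.Adj.reachable ((SimpleGraph.fromEdgeSet_adj _).2 ⟨h, huv⟩)

theorem NSJourney.anti (hst : s ≤ t) (h : NSJourney G t u v) : NSJourney G s u v := by
  cases h with
  | single hle he => exact .single (hst.trans hle) he
  | cons hle he htail => exact .cons (hst.trans hle) he htail

theorem NSJourney.of_forall_le (hG : ∀ et ∈ G, t ≤ et.2) (h : NSJourney G s u v) :
    NSJourney G t u v := by
  cases h with
  | single _ he => exact .single (hG _ he) he
  | cons _ he htail => exact .cons (hG _ he) he htail

namespace JourneyReachable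

theorem anti (hst : s ≤ t) (h : JourneyReachable G t u v) : JourneyReachable G s u v :=
  h.imp_right (NSJourney.anti hst)

theorem of_adj (huv : (snapshot G s).Adj u v) (h : JourneyReachable G s v w) :
    JourneyReachable G s u w := by
  have he : (s(u, v), s) ∈ G := ((SimpleGraph.fromEdgeSet_adj _).1 huv).1
  rcases h with rfl | h
  · exact .inr (.single le_rfl he)
  · exact .inr (.cons le_rfl he h)

theorem of_reachable (huv : (snapshot G s).Reachable u v) (h : JourneyReachable G s v w) :
    JourneyReachable G s u w := by
  obtain ⟨p⟩ := huv
  induction p with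
  | nil => exact h
  | cons hadj _ ih => exact (ih h).of_adj hadj

end JourneyReachable

theorem temporallyConnected_iff_forall_journeyReachable (hG : ∀ et ∈ G, t ≤ et.2) :
    TemporallyConnected G ↔ ∀ u v, JourneyReachable G t u v := by
  refine forall₂_congr fun u v => ⟨fun h => ?_, fun h huv => ?_⟩
  · exact or_iff_not_imp_left.2 fun huv => (h huv).of_forall_le hG
  · exact (h.resolve_left huv).anti (Nat.zero_le t)

theorem componentChain_self : ComponentChain G s s u v ↔ (snapshot G s).Reachable u v :=
  ⟨fun ⟨_, hu, hv, _⟩ => hu.symm.trans hv,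
    fun h => ⟨fun _ => u, .rfl, h, fun _ hj hj' => absurd hj hj'.not_ge⟩⟩

theorem componentChain_iff_exists_reachable (hs : s < T) :
    ComponentChain G s T u w ↔
      ∃ v, (snapshot G s).Reachable u v ∧ ComponentChain G (s + 1) T v w := by
  constructor
  · rintro ⟨c, hu, hw, hc⟩
    obtain ⟨v, hv, hv'⟩ := hc s le_rfl hs
    exact ⟨v, hu.symm.trans hv, c, hv', hw, fun j hj => hc j (Nat.le_of_succ_le hj)⟩
  · rintro ⟨v, huv, c, hv, hw, hc⟩
    refine ⟨Function.update c s u, by simp, by simpa [hs.ne'] using hw, fun j hj hjT => ?_⟩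
    rcases hj.eq_or_lt with rfl | hj
    · exact ⟨v, by simpa using huv, by simpa using hv⟩
    · simpa [hj.ne', (hj.trans j.lt_succ_self).ne'] using hc j hj hjT

namespace ComponentChain

protected theorem refl (G : Finset (Sym2 V × ℕ)) (s T : ℕ) (u : V) : ComponentChain G s T u u :=
  ⟨fun _ => u, .rfl, .rfl, fun _ _ _ => ⟨u, .rfl, .rfl⟩⟩

theorem of_reachable (huv : (snapshot G s).Reachable u v) (h : ComponentChain G s T v w) :
    ComponentChain G s T u w :=
  let ⟨c, hv, hw, hc⟩ := h
  ⟨c, hv.trans huv.symm, hw, hc⟩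

theorem anti (hst : s ≤ t) (htT : t ≤ T) (h : ComponentChain G t T u v) :
    ComponentChain G s T u v := by
  induction hst using Nat.decreasingInduction with
  | self => exact h
  | of_succ k hk ih => exact (componentChain_iff_exists_reachable (hk.trans_le htT)).2 ⟨u, .rfl, ih⟩

theorem journeyReachable (hs : s ≤ T) (h : ComponentChain G s T u v) :
    JourneyReachable G s u v := by
  induction hs using Nat.decreasingInduction generalizing u with
  | self => exact .of_reachable (componentChain_self.1 h) (.inl rfl)
  | of_succ k hk ih =>
    obtain ⟨z, huz, hz⟩ := (componentChain_iff_exists_reachable hk).1 h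
    exact .of_reachable huz ((ih hz).anti k.le_succ)

end ComponentChain

theorem NSJourney.componentChain (hG : ∀ et ∈ G, et.2 ≤ T) (h : NSJourney G s u v) :
    ComponentChain G s T u v := by
  induction h with
  | single hle he =>
    exact .anti hle (hG _ he) (.of_reachable (snapshot_reachable_of_mem he) (.refl ..))
  | cons hle he _ ih =>
    exact .anti hle (hG _ he) (.of_reachable (snapshot_reachable_of_mem he) ih)

theorem componentChain_iff_journeyReachable (hs : s ≤ T) (hG : ∀ et ∈ G, et.2 ≤ T) :
    ComponentChain G s T u v ↔ JourneyReachable G s u v := by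
  refine ⟨ComponentChain.journeyReachable hs, ?_⟩
  rintro (rfl | h)
  · exact .refl ..
  · exact h.componentChain hG

theorem temporallyConnected_iff_propertyP_general (hT : 1 ≤ T)
    (hG : ∀ et ∈ G, 1 ≤ et.2 ∧ et.2 ≤ T) : TemporallyConnected G ↔ PropertyP G T :=
  calc
    TemporallyConnected G ↔ ∀ u v, JourneyReachable G 1 u v :=
      temporallyConnected_iff_forall_journeyReachable fun et het => (hG et het).1
    _ ↔ ∀ u v, ComponentChain G 1 T u v :=
      forall₂_congr fun _ _ =>
        (componentChain_iff_journeyReachable hT fun et het => (hG et het).2).symm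
    _ ↔ PropertyP G T := .rfl

end

theorem temporallyConnected_iff_propertyP {V : Type*} [Fintype V] [Nonempty V]
    (G : Finset (Sym2 V × ℕ)) (T : ℕ)
    (hvalid : ∀ et ∈ G, ¬ et.1.IsDiag ∧ 1 ≤ et.2)
    (hle : ∀ et ∈ G, et.2 ≤ T)
    (hmax : ∃ et ∈ G, et.2 = T) :
    TemporallyConnected G ↔ PropertyP G T := by
  obtain ⟨et, het, rfl⟩ := hmax
  exact temporallyConnected_iff_propertyP_general (hvalid et het).2
    fun e he => ⟨(hvalid e he).2, hle e he⟩

end Stmt3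
end

section
/- Let 𝒢 be a temporal graph of lifespan 2 on a nonempty finite vertex set V, with snapshot components C^1_1, …, C^1_{k_1} at time 1 and C^2_1, …, C^2_{k_2} at time 2. Then 𝒢 is temporally connected (with non-strict journeys) if and only if for every i_1 ≤ k_1 and every i_2 ≤ k_2, the intersection C^1_{i_1} ∩ C^2_{i_2} is nonempty. -/
/-!
STATEMENT 4: A temporal graph of lifespan 2 (on a nonempty finite vertex set) is
temporally connected (non-strict journeys) iff every snapshot component at time 1
intersects every snapshot component at time 2.
-/

namespace Stmt4

/-- Non-strict journeys using temporal edges of `G`, all at times `≥ t₀`,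
with nondecreasing time labels (at least one temporal edge is used). -/
inductive NSJourney {V : Type*} (G : Finset (Sym2 V × ℕ)) : ℕ → V → V → Prop
  | single {t₀ t : ℕ} {u v : V} (hle : t₀ ≤ t) (h : (s(u, v), t) ∈ G) : NSJourney G t₀ u v
  | cons {t₀ t : ℕ} {u v w : V} (hle : t₀ ≤ t) (h : (s(u, v), t) ∈ G)
      (htail : NSJourney G t v w) : NSJourney G t₀ u w

def TemporallyConnected {V : Type*} (G : Finset (Sym2 V × ℕ)) : Prop :=
  ∀ u v : V, u ≠ v → NSJourney G 0 u v

/-- The snapshot of a temporal graph at time `t`; its connected components are the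
snapshot components at time `t`. -/
def snapshot {V : Type*} (G : Finset (Sym2 V × ℕ)) (t : ℕ) : SimpleGraph V :=
  SimpleGraph.fromEdgeSet {e | (e, t) ∈ G}

/-!
A journey whose labels are at least `t` first moves inside a component of the snapshot at `t`, and
from then on uses only labels at least `t + 1`. Peeling off the two times of a graph with two labels
`a < b` in this way, `v` is reachable from `u` exactly when the time-`a` component of `u` meets the
time-`b` component of `v`.
-/

section Journeys

variable {V : Type*} {G : Finset (Sym2 V × ℕ)} {s t : ℕ} {u v z : V}

theorem reachable_snapshot_of_mem (h : (s(u, v), t) ∈ G) : (snapshot G t).Reachable u v := by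
  by_cases huv : u = v
  · exact huv ▸ .refl u
  · exact ((SimpleGraph.fromEdgeSet_adj _).2 ⟨h, huv⟩).reachable

theorem mem_of_snapshot_adj (h : (snapshot G t).Adj u v) : (s(u, v), t) ∈ G :=
  ((SimpleGraph.fromEdgeSet_adj _).1 h).1

theorem NSJourney.anti (hst : s ≤ t) (h : NSJourney G t u v) : NSJourney G s u v := by
  cases h with
  | single hle he => exact .single (hst.trans hle) he
  | cons hle he htail => exact .cons (hst.trans hle) he htail

theorem NSJourney.exists_mem (h : NSJourney G t u v) : ∃ et ∈ G, t ≤ et.2 := by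
  cases h with
  | single hle he => exact ⟨_, he, hle⟩
  | cons hle he _ => exact ⟨_, he, hle⟩

theorem nsJourney_eq_of_forall_mem (hst : s ≤ t) (hgap : ∀ et ∈ G, s ≤ et.2 → t ≤ et.2) :
    NSJourney G s = NSJourney G t := by
  ext u v
  refine ⟨fun h => ?_, .anti hst⟩
  cases h with
  | single hle he => exact .single (hgap _ he hle) he
  | cons hle he htail => exact .cons (hgap _ he hle) he htail

theorem reflGen_nsJourney_of_mem (he : (s(u, z), t) ∈ G)
    (h : Relation.ReflGen (NSJourney G t) z v) : Relation.ReflGen (NSJourney G t) u v := by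
  cases h with
  | refl => exact .single (.single le_rfl he)
  | single htail => exact .single (.cons le_rfl he htail)

theorem reflGen_nsJourney_of_reachable (huz : (snapshot G t).Reachable u z)
    (hzv : Relation.ReflGen (NSJourney G t) z v) : Relation.ReflGen (NSJourney G t) u v := by
  obtain ⟨p⟩ := huz
  induction p with
  | nil => exact hzv
  | cons hadj _ ih => exact reflGen_nsJourney_of_mem (mem_of_snapshot_adj hadj) (ih hzv)

theorem NSJourney.exists_reachable (h : NSJourney G t u v) :
    ∃ z, (snapshot G t).Reachable u z ∧ Relation.ReflGen (NSJourney G (t + 1)) z v := by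
  induction h with
  | single hle he =>
    obtain rfl | hlt := hle.eq_or_lt
    · exact ⟨_, reachable_snapshot_of_mem he, .refl⟩
    · exact ⟨_, .refl _, .single (.single hlt he)⟩
  | cons hle he htail ih =>
    obtain rfl | hlt := hle.eq_or_lt
    · obtain ⟨z, hreach, hrest⟩ := ih
      exact ⟨z, (reachable_snapshot_of_mem he).trans hreach, hrest⟩
    · exact ⟨_, .refl _, .single (.cons hlt he htail)⟩

theorem reflGen_nsJourney_iff_exists_reachable :
    Relation.ReflGen (NSJourney G t) u v ↔
      ∃ z, (snapshot G t).Reachable u z ∧ Relation.ReflGen (NSJourney G (t + 1)) z v := by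
  constructor
  · rintro (_ | h)
    · exact ⟨u, .refl u, .refl⟩
    · exact h.exists_reachable
  · rintro ⟨z, huz, hzv⟩
    exact reflGen_nsJourney_of_reachable huz (hzv.mono fun _ _ => .anti t.le_succ)

theorem reflGen_nsJourney_iff_reachable_of_forall_le (hlast : ∀ et ∈ G, et.2 ≤ t) :
    Relation.ReflGen (NSJourney G t) u v ↔ (snapshot G t).Reachable u v := by
  have no_journey (z : V) : ¬ NSJourney G (t + 1) z v := fun h => by
    obtain ⟨et, het, hlt⟩ := h.exists_mem
    exact (hlast et het).not_gt hlt
  simp [reflGen_nsJourney_iff_exists_reachable (t := t), Relation.reflGen_iff, no_journey]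

theorem temporallyConnected_iff_reflGen :
    TemporallyConnected G ↔ ∀ u v, Relation.ReflGen (NSJourney G 0) u v := by
  refine forall₂_congr fun u v => ?_
  rw [Relation.reflGen_iff, or_iff_not_imp_left, eq_comm]

end Journeys

theorem temporallyConnected_iff_components_intersect_general {V : Type*}
    (G : Finset (Sym2 V × ℕ)) {a b : ℕ} (hab : a < b) (hlabel : ∀ et ∈ G, et.2 = a ∨ et.2 = b) :
    TemporallyConnected G ↔
      ∀ u v : V, ∃ z : V, (snapshot G a).Reachable u z ∧ (snapshot G b).Reachable v z := by
  have from_zero : NSJourney G 0 = NSJourney G a :=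
    nsJourney_eq_of_forall_mem a.zero_le fun et het _ => by grind
  have after_a : NSJourney G (a + 1) = NSJourney G b :=
    nsJourney_eq_of_forall_mem hab fun et het _ => by grind
  have hlast : ∀ et ∈ G, et.2 ≤ b := fun et het => by grind
  rw [temporallyConnected_iff_reflGen, from_zero]
  refine forall₂_congr fun u v => ?_
  rw [reflGen_nsJourney_iff_exists_reachable, after_a]
  simp only [reflGen_nsJourney_iff_reachable_of_forall_le hlast,
    SimpleGraph.reachable_comm (v := v)]

theorem temporallyConnected_iff_components_intersect {V : Type*} [Fintype V] [Nonempty V]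
    (G : Finset (Sym2 V × ℕ))
    (hvalid : ∀ et ∈ G, ¬ et.1.IsDiag ∧ (et.2 = 1 ∨ et.2 = 2))
    (hmax : ∃ et ∈ G, et.2 = 2) :
    TemporallyConnected G ↔
      ∀ u v : V, ∃ z : V, (snapshot G 1).Reachable u z ∧ (snapshot G 2).Reachable v z :=
  temporallyConnected_iff_components_intersect_general G one_lt_two fun et het => (hvalid et het).2

end Stmt4
end

section
/- Let B be a k_1 × k_2 binary matrix in which every row contains at least one 1 and every column contains at least one 1. Then there exists a simple temporal graph 𝒢 of lifespan 2 whose component-intersection matrix is B; concretely, the temporal graph with one vertex v_{i,j} for each pair (i,j) with B[i,j] = 1, with all temporal edges ({v_{i,j}, v_{i,j'}}, 1) for j ≠ j' and all temporal edges ({v_{i,j}, v_{i',j}}, 2) for i ≠ i', has snapshot components at time 1 in bijection with the rows of B, snapshot components at time 2 in bijection with the columns of B, and the component of row i intersects the component of column j if and only if B[i,j] = 1. -/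
/-!
STATEMENT 5: For every binary matrix `B` with a 1 in every row and every column, the
temporal graph with one vertex `v_{i,j}` per entry `B i j = 1`, with all edges
`{v_{i,j}, v_{i,j'}}` at time 1 (same row) and all edges `{v_{i,j}, v_{i',j}}` at time 2
(same column), is simple, has all labels in {1,2}, its snapshot components at time 1
are exactly the rows (two vertices are in the same component iff they have the same row
index, and every row index is realized), its snapshot components at time 2 are exactly
the columns, and the component of row `i` intersects the component of column `j` iff
`B i j = 1`.
-/

namespace Stmt5

/-- The snapshot of a temporal graph at time `t`; its connected components are the
snapshot components at time `t`. -/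
def snapshot {V : Type*} (G : Finset (Sym2 V × ℕ)) (t : ℕ) : SimpleGraph V :=
  SimpleGraph.fromEdgeSet {e | (e, t) ∈ G}

/-!
Label each vertex `v_{i,j}` by its row `i` and by its column `j`. Since the two labels determine the
vertex, the time-1 edges join any two distinct vertices of the same row: the snapshot is a disjoint
union of cliques, one per row. Exchanging the labels gives the columns at time 2. A row clique and
a column clique can only share `v_{i,j}`, which is a vertex exactly when `B i j = 1`.
-/

open Function

/-- The snapshot at time `t` of a possibly infinite set of temporal edges; on the coercion of a
finite set it unfolds to `snapshot`. -/
def setSnapshot {V : Type*} (E : Set (Sym2 V × ℕ)) (t : ℕ) : SimpleGraph V :=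
  SimpleGraph.fromEdgeSet {e | (e, t) ∈ E}

theorem apply_eq_of_reachable {V α : Type*} {G : SimpleGraph V} {f : V → α}
    (hf : ∀ ⦃v w⦄, G.Adj v w → f v = f w) {v w : V} (h : G.Reachable v w) : f v = f w := by
  obtain ⟨p⟩ := h
  induction p with
  | nil => rfl
  | cons hadj _ ih => exact (hf hadj).trans ih

section Labelings

variable {V α β : Type*}

/-- The graph joining two vertices that agree under `f` and differ under `g`: the edges of a
snapshot whose components are to be the fibers of `f`. -/
def fiberGraph (f : V → α) (g : V → β) : SimpleGraph V where
  Adj v w := f v = f w ∧ g v ≠ g w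
  symm := ⟨fun _ _ h => ⟨h.1.symm, h.2.symm⟩⟩
  loopless := ⟨fun _ h => h.2 rfl⟩

theorem mem_edgeSet_fiberGraph {f : V → α} {g : V → β} {e : Sym2 V} :
    e ∈ (fiberGraph f g).edgeSet ↔ ∃ v w, f v = f w ∧ g v ≠ g w ∧ e = s(v, w) := by
  constructor
  · induction e using Sym2.ind with
    | _ v w => exact fun h => ⟨v, w, h.1, h.2, rfl⟩
  · rintro ⟨v, w, hf, hg, rfl⟩
    exact ⟨hf, hg⟩

theorem disjoint_edgeSet_fiberGraph (f : V → α) (g : V → β) :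
    Disjoint (fiberGraph f g).edgeSet (fiberGraph g f).edgeSet := by
  rw [Set.disjoint_left]
  refine Sym2.ind fun v w hfg hgf => ?_
  exact hfg.2 hgf.1

theorem fiberGraph_reachable_iff {f : V → α} {g : V → β} (hfg : Injective fun v => (f v, g v))
    {v w : V} : (fiberGraph f g).Reachable v w ↔ f v = f w := by
  refine ⟨apply_eq_of_reachable fun _ _ => And.left, fun hf => ?_⟩
  by_cases hg : g v = g w
  · rw [hfg (Prod.ext hf hg)]
  · exact SimpleGraph.Adj.reachable ⟨hf, hg⟩

/-- The temporal graph of lifespan 2 attached to a row labeling `r` and a column labeling `c` of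
the vertices, with edges inside the rows at time 1 and inside the columns at time 2. -/
def rowColumnTemporalGraph (r : V → α) (c : V → β) : Set (Sym2 V × ℕ) :=
  (fiberGraph r c).edgeSet ×ˢ {1} ∪ (fiberGraph c r).edgeSet ×ˢ {2}

variable {r : V → α} {c : V → β}

theorem mem_rowColumnTemporalGraph {et : Sym2 V × ℕ} :
    et ∈ rowColumnTemporalGraph r c ↔
      (∃ v w, r v = r w ∧ c v ≠ c w ∧ et = (s(v, w), 1)) ∨
      (∃ v w, c v = c w ∧ r v ≠ r w ∧ et = (s(v, w), 2)) := by
  simp only [rowColumnTemporalGraph, Set.mem_union, Set.mem_prod, Set.mem_singleton_iff,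
    mem_edgeSet_fiberGraph, Prod.ext_iff, ← exists_and_right, and_assoc]

theorem label_eq_one_or_two_of_mem {et : Sym2 V × ℕ} (h : et ∈ rowColumnTemporalGraph r c) :
    et.2 = 1 ∨ et.2 = 2 :=
  h.imp And.right And.right

theorem label_eq_of_mem {e : Sym2 V} {t t' : ℕ} (h : (e, t) ∈ rowColumnTemporalGraph r c)
    (h' : (e, t') ∈ rowColumnTemporalGraph r c) : t = t' := by
  have hdisj := Set.disjoint_left.mp (disjoint_edgeSet_fiberGraph r c)
  rcases h with ⟨he, rfl⟩ | ⟨he, rfl⟩ <;> rcases h' with ⟨he', rfl⟩ | ⟨he', rfl⟩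
  · rfl
  · exact absurd he' (hdisj he)
  · exact absurd he (hdisj he')
  · rfl

theorem setSnapshot_rowColumnTemporalGraph_one :
    setSnapshot (rowColumnTemporalGraph r c) 1 = fiberGraph r c := by
  simp [setSnapshot, rowColumnTemporalGraph]

theorem setSnapshot_rowColumnTemporalGraph_two :
    setSnapshot (rowColumnTemporalGraph r c) 2 = fiberGraph c r := by
  simp [setSnapshot, rowColumnTemporalGraph]

theorem setSnapshot_one_reachable_iff (hrc : Injective fun v => (r v, c v)) {v w : V} :
    (setSnapshot (rowColumnTemporalGraph r c) 1).Reachable v w ↔ r v = r w := by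
  rw [setSnapshot_rowColumnTemporalGraph_one, fiberGraph_reachable_iff hrc]

theorem setSnapshot_two_reachable_iff (hrc : Injective fun v => (r v, c v)) {v w : V} :
    (setSnapshot (rowColumnTemporalGraph r c) 2).Reachable v w ↔ c v = c w := by
  rw [setSnapshot_rowColumnTemporalGraph_two,
    fiberGraph_reachable_iff (Prod.swap_injective.comp hrc)]

theorem exists_reachable_one_and_two_iff (hrc : Injective fun v => (r v, c v)) {v w : V} :
    (∃ z, (setSnapshot (rowColumnTemporalGraph r c) 1).Reachable v z ∧
      (setSnapshot (rowColumnTemporalGraph r c) 2).Reachable w z) ↔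
    (r v, c w) ∈ Set.range fun z => (r z, c z) := by
  simp only [setSnapshot_one_reachable_iff hrc, setSnapshot_two_reachable_iff hrc, Set.mem_range,
    Prod.mk.injEq, eq_comm]

end Labelings

theorem matrix_realizable_as_component_intersection_general {ι κ : Type*}
    (B : ι → κ → Prop)
    (hrow : ∀ i : ι, ∃ j : κ, B i j)
    (hcol : ∀ j : κ, ∃ i : ι, B i j)
    (𝒢 : Set (Sym2 {p : ι × κ // B p.1 p.2} × ℕ))
    (h𝒢 : ∀ et : Sym2 {p : ι × κ // B p.1 p.2} × ℕ, et ∈ 𝒢 ↔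
      (∃ v w : {p : ι × κ // B p.1 p.2},
        v.1.1 = w.1.1 ∧ v.1.2 ≠ w.1.2 ∧ et = (s(v, w), 1)) ∨
      (∃ v w : {p : ι × κ // B p.1 p.2},
        v.1.2 = w.1.2 ∧ v.1.1 ≠ w.1.1 ∧ et = (s(v, w), 2))) :
    (∀ (e : Sym2 {p : ι × κ // B p.1 p.2}) (t t' : ℕ),
      (e, t) ∈ 𝒢 → (e, t') ∈ 𝒢 → t = t') ∧
    (∀ et ∈ 𝒢, et.2 = 1 ∨ et.2 = 2) ∧
    (∀ v w : {p : ι × κ // B p.1 p.2},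
      (setSnapshot 𝒢 1).Reachable v w ↔ v.1.1 = w.1.1) ∧
    (∀ i : ι, ∃ v : {p : ι × κ // B p.1 p.2}, v.1.1 = i) ∧
    (∀ v w : {p : ι × κ // B p.1 p.2},
      (setSnapshot 𝒢 2).Reachable v w ↔ v.1.2 = w.1.2) ∧
    (∀ j : κ, ∃ v : {p : ι × κ // B p.1 p.2}, v.1.2 = j) ∧
    (∀ (i : ι) (j : κ) (v w : {p : ι × κ // B p.1 p.2}),
      v.1.1 = i → w.1.2 = j →
        ((∃ z : {p : ι × κ // B p.1 p.2},
          (setSnapshot 𝒢 1).Reachable v z ∧ (setSnapshot 𝒢 2).Reachable w z) ↔ B i j)) := by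
  obtain rfl : 𝒢 = rowColumnTemporalGraph (fun v => v.1.1) (fun v => v.1.2) :=
    Set.ext fun et => (h𝒢 et).trans mem_rowColumnTemporalGraph.symm
  have hinj : Injective fun v : {p : ι × κ // B p.1 p.2} => (v.1.1, v.1.2) :=
    Subtype.val_injective
  refine ⟨fun _ _ _ => label_eq_of_mem, fun _ => label_eq_one_or_two_of_mem,
    fun _ _ => setSnapshot_one_reachable_iff hinj, fun i => ?_,
    fun _ _ => setSnapshot_two_reachable_iff hinj, fun j => ?_, ?_⟩
  · obtain ⟨j, hij⟩ := hrow i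
    exact ⟨⟨(i, j), hij⟩, rfl⟩
  · obtain ⟨i, hij⟩ := hcol j
    exact ⟨⟨(i, j), hij⟩, rfl⟩
  · rintro _ _ v w rfl rfl
    rw [exists_reachable_one_and_two_iff hinj]
    exact Set.ext_iff.mp Subtype.range_val (v.1.1, w.1.2)

theorem matrix_realizable_as_component_intersection {k₁ k₂ : ℕ}
    (B : Fin k₁ → Fin k₂ → Bool)
    (hrow : ∀ i : Fin k₁, ∃ j : Fin k₂, B i j = true)
    (hcol : ∀ j : Fin k₂, ∃ i : Fin k₁, B i j = true)
    (𝒢 : Finset (Sym2 {p : Fin k₁ × Fin k₂ // B p.1 p.2 = true} × ℕ))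
    (h𝒢 : ∀ et : Sym2 {p : Fin k₁ × Fin k₂ // B p.1 p.2 = true} × ℕ, et ∈ 𝒢 ↔
      (∃ v w : {p : Fin k₁ × Fin k₂ // B p.1 p.2 = true},
        v.1.1 = w.1.1 ∧ v.1.2 ≠ w.1.2 ∧ et = (s(v, w), 1)) ∨
      (∃ v w : {p : Fin k₁ × Fin k₂ // B p.1 p.2 = true},
        v.1.2 = w.1.2 ∧ v.1.1 ≠ w.1.1 ∧ et = (s(v, w), 2))) :
    -- 𝒢 is simple
    (∀ (e : Sym2 {p : Fin k₁ × Fin k₂ // B p.1 p.2 = true}) (t t' : ℕ),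
      (e, t) ∈ 𝒢 → (e, t') ∈ 𝒢 → t = t') ∧
    -- all time labels are 1 or 2 (lifespan at most 2)
    (∀ et ∈ 𝒢, et.2 = 1 ∨ et.2 = 2) ∧
    -- snapshot components at time 1 are in bijection with the rows of B
    (∀ v w : {p : Fin k₁ × Fin k₂ // B p.1 p.2 = true},
      (snapshot 𝒢 1).Reachable v w ↔ v.1.1 = w.1.1) ∧
    (∀ i : Fin k₁, ∃ v : {p : Fin k₁ × Fin k₂ // B p.1 p.2 = true}, v.1.1 = i) ∧
    -- snapshot components at time 2 are in bijection with the columns of B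
    (∀ v w : {p : Fin k₁ × Fin k₂ // B p.1 p.2 = true},
      (snapshot 𝒢 2).Reachable v w ↔ v.1.2 = w.1.2) ∧
    (∀ j : Fin k₂, ∃ v : {p : Fin k₁ × Fin k₂ // B p.1 p.2 = true}, v.1.2 = j) ∧
    -- the component of row i intersects the component of column j iff B i j = 1
    (∀ (i : Fin k₁) (j : Fin k₂) (v w : {p : Fin k₁ × Fin k₂ // B p.1 p.2 = true}),
      v.1.1 = i → w.1.2 = j →
        ((∃ z : {p : Fin k₁ × Fin k₂ // B p.1 p.2 = true},
          (snapshot 𝒢 1).Reachable v z ∧ (snapshot 𝒢 2).Reachable w z) ↔ B i j = true)) :=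
  matrix_realizable_as_component_intersection_general (fun i j => B i j = true) hrow hcol 𝒢 h𝒢

end Stmt5
end

section
/- Let 𝒢 be a temporal graph of lifespan 2 on a nonempty finite vertex set V and let B be its component-intersection matrix. Then for every positive integer K, there exists a set F' of at most K temporal edges (each with endpoints in V and time label 1 or 2) such that 𝒢 ↑ F' is temporally connected (with non-strict journeys) if and only if B can be transformed into the all-ones matrix by at most K OR-combinations of rows or columns. -/
/-!
STATEMENT 6: For a temporal graph `𝒢` of lifespan 2 on a nonempty finite vertex set and
every positive integer `K`: `𝒢` can be augmented by at most `K` temporal edges (with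
time labels 1 or 2) to become temporally connected iff its component-intersection
matrix can be transformed into the all-ones matrix by at most `K` OR-combinations of
rows or columns.  Rows are indexed by the snapshot components at time 1, columns by the
snapshot components at time 2, and `B[r,c] = 1` iff components `r` and `c` share a
vertex.  A sequence of OR-combinations is encoded by the induced grouping maps
`f` (on rows) and `g` (on columns): the groups are the fibres of `f` (resp. `g`) over
their ranges, the number of OR-combinations performed is
`(#rows − #row-groups) + (#cols − #col-groups)`, and the resulting matrix is all-ones
iff every row-group/column-group pair contains an intersecting pair of components.
-/

namespace Stmt6

/-- Non-strict journeys using temporal edges of `G`, all at times `≥ t₀`,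
with nondecreasing time labels (at least one temporal edge is used). -/
inductive NSJourney {V : Type*} (G : Finset (Sym2 V × ℕ)) : ℕ → V → V → Prop
  | single {t₀ t : ℕ} {u v : V} (hle : t₀ ≤ t) (h : (s(u, v), t) ∈ G) : NSJourney G t₀ u v
  | cons {t₀ t : ℕ} {u v w : V} (hle : t₀ ≤ t) (h : (s(u, v), t) ∈ G)
      (htail : NSJourney G t v w) : NSJourney G t₀ u w

def TemporallyConnected {V : Type*} (G : Finset (Sym2 V × ℕ)) : Prop :=
  ∀ u v : V, u ≠ v → NSJourney G 0 u v

/-- The snapshot of a temporal graph at time `t`; its connected components are the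
snapshot components at time `t`. -/
def snapshot {V : Type*} (G : Finset (Sym2 V × ℕ)) (t : ℕ) : SimpleGraph V :=
  SimpleGraph.fromEdgeSet {e | (e, t) ∈ G}

/-!
Since every label is 1 or 2, a journey from `u` to `v` is a path in the first snapshot to some
vertex `w` followed by a path in the second snapshot, so temporal connectivity is a statement about
the components of two static graphs. Adding an edge to a static graph merges at most two of its
components, which costs at most one OR-combination. Conversely, a group of `m` components can be
connected by a star of `m - 1` edges.
-/

section Connectivity

open SimpleGraph

variable {V α β : Type*}

theorem reachable_sup_edge_iff {H : SimpleGraph V} {a b x y : V} :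
    (H ⊔ edge a b).Reachable x y ↔ H.Reachable x y ∨
      H.Reachable x a ∧ H.Reachable b y ∨ H.Reachable x b ∧ H.Reachable a y := by
  constructor
  · rintro ⟨p⟩
    induction p with
    | nil => exact .inl .rfl
    | @cons x z y hxz _ ih =>
      rcases (sup_adj ..).mp hxz with hH | hab
      · exact ih.imp hH.reachable.trans
          (.imp (.imp_left hH.reachable.trans) (.imp_left hH.reachable.trans))
      · rcases (edge_adj ..).mp hab with ⟨⟨rfl, rfl⟩ | ⟨rfl, rfl⟩, -⟩
        · rcases ih with h | ⟨-, h⟩ | ⟨-, h⟩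
          exacts [.inr (.inl ⟨.rfl, h⟩), .inr (.inl ⟨.rfl, h⟩), .inl h]
        · rcases ih with h | ⟨-, h⟩ | ⟨-, h⟩
          exacts [.inr (.inr ⟨.rfl, h⟩), .inl h, .inr (.inr ⟨.rfl, h⟩)]
  · have lift {u v : V} (h : H.Reachable u v) : (H ⊔ edge a b).Reachable u v :=
      h.mono le_sup_left
    have hab : (H ⊔ edge a b).Reachable a b := by
      by_cases hne : a = b
      · exact hne ▸ .rfl
      · exact Adj.reachable (.inr ((edge_adj ..).mpr ⟨.inl ⟨rfl, rfl⟩, hne⟩))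
    rintro (h | ⟨hxa, hby⟩ | ⟨hxb, hay⟩)
    exacts [lift h, (lift hxa).trans (hab.trans (lift hby)),
      (lift hxb).trans (hab.symm.trans (lift hay))]

theorem card_connectedComponent_le_sup_edge_add_one (H : SimpleGraph V) (a b : V) :
    ENat.card H.ConnectedComponent ≤ ENat.card (H ⊔ edge a b).ConnectedComponent + 1 := by
  -- Only the components of `a` and `b` can merge, so all components but that of `a` stay distinct.
  have hinj : Set.InjOn (ConnectedComponent.map (Hom.ofLE (le_sup_left : H ≤ H ⊔ edge a b)))
      {H.connectedComponentMk a}ᶜ := by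
    rintro ⟨x⟩ hx ⟨y⟩ hy hxy
    rcases reachable_sup_edge_iff.mp (ConnectedComponent.exact hxy) with h | ⟨h, -⟩ | ⟨-, h⟩
    exacts [ConnectedComponent.sound h, absurd (ConnectedComponent.sound h) hx,
      absurd (ConnectedComponent.sound h.symm) hy]
  calc ENat.card H.ConnectedComponent
      = ({H.connectedComponentMk a}ᶜ : Set H.ConnectedComponent).encard + 1 := by
        rw [← Set.encard_univ, ← Set.encard_add_encard_compl {H.connectedComponentMk a},
          Set.encard_singleton, add_comm]
    _ ≤ ENat.card (H ⊔ edge a b).ConnectedComponent + 1 := by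
        gcongr
        rw [← Set.encard_univ]
        exact Set.encard_le_encard_of_injOn (Set.mapsTo_univ _ _) hinj

theorem card_connectedComponent_le_sup_fromEdgeSet_add_encard (H : SimpleGraph V)
    (s : Set (Sym2 V)) :
    ENat.card H.ConnectedComponent ≤
      ENat.card (H ⊔ fromEdgeSet s).ConnectedComponent + s.encard := by
  rcases s.finite_or_infinite with hs | hs
  · induction s, hs using Set.Finite.induction_on with
    | empty => simp
    | @insert e s he _ ih =>
      induction e with | _ a b
      have hsup : H ⊔ fromEdgeSet (insert s(a, b) s) = H ⊔ fromEdgeSet s ⊔ edge a b := by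
        rw [sup_assoc, edge, ← fromEdgeSet_union, Set.union_singleton]
      calc ENat.card H.ConnectedComponent
          ≤ ENat.card (H ⊔ fromEdgeSet s).ConnectedComponent + s.encard := ih
        _ ≤ ENat.card (H ⊔ fromEdgeSet s ⊔ edge a b).ConnectedComponent + 1 + s.encard := by
            gcongr
            exact card_connectedComponent_le_sup_edge_add_one _ a b
        _ = _ := by rw [hsup, Set.encard_insert_of_notMem he, add_assoc, add_comm 1]
  · simp [hs.encard_eq]

theorem exists_selfMap_card_range_eq {H H' : SimpleGraph V} (hle : H ≤ H') :
    ∃ f : H.ConnectedComponent → H.ConnectedComponent,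
      Nat.card (Set.range f) = Nat.card H'.ConnectedComponent ∧
      ∀ u v, f (H.connectedComponentMk u) = f (H.connectedComponentMk v) ↔ H'.Reachable u v := by
  have hsurj := ConnectedComponent.surjective_map_ofLE hle
  have hinj := Function.injective_surjInv hsurj
  refine ⟨Function.surjInv hsurj ∘ ConnectedComponent.map (Hom.ofLE hle), ?_, fun u v ↦ ?_⟩
  · rw [hsurj.range_comp, Nat.card_range_of_injective hinj]
  · exact hinj.eq_iff.trans ConnectedComponent.eq

theorem exists_grouping_of_sup [Finite V] (H A : SimpleGraph V) :
    ∃ f : H.ConnectedComponent → H.ConnectedComponent,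
      Nat.card H.ConnectedComponent - Nat.card (Set.range f) ≤ A.edgeSet.ncard ∧
      ∀ u v, (H ⊔ A).Reachable u v →
        f (H.connectedComponentMk u) = f (H.connectedComponentMk v) := by
  obtain ⟨f, hcard, hf⟩ := exists_selfMap_card_range_eq (le_sup_left : H ≤ H ⊔ A)
  refine ⟨f, ?_, fun u v ↦ (hf u v).mpr⟩
  have hle := card_connectedComponent_le_sup_fromEdgeSet_add_encard H A.edgeSet
  rw [fromEdgeSet_edgeSet, ENat.card_eq_coe_natCard, ENat.card_eq_coe_natCard,
    ← A.edgeSet.toFinite.cast_ncard_eq] at hle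
  rw [hcard, tsub_le_iff_left]
  exact_mod_cast hle

/-- A chosen representative of the fibre of `f` through the component `c`. -/
noncomputable def fiberRep {H : SimpleGraph V} (f : H.ConnectedComponent → α)
    (c : H.ConnectedComponent) : H.ConnectedComponent :=
  Set.rangeSplitting f (Set.rangeFactorization f c)

/-- The graph joining, for every fibre of `f`, the components in it into a star centred at the
representative of the fibre. Each component is attached at a chosen vertex; the representatives
only contribute loops, which `fromEdgeSet` discards. -/
noncomputable def fiberStars {H : SimpleGraph V} (f : H.ConnectedComponent → α) :
    SimpleGraph V :=
  fromEdgeSet (Set.range fun c : H.ConnectedComponent ↦ s(Quot.out c, Quot.out (fiberRep f c)))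

theorem fiberRep_rangeSplitting {H : SimpleGraph V} (f : H.ConnectedComponent → α)
    (r : Set.range f) : fiberRep f (Set.rangeSplitting f r) = Set.rangeSplitting f r :=
  congrArg _ (Subtype.ext (Set.apply_rangeSplitting f r))

theorem ncard_edgeSet_fiberStars_le {H : SimpleGraph V} [Finite H.ConnectedComponent]
    (f : H.ConnectedComponent → α) :
    (fiberStars f).edgeSet.ncard ≤
      Nat.card H.ConnectedComponent - Nat.card (Set.range f) := by
  have hsub : (fiberStars f).edgeSet ⊆
      (fun c : H.ConnectedComponent ↦ s(Quot.out c, Quot.out (fiberRep f c))) ''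
        (Set.range (Set.rangeSplitting f))ᶜ := by
    rw [fiberStars, edgeSet_fromEdgeSet]
    rintro _ ⟨⟨c, rfl⟩, hdiag⟩
    refine ⟨c, ?_, rfl⟩
    rintro ⟨r, rfl⟩
    exact hdiag (congrArg Quot.out (fiberRep_rangeSplitting f r).symm)
  calc (fiberStars f).edgeSet.ncard
      ≤ (Set.range (Set.rangeSplitting f))ᶜ.ncard :=
        (Set.ncard_le_ncard hsub).trans Set.ncard_image_le
    _ = Nat.card H.ConnectedComponent - Nat.card (Set.range f) := by
        rw [Set.ncard_compl, ← Nat.card_coe_set_eq,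
          Nat.card_range_of_injective (Set.rangeSplitting_injective f)]

theorem reachable_sup_fiberStars {H : SimpleGraph V} (f : H.ConnectedComponent → α) {u v : V}
    (huv : f (H.connectedComponentMk u) = f (H.connectedComponentMk v)) :
    (H ⊔ fiberStars f).Reachable u v := by
  have reachable_center (x : V) :
      (H ⊔ fiberStars f).Reachable x (Quot.out (fiberRep f (H.connectedComponentMk x))) := by
    have hout : H.Reachable x (Quot.out (H.connectedComponentMk x)) :=
      (ConnectedComponent.exact (Quot.out_eq (H.connectedComponentMk x))).symm
    refine (hout.mono le_sup_left).trans ?_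
    by_cases heq : Quot.out (H.connectedComponentMk x) =
        Quot.out (fiberRep f (H.connectedComponentMk x))
    · rw [← heq]
    · exact Adj.reachable (.inr ((fromEdgeSet_adj _).mpr ⟨⟨_, rfl⟩, heq⟩))
  have hrep : fiberRep f (H.connectedComponentMk u) = fiberRep f (H.connectedComponentMk v) :=
    congrArg (Set.rangeSplitting f) (Subtype.ext huv)
  exact (reachable_center u).trans (hrep ▸ (reachable_center v).symm)

theorem forall_mem_range_exists_common_vertex_iff {H₁ H₂ : SimpleGraph V}
    {f : H₁.ConnectedComponent → α} {g : H₂.ConnectedComponent → β} :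
    (∀ r ∈ Set.range f, ∀ c ∈ Set.range g, ∃ r' c' w, f r' = r ∧ g c' = c ∧
        H₁.connectedComponentMk w = r' ∧ H₂.connectedComponentMk w = c') ↔
      ∀ u v, ∃ w, f (H₁.connectedComponentMk u) = f (H₁.connectedComponentMk w) ∧
        g (H₂.connectedComponentMk w) = g (H₂.connectedComponentMk v) := by
  constructor
  · intro h u v
    obtain ⟨_, _, w, hf, hg, rfl, rfl⟩ := h _ ⟨H₁.connectedComponentMk u, rfl⟩
      _ ⟨H₂.connectedComponentMk v, rfl⟩
    exact ⟨w, hf.symm, hg⟩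
  · rintro h _ ⟨⟨u⟩, rfl⟩ _ ⟨⟨v⟩, rfl⟩
    obtain ⟨w, hf, hg⟩ := h u v
    exact ⟨_, _, w, hf.symm, hg, rfl, rfl⟩

theorem exists_sup_reachable_iff_exists_grouping [Finite V] (H₁ H₂ : SimpleGraph V) (K : ℕ) :
    (∃ A₁ A₂ : SimpleGraph V, A₁.edgeSet.ncard + A₂.edgeSet.ncard ≤ K ∧
        ∀ u v, ∃ w, (H₁ ⊔ A₁).Reachable u w ∧ (H₂ ⊔ A₂).Reachable w v) ↔
      ∃ (f : H₁.ConnectedComponent → H₁.ConnectedComponent)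
        (g : H₂.ConnectedComponent → H₂.ConnectedComponent),
        (Nat.card H₁.ConnectedComponent - Nat.card (Set.range f)) +
            (Nat.card H₂.ConnectedComponent - Nat.card (Set.range g)) ≤ K ∧
        ∀ u v, ∃ w, f (H₁.connectedComponentMk u) = f (H₁.connectedComponentMk w) ∧
          g (H₂.connectedComponentMk w) = g (H₂.connectedComponentMk v) := by
  constructor
  · rintro ⟨A₁, A₂, hK, hreach⟩
    obtain ⟨f, hfcard, hf⟩ := exists_grouping_of_sup H₁ A₁
    obtain ⟨g, hgcard, hg⟩ := exists_grouping_of_sup H₂ A₂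
    exact ⟨f, g, (add_le_add hfcard hgcard).trans hK,
      fun u v ↦ (hreach u v).imp fun w ↦ .imp (hf u w) (hg w v)⟩
  · rintro ⟨f, g, hK, hfg⟩
    exact ⟨fiberStars f, fiberStars g,
      (add_le_add (ncard_edgeSet_fiberStars_le f) (ncard_edgeSet_fiberStars_le g)).trans hK,
      fun u v ↦ (hfg u v).imp fun w ↦
        .imp (reachable_sup_fiberStars f) (reachable_sup_fiberStars g)⟩

end Connectivity

section Journeys

variable {V : Type*} {G : Finset (Sym2 V × ℕ)} {s t : ℕ} {u v w : V}

theorem NSJourney.mono (hst : s ≤ t) : NSJourney G t u v → NSJourney G s u v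
  | .single hle h => .single (hst.trans hle) h
  | .cons hle h htail => .cons (hst.trans hle) h htail

/-- The vertex `v` can be reached from `u` using temporal edges at times `≥ t` only; unlike
`NSJourney`, this allows the empty journey. -/
def Reaches (G : Finset (Sym2 V × ℕ)) (t : ℕ) (u v : V) : Prop :=
  u = v ∨ NSJourney G t u v

theorem Reaches.cons (h : (s(u, v), t) ∈ G) : Reaches G t v w → Reaches G t u w
  | .inl rfl => .inr (.single le_rfl h)
  | .inr hvw => .inr (.cons le_rfl h hvw)

theorem temporallyConnected_iff_forall_reaches :
    TemporallyConnected G ↔ ∀ u v, Reaches G 0 u v :=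
  forall₂_congr fun _ _ ↦ or_iff_not_imp_left.symm

theorem reachable_snapshot_of_mem (h : (s(u, v), t) ∈ G) : (snapshot G t).Reachable u v := by
  by_cases huv : u = v
  · exact huv ▸ .rfl
  · exact SimpleGraph.Adj.reachable ((SimpleGraph.fromEdgeSet_adj _).mpr ⟨h, huv⟩)

theorem NSJourney.exists_reachable_snapshot (h : NSJourney G t u v) :
    ∃ w, (snapshot G t).Reachable u w ∧ Reaches G (t + 1) w v := by
  induction h with
  | @single t₀ t u v hle h =>
    rcases hle.eq_or_lt with rfl | hlt
    · exact ⟨v, reachable_snapshot_of_mem h, .inl rfl⟩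
    · exact ⟨u, .rfl, .inr (.single hlt h)⟩
  | @cons t₀ t u x v hle h htail ih =>
    rcases hle.eq_or_lt with rfl | hlt
    · obtain ⟨w, hxw, hwv⟩ := ih
      exact ⟨w, (reachable_snapshot_of_mem h).trans hxw, hwv⟩
    · exact ⟨u, .rfl, .inr (.cons hlt h htail)⟩

theorem reaches_iff_exists_reachable_snapshot :
    Reaches G t u v ↔ ∃ w, (snapshot G t).Reachable u w ∧ Reaches G (t + 1) w v := by
  constructor
  · rintro (rfl | h)
    exacts [⟨u, .rfl, .inl rfl⟩, h.exists_reachable_snapshot]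
  · rintro ⟨w, ⟨p⟩, hwv⟩
    induction p with
    | nil => exact hwv.imp_right (NSJourney.mono t.le_succ)
    | cons hadj _ ih => exact .cons ((SimpleGraph.fromEdgeSet_adj _).mp hadj).1 (ih hwv)

theorem reaches_iff_eq_of_forall_lt (hG : ∀ e ∈ G, e.2 < t) : Reaches G t u v ↔ u = v := by
  refine or_iff_left ?_
  rintro (⟨hle, h⟩ | ⟨hle, h, -⟩) <;> exact (hG _ h).not_ge hle

theorem snapshot_eq_bot_of_forall_ne (hG : ∀ e ∈ G, e.2 ≠ t) : snapshot G t = ⊥ := by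
  have hempty : {e | (e, t) ∈ G} = ∅ :=
    Set.eq_empty_of_forall_notMem fun e he ↦ hG (e, t) he rfl
  rw [snapshot, hempty, SimpleGraph.fromEdgeSet_empty]

theorem temporallyConnected_iff_of_lifespan_two (hG : ∀ e ∈ G, e.2 = 1 ∨ e.2 = 2) :
    TemporallyConnected G ↔
      ∀ u v, ∃ w, (snapshot G 1).Reachable u w ∧ (snapshot G 2).Reachable w v := by
  have reaches_zero (u v : V) : Reaches G 0 u v ↔ Reaches G 1 u v := by
    rw [reaches_iff_exists_reachable_snapshot, snapshot_eq_bot_of_forall_ne (by grind)]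
    simp only [SimpleGraph.reachable_bot, zero_add, exists_eq_left']
  have reaches_two (u v : V) : Reaches G 2 u v ↔ (snapshot G 2).Reachable u v := by
    simp only [reaches_iff_exists_reachable_snapshot (t := 2),
      reaches_iff_eq_of_forall_lt (t := 2 + 1) (G := G) (by grind), exists_eq_right]
  simp only [temporallyConnected_iff_forall_reaches, reaches_zero,
    reaches_iff_exists_reachable_snapshot (t := 1), Nat.reduceAdd, reaches_two]

end Journeys

section Augmentation

variable {V : Type*}

theorem snapshot_union [DecidableEq V] (G F : Finset (Sym2 V × ℕ)) (t : ℕ) :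
    snapshot (G ∪ F) t = snapshot G t ⊔ snapshot F t := by
  simp only [snapshot, ← SimpleGraph.fromEdgeSet_union, Finset.mem_union, Set.ofPred_or]

theorem ncard_edgeSet_snapshot_le (F : Finset (Sym2 V × ℕ)) (t : ℕ) :
    (snapshot F t).edgeSet.ncard ≤ (F.filter (·.2 = t)).card := by
  rw [← Set.ncard_coe_finset]
  refine Set.ncard_le_ncard_of_injOn (·, t) (fun e he ↦ ?_) (Prod.mk_left_injective t).injOn
  rw [snapshot, SimpleGraph.edgeSet_fromEdgeSet] at he
  simpa using he.1

theorem sum_ncard_edgeSet_snapshot_le (F : Finset (Sym2 V × ℕ)) (T : Finset ℕ) :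
    ∑ t ∈ T, (snapshot F t).edgeSet.ncard ≤ F.card :=
  calc ∑ t ∈ T, (snapshot F t).edgeSet.ncard
      ≤ ∑ t ∈ T, (F.filter (·.2 = t)).card :=
        Finset.sum_le_sum fun t _ ↦ ncard_edgeSet_snapshot_le F t
    _ = (F.filter (·.2 ∈ T)).card := Finset.sum_card_fiberwise_eq_card_filter F T Prod.snd
    _ ≤ F.card := Finset.card_filter_le _ _

theorem exists_temporalGraph_snapshot_eq [Finite V] (A₁ A₂ : SimpleGraph V) :
    ∃ F : Finset (Sym2 V × ℕ), F.card ≤ A₁.edgeSet.ncard + A₂.edgeSet.ncard ∧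
      (∀ e ∈ F, ¬ e.1.IsDiag ∧ (e.2 = 1 ∨ e.2 = 2)) ∧
      snapshot F 1 = A₁ ∧ snapshot F 2 = A₂ := by
  classical
  have := Fintype.ofFinite V
  let F : Finset (Sym2 V × ℕ) := A₁.edgeFinset ×ˢ {1} ∪ A₂.edgeFinset ×ˢ {2}
  have mem_F (e : Sym2 V) (t : ℕ) :
      (e, t) ∈ F ↔ e ∈ A₁.edgeSet ∧ t = 1 ∨ e ∈ A₂.edgeSet ∧ t = 2 := by
    simp [F, eq_comm]
  refine ⟨F, ?_, ?_, ?_, ?_⟩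
  · refine (Finset.card_union_le _ _).trans_eq ?_
    simp only [Finset.card_product, Finset.card_singleton, mul_one, ← SimpleGraph.coe_edgeFinset,
      Set.ncard_coe_finset]
  · rintro ⟨e, t⟩ he
    rcases (mem_F e t).mp he with ⟨hA, ht⟩ | ⟨hA, ht⟩
    exacts [⟨A₁.not_isDiag_of_mem_edgeSet hA, .inl ht⟩, ⟨A₂.not_isDiag_of_mem_edgeSet hA, .inr ht⟩]
  · simp [snapshot, mem_F]
  · simp [snapshot, mem_F]

theorem exists_augmentation_iff_exists_sup_reachable [Finite V] [DecidableEq V]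
    {G : Finset (Sym2 V × ℕ)} (hG : ∀ e ∈ G, e.2 = 1 ∨ e.2 = 2) (K : ℕ) :
    (∃ F : Finset (Sym2 V × ℕ), F.card ≤ K ∧
        (∀ e ∈ F, ¬ e.1.IsDiag ∧ (e.2 = 1 ∨ e.2 = 2)) ∧ TemporallyConnected (G ∪ F)) ↔
      ∃ A₁ A₂ : SimpleGraph V, A₁.edgeSet.ncard + A₂.edgeSet.ncard ≤ K ∧
        ∀ u v, ∃ w, (snapshot G 1 ⊔ A₁).Reachable u w ∧ (snapshot G 2 ⊔ A₂).Reachable w v := by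
  have connected_iff {F : Finset (Sym2 V × ℕ)}
      (hF : ∀ e ∈ F, ¬ e.1.IsDiag ∧ (e.2 = 1 ∨ e.2 = 2)) :
      TemporallyConnected (G ∪ F) ↔ ∀ u v, ∃ w,
        (snapshot G 1 ⊔ snapshot F 1).Reachable u w ∧
        (snapshot G 2 ⊔ snapshot F 2).Reachable w v := by
    rw [temporallyConnected_iff_of_lifespan_two, snapshot_union, snapshot_union]
    exact fun e he ↦ (Finset.mem_union.mp he).elim (hG e) fun h ↦ (hF e h).2
  constructor
  · rintro ⟨F, hK, hF, hconn⟩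
    have hsum := sum_ncard_edgeSet_snapshot_le F {1, 2}
    rw [Finset.sum_pair (by decide)] at hsum
    exact ⟨_, _, hsum.trans hK, (connected_iff hF).mp hconn⟩
  · rintro ⟨A₁, A₂, hK, hreach⟩
    obtain ⟨F, hcard, hF, rfl, rfl⟩ := exists_temporalGraph_snapshot_eq A₁ A₂
    exact ⟨F, hcard.trans hK, hF, (connected_iff hF).mpr hreach⟩

end Augmentation

theorem tca_iff_octo {V : Type*} [Fintype V] [DecidableEq V] [Nonempty V]
    (𝒢 : Finset (Sym2 V × ℕ))
    (hvalid : ∀ et ∈ 𝒢, ¬ et.1.IsDiag ∧ (et.2 = 1 ∨ et.2 = 2))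
    (hmax : ∃ et ∈ 𝒢, et.2 = 2)
    (K : ℕ) (hK : 1 ≤ K) :
    (∃ F' : Finset (Sym2 V × ℕ), F'.card ≤ K ∧
        (∀ et ∈ F', ¬ et.1.IsDiag ∧ (et.2 = 1 ∨ et.2 = 2)) ∧
        TemporallyConnected (𝒢 ∪ F')) ↔
      (∃ (f : (snapshot 𝒢 1).ConnectedComponent → (snapshot 𝒢 1).ConnectedComponent)
         (g : (snapshot 𝒢 2).ConnectedComponent → (snapshot 𝒢 2).ConnectedComponent),
        (Nat.card (snapshot 𝒢 1).ConnectedComponent - Nat.card (Set.range f)) +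
            (Nat.card (snapshot 𝒢 2).ConnectedComponent - Nat.card (Set.range g)) ≤ K ∧
        ∀ r ∈ Set.range f, ∀ c ∈ Set.range g,
          ∃ (r' : (snapshot 𝒢 1).ConnectedComponent)
            (c' : (snapshot 𝒢 2).ConnectedComponent) (v : V),
            f r' = r ∧ g c' = c ∧
            (snapshot 𝒢 1).connectedComponentMk v = r' ∧
            (snapshot 𝒢 2).connectedComponentMk v = c') := by
  have hlabel : ∀ e ∈ 𝒢, e.2 = 1 ∨ e.2 = 2 := fun e he ↦ (hvalid e he).2
  simp only [exists_augmentation_iff_exists_sup_reachable hlabel,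
    exists_sup_reachable_iff_exists_grouping, forall_mem_range_exists_common_vertex_iff]

end Stmt6
end

section
/- Let T = {e_1, …, e_n} be a nonempty finite set, C = {T_1, …, T_m} a collection of subsets of T, and K a positive integer. Define B as the binary matrix with n(m+1) rows and m columns where B[i,j] = 1 if and only if e_{((i−1) mod n)+1} ∈ T_j. Then C can be partitioned into at least K pairwise disjoint parts each of which is a set cover of T if and only if B can be transformed into the all-ones matrix by at most m − K OR-combinations of rows or columns. -/
/-!
STATEMENT 7: Disjoint Set Covers reduces to OCTO.  With `T = Fin n` (nonempty),
`C = {T_1, …, T_m}` given by `Tsets : Fin m → Finset (Fin n)`, and `B` the binary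
matrix with `n * (m + 1)` rows and `m` columns where `B i j = 1` iff the element
`i mod n` belongs to `T_j`:  `C` can be partitioned into at least `K` parts, each of
which is a set cover of `T`, iff `B` can be transformed into the all-ones matrix by at
most `m − K` OR-combinations of rows or columns.  A sequence of OR-combinations is
encoded by grouping maps `f` (rows) and `g` (columns) as fibres over their ranges; the
number of combinations is `(#rows − #row-groups) + (#cols − #col-groups)` and the
result is all-ones iff every row-group/column-group pair contains a 1-entry.
-/

namespace Stmt7

/-!
Merging the columns inside each part of a partition into set covers turns every entry into a one,
and `k` parts cost `m - k` combinations. Conversely, every element `e` labels too many rows for the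
row combinations to spoil: if each row group met the complement of the `m + 1` rows labelled `e`,
there would be at most `n (m + 1) - (m + 1)` groups, which takes more than `m - K` combinations.
Hence some row group consists of copies of `e` only, and its ones show that every column group
covers `e`.
-/

variable {ρ γ τ α β : Type*}

/-- A partition of the indexed collection `S` into disjoint set covers of `τ`. The part with index
`c` is the fibre of `P` over `c`, so the number of parts is the size of `α`. -/
def IsDisjointSetCovers (S : γ → Set τ) (P : γ → α) : Prop :=
  ∀ c e, ∃ j, P j = c ∧ e ∈ S j

/-- The number of OR-combinations that merge each nonempty fibre of `f` into a single row (or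
column). The subtraction does not truncate when the domain is finite. -/
noncomputable def orCombinationCount (f : ρ → α) : ℕ :=
  Nat.card ρ - Nat.card (Set.range f)

/-- Merging the rows of `B` along `f` and its columns along `g` yields the all-ones matrix. The rows
and columns of the merged matrix are indexed by the ranges of `f` and `g`. -/
def CombinesToOnes (B : ρ → γ → Bool) (f : ρ → α) (g : γ → β) : Prop :=
  ∀ r ∈ Set.range f, ∀ c ∈ Set.range g, ∃ r' c', f r' = r ∧ g c' = c ∧ B r' c' = true

section Partition

variable {S : γ → Set τ} {P : γ → α}

theorem IsDisjointSetCovers.surjective [Nonempty τ] (hP : IsDisjointSetCovers S P) :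
    Function.Surjective P := fun c =>
  let ⟨j, hj, _⟩ := hP c (Classical.arbitrary τ)
  ⟨j, hj⟩

theorem IsDisjointSetCovers.equiv_comp (hP : IsDisjointSetCovers S P) (σ : α ≃ β) :
    IsDisjointSetCovers S (σ ∘ P) := fun c e =>
  let ⟨j, hj, he⟩ := hP (σ.symm c) e
  ⟨j, σ.eq_symm_apply.mp hj, he⟩

end Partition

section OrCombination

theorem orCombinationCount_of_injective {f : ρ → α} (hf : Function.Injective f) :
    orCombinationCount f = 0 := by
  rw [orCombinationCount, Nat.card_range_of_injective hf, Nat.sub_self]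

theorem orCombinationCount_of_surjective {f : ρ → α} (hf : Function.Surjective f) :
    orCombinationCount f = Nat.card ρ - Nat.card α := by
  rw [orCombinationCount, hf.range_eq, Nat.card_univ]

theorem orCombinationCount_comp_of_injective {h : α → β} (hh : Function.Injective h) (f : ρ → α) :
    orCombinationCount (h ∘ f) = orCombinationCount f := by
  rw [orCombinationCount, orCombinationCount, Set.range_comp, Nat.card_image_of_injective hh]

theorem exists_fiber_subset_of_orCombinationCount_lt [Finite ρ] {f : ρ → α} {s : Set ρ}
    (h : orCombinationCount f < s.ncard) : ∃ r ∈ Set.range f, f ⁻¹' {r} ⊆ s := by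
  by_contra! hmeet
  have range_subset : Set.range f ⊆ f '' sᶜ := fun r hr =>
    let ⟨i, hi, his⟩ := Set.not_subset.mp (hmeet r hr)
    ⟨i, his, hi⟩
  have card_range_le : Nat.card (Set.range f) ≤ sᶜ.ncard :=
    (Set.ncard_le_ncard range_subset).trans Set.ncard_image_le
  have card_add_compl := Set.ncard_add_ncard_compl s
  rw [orCombinationCount] at h
  omega

variable {B : ρ → γ → Bool} {f : ρ → α} {g : γ → β}

theorem CombinesToOnes.comp_columns {δ : Type*} {h : β → δ} (hfg : CombinesToOnes B f g) :
    CombinesToOnes B f (h ∘ g) := by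
  rintro r hr _ ⟨c, rfl⟩
  obtain ⟨r', c', hr', hc', hB⟩ := hfg r hr (g c) ⟨c, rfl⟩
  exact ⟨r', c', hr', congrArg h hc', hB⟩

end OrCombination

section Reduction

variable {S : γ → Set τ} {element : ρ → τ} {B : ρ → γ → Bool}

theorem IsDisjointSetCovers.combinesToOnes {P : γ → α} (hP : IsDisjointSetCovers S P)
    (hB : ∀ i j, B i j = true ↔ element i ∈ S j) : CombinesToOnes B id P := by
  rintro _ ⟨i, rfl⟩ c -
  obtain ⟨j, hj, hij⟩ := hP c (element i)
  exact ⟨i, j, rfl, hj, (hB i j).mpr hij⟩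

theorem CombinesToOnes.isDisjointSetCovers [Finite ρ] {f : ρ → α} {g : γ → β}
    (hfg : CombinesToOnes B f g) (hB : ∀ i j, B i j = true ↔ element i ∈ S j)
    (hcopies : ∀ e, orCombinationCount f < (element ⁻¹' {e}).ncard) :
    IsDisjointSetCovers S (Set.rangeFactorization g) := by
  intro c e
  obtain ⟨r, hr, hpure⟩ := exists_fiber_subset_of_orCombinationCount_lt (hcopies e)
  obtain ⟨i, j, hi, hj, hij⟩ := hfg r hr c c.2
  have element_eq : element i = e := hpure hi
  exact ⟨j, Subtype.ext hj, element_eq ▸ (hB i j).mp hij⟩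

theorem dsc_iff_octo_general [Finite ρ] [Finite γ] [Nonempty τ] {K : ℕ} (hK : K ≤ Nat.card γ)
    (hcopies : ∀ e, Nat.card γ - K < (element ⁻¹' {e}).ncard)
    (hB : ∀ i j, B i j = true ↔ element i ∈ S j) :
    (∃ k, K ≤ k ∧ ∃ P : γ → Fin k, IsDisjointSetCovers S P) ↔
      ∃ (f : ρ → ρ) (g : γ → γ),
        orCombinationCount f + orCombinationCount g ≤ Nat.card γ - K ∧ CombinesToOnes B f g := by
  constructor
  · rintro ⟨k, hk, P, hP⟩
    let representative := Function.surjInv hP.surjective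
    have representative_injective : Function.Injective representative :=
      Function.injective_surjInv hP.surjective
    refine ⟨id, representative ∘ P, ?_, (hP.combinesToOnes hB).comp_columns⟩
    rw [orCombinationCount_of_injective Function.injective_id,
      orCombinationCount_comp_of_injective representative_injective,
      orCombinationCount_of_surjective hP.surjective, Nat.card_fin, Nat.zero_add]
    exact Nat.sub_le_sub_left hk _
  · rintro ⟨f, g, hcount, hfg⟩
    have hcover : IsDisjointSetCovers S (Set.rangeFactorization g) :=
      hfg.isDisjointSetCovers hB fun e =>
        ((Nat.le_add_right _ _).trans hcount).trans_lt (hcopies e)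
    have le_card_range : K ≤ Nat.card (Set.range g) := by
      simp only [orCombinationCount] at hcount
      omega
    exact ⟨_, le_card_range, _, hcover.equiv_comp (Finite.equivFin _)⟩

end Reduction

theorem ncard_setOf_mod_eq {n : ℕ} (q : ℕ) (e : Fin n) :
    {i : Fin (n * q) | i.1 % n = e.1}.ncard = q := by
  let copy : Fin q → Fin (n * q) := fun t => finCongr (Nat.mul_comm q n) (finProdFinEquiv (t, e))
  have copy_injective : Function.Injective copy := fun s t hst =>
    congrArg Prod.fst (finProdFinEquiv.injective ((finCongr _).injective hst))
  have range_copy : Set.range copy = {i : Fin (n * q) | i.1 % n = e.1} := by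
    ext i
    constructor
    · rintro ⟨t, rfl⟩
      simp [copy, Nat.mod_eq_of_lt e.2]
    · intro hi
      refine ⟨⟨i.1 / n, Nat.div_lt_of_lt_mul i.2⟩, Fin.ext ?_⟩
      simpa [copy, ← show i.1 % n = e.1 from hi] using Nat.mod_add_div i.1 n
  rw [← range_copy, Set.ncard_range_of_injective copy_injective, Nat.card_fin]

theorem dsc_iff_octo {n m K : ℕ} (hn : 1 ≤ n) (hK : 1 ≤ K) (hKm : K ≤ m)
    (Tsets : Fin m → Finset (Fin n))
    (B : Fin (n * (m + 1)) → Fin m → Bool)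
    (hB : ∀ (i : Fin (n * (m + 1))) (j : Fin m),
      B i j = true ↔ ∃ h : i.1 % n < n, (⟨i.1 % n, h⟩ : Fin n) ∈ Tsets j) :
    -- C can be partitioned into at least K parts, each part covering T
    (∃ (k : ℕ), K ≤ k ∧ ∃ P : Fin m → Fin k,
        ∀ (c : Fin k) (e : Fin n), ∃ j : Fin m, P j = c ∧ e ∈ Tsets j) ↔
      -- B can be made all-ones with at most m − K OR-combinations
      (∃ (f : Fin (n * (m + 1)) → Fin (n * (m + 1))) (g : Fin m → Fin m),
        (n * (m + 1) - Nat.card (Set.range f)) + (m - Nat.card (Set.range g)) ≤ m - K ∧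
        ∀ r ∈ Set.range f, ∀ c ∈ Set.range g,
          ∃ (r' : Fin (n * (m + 1))) (c' : Fin m),
            f r' = r ∧ g c' = c ∧ B r' c' = true) := by
  have : Nonempty (Fin n) := ⟨⟨0, hn⟩⟩
  let element (i : Fin (n * (m + 1))) : Fin n := ⟨i.1 % n, Nat.mod_lt _ hn⟩
  have hcopies (e : Fin n) : (element ⁻¹' {e}).ncard = m + 1 := by
    simpa [element, Set.preimage, Fin.ext_iff] using ncard_setOf_mod_eq (m + 1) e
  have hB' (i j) : B i j = true ↔ element i ∈ (Tsets j : Set (Fin n)) :=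
    (hB i j).trans (exists_prop_of_true _)
  have octo := dsc_iff_octo_general (K := K) (by simpa using hKm)
    (fun e => by rw [hcopies, Nat.card_fin]; omega) hB'
  simpa only [IsDisjointSetCovers, orCombinationCount, CombinesToOnes, Nat.card_fin,
    Finset.mem_coe] using octo

end Stmt7
end

section
/- Let S = {e_1, …, e_n} be a finite set, C = {S_1, …, S_m} a collection of nonempty subsets of S with every element of S contained in some set of C, and K ≤ |S| a positive integer. Define the temporal graph 𝒢 whose vertex set consists of: a vertex x; a vertex e_iS_j for every pair (i,j) with e_i ∈ S_j; and a vertex S_j for every j ∈ {1,…,m}; and whose temporal edges are: ({e_iS_j, e_iS_{j'}}, 1) for every i and every j ≠ j' with e_i ∈ S_j and e_i ∈ S_{j'}, and ({e_iS_j, S_j}, 2) for every pair with e_i ∈ S_j. Then there exists a hitting set S' ⊆ S for C with |S'| ≤ K if and only if there exists a set F' of at most K temporal edges (each with endpoints among the vertices of 𝒢 and time label 1 or 2, not already in 𝒢) such that in 𝒢 ↑ F' every vertex is reachable from x by a non-strict journey. -/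
/-!
STATEMENT 8: Hitting Set reduces to (non-strict) Temporal Source Augmentation.  With
ground set `α` (finite), collection `Cs : Fin m → Finset α` of nonempty sets covering
`α`, and `K ≤ |α|` positive: there is a hitting set of size at most `K` iff the
constructed temporal graph (vertices: `x`, the vertices `e_iS_j` for `e_i ∈ S_j`, and
the vertices `S_j`; edges: time-1 cliques on the `e_iS_j` with the same element, and
time-2 edges `{e_iS_j, S_j}`) can be augmented by at most `K` new temporal edges (time
labels 1 or 2) so that every vertex is reachable from `x` by a non-strict journey.
-/

namespace Stmt8

/-- Non-strict journeys using temporal edges of `G`, all at times `≥ t₀`,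
with nondecreasing time labels (at least one temporal edge is used). -/
inductive NSJourney {V : Type*} (G : Finset (Sym2 V × ℕ)) : ℕ → V → V → Prop
  | single {t₀ t : ℕ} {u v : V} (hle : t₀ ≤ t) (h : (s(u, v), t) ∈ G) : NSJourney G t₀ u v
  | cons {t₀ t : ℕ} {u v w : V} (hle : t₀ ≤ t) (h : (s(u, v), t) ∈ G)
      (htail : NSJourney G t v w) : NSJourney G t₀ u w

/-- The vertex set of the constructed temporal graph: `Sum.inl ()` is the vertex `x`;
`Sum.inr (Sum.inl ⟨(a, j), _⟩)` is the vertex `e_aS_j` (for `a ∈ S_j`);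
`Sum.inr (Sum.inr j)` is the vertex `S_j`. -/
abbrev W {α : Type*} (m : ℕ) (Cs : Fin m → Finset α) :=
  Unit ⊕ ({p : α × Fin m // p.1 ∈ Cs p.2} ⊕ Fin m)

/-- The `DecidableEq` instance (found explicitly to help instance resolution). -/
instance {α : Type*} [DecidableEq α] {m : ℕ} (Cs : Fin m → Finset α) :
    DecidableEq (Sym2 (W m Cs) × ℕ) := instDecidableEqProd

/-!
A hitting set becomes an augmentation by joining `x` at time `1` to one occurrence `e_aS_j` of
each of its elements `a`: the time-`1` cliques spread the journey to all occurrences of `a`, and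
the time-`2` edges carry it to every `S_j` containing `a`, and from there to the remaining
occurrences in `S_j`.

Conversely, orienting each edge along an arborescence of earliest arrivals makes every added edge
the parent edge of at most one vertex `v`, and this edge pays for one element: `a` if `v = e_aS_j`,
any element of `S_j` if `v = S_j`. An `e_aS_j` reached by time `1` was reached within the clique
of `a`, so `a` has been paid for. A vertex reached later stems from an added edge or from such an
occurrence without leaving its set `S_j`, since the edges of time `2` do not change `j`.
-/

section Arborescence

variable {V : Type*} {G : Finset (Sym2 V × ℕ)} {x : V}

/-- `Arrival G x p v`: some non-strict journey in `G` from `x` reaches `v`, where `p` consists of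
the time label of its last edge (`0` for the empty journey) and its number of edges. The
lexicographic order on `p` compares arrival times first. -/
inductive Arrival (G : Finset (Sym2 V × ℕ)) (x : V) : ℕ ×ₗ ℕ → V → Prop
  | refl : Arrival G x (toLex (0, 0)) x
  | step {p : ℕ ×ₗ ℕ} {t : ℕ} {u v : V} (hu : Arrival G x p u) (hle : (ofLex p).1 ≤ t)
      (he : (s(u, v), t) ∈ G) : Arrival G x (toLex (t, (ofLex p).2 + 1)) v

theorem Arrival.exists_pred {p : ℕ ×ₗ ℕ} {v : V} (h : Arrival G x p v) (hv : v ≠ x) :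
    ∃ u q, Arrival G x q u ∧ q < p ∧ (s(u, v), (ofLex p).1) ∈ G := by
  cases h with
  | refl => exact absurd rfl hv
  | @step q t u _ hu hle he =>
    refine ⟨u, q, hu, Prod.Lex.lt_iff.2 ?_, he⟩
    exact hle.lt_or_eq.imp_right fun heq => ⟨heq, Nat.lt_succ_self _⟩

theorem NSJourney.exists_arrival {t₀ : ℕ} {u v : V} (h : NSJourney G t₀ u v) {p : ℕ ×ₗ ℕ}
    (hu : Arrival G x p u) (hp : (ofLex p).1 ≤ t₀) : ∃ q, Arrival G x q v := by
  induction h generalizing p with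
  | single hle he => exact ⟨_, hu.step (hp.trans hle) he⟩
  | cons hle he _ ih => exact ih (hu.step (hp.trans hle) he) le_rfl

/-- A spanning arborescence of the temporal graph `G` rooted at `x`. The first component of
`rank v` is the arrival time at `v`, which is the label of the edge from `parent v`; the second
component breaks ties, so that parents have strictly smaller rank. The values of `parent` and
`rank` at the root are irrelevant. -/
structure Arborescence (G : Finset (Sym2 V × ℕ)) (x : V) where
  parent : V → V
  rank : V → ℕ ×ₗ ℕ
  edge_mem : ∀ v, v ≠ x → (s(parent v, v), (ofLex (rank v)).1) ∈ G
  rank_parent_lt : ∀ v, v ≠ x → rank (parent v) < rank v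

theorem nonempty_arborescence {t₀ : ℕ} (h : ∀ v, v ≠ x → NSJourney G t₀ x v) :
    Nonempty (Arborescence G x) := by
  have earliest (v : V) : ∃ p, Minimal (Arrival G x · v) p := by
    apply exists_minimal_of_wellFoundedLT
    by_cases hv : v = x
    · subst hv
      exact ⟨_, Arrival.refl⟩
    · exact (h v hv).exists_arrival Arrival.refl t₀.zero_le
  choose rank hrank using earliest
  have hpred (v : V) : ∃ u, v ≠ x → (s(u, v), (ofLex (rank v)).1) ∈ G ∧ rank u < rank v := by
    by_cases hv : v = x
    · exact ⟨v, fun hne => absurd hv hne⟩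
    · obtain ⟨u, q, hu, hlt, he⟩ := (hrank v).prop.exists_pred hv
      exact ⟨u, fun _ => ⟨he, (not_lt.1 ((hrank u).not_lt hu)).trans_lt hlt⟩⟩
  choose parent hparent using hpred
  exact ⟨⟨parent, rank, fun v hv => (hparent v hv).1, fun v hv => (hparent v hv).2⟩⟩

namespace Arborescence

variable (T : Arborescence G x)

/-- The arrival time of the arborescence at a vertex. -/
def time (v : V) : ℕ := (ofLex (T.rank v)).1

/-- The temporal edge through which the arborescence enters a vertex (junk at the root). -/
def edge (v : V) : Sym2 V × ℕ := (s(T.parent v, v), T.time v)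

theorem time_parent_le {v : V} (hv : v ≠ x) : T.time (T.parent v) ≤ T.time v :=
  Prod.Lex.monotone_fst _ _ (T.rank_parent_lt v hv).le

@[elab_as_elim]
theorem induction {P : V → Prop} (root : P x) (step : ∀ v, v ≠ x → P (T.parent v) → P v)
    (v : V) : P v := by
  induction v using (InvImage.wf T.rank wellFounded_lt).induction with
  | _ v ih =>
    by_cases hv : v = x
    · exact hv ▸ root
    · exact step v hv (ih _ (T.rank_parent_lt v hv))

theorem injOn_edge : Set.InjOn T.edge {x}ᶜ := by
  intro v hv w hw h
  rcases Sym2.eq_iff.1 (congrArg Prod.fst h) with ⟨-, heq⟩ | ⟨hvw, hwv⟩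
  · exact heq
  · have hlt := T.rank_parent_lt v hv
    rw [hvw] at hlt
    have hgt := T.rank_parent_lt w hw
    rw [← hwv] at hgt
    exact absurd hlt hgt.asymm

theorem exists_card_le_forall_edge_mem (F : Finset (Sym2 V × ℕ)) :
    ∃ H : Finset V, H.card ≤ F.card ∧ ∀ v, v ≠ x → T.edge v ∈ F → v ∈ H := by
  classical
  have : Nonempty V := ⟨x⟩
  refine ⟨F.image (Function.invFunOn T.edge {x}ᶜ), Finset.card_image_le, fun v hv hF => ?_⟩
  exact Finset.mem_image.2 ⟨_, hF, T.injOn_edge.leftInvOn_invFunOn hv⟩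

end Arborescence

end Arborescence

section Reduction

variable {α : Type*} {m : ℕ} {Cs : Fin m → Finset α}

/-- The pairs `(a, j)` with `a ∈ S_j`, which index the vertices `e_aS_j`. -/
abbrev Incidence (Cs : Fin m → Finset α) := {p : α × Fin m // p.1 ∈ Cs p.2}

/-- The source vertex `x`. -/
abbrev root : W m Cs := Sum.inl ()

/-- The vertex `e_aS_j` for `p = (a, j)`. -/
abbrev incidenceVertex (p : Incidence Cs) : W m Cs := Sum.inr (Sum.inl p)

/-- The vertex `S_j`. -/
abbrev setVertex (j : Fin m) : W m Cs := Sum.inr (Sum.inr j)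

/-- The index `j` of the set to which a vertex `e_aS_j` or `S_j` belongs. -/
abbrev setIndex : Incidence Cs ⊕ Fin m → Fin m := Sum.elim (fun p => p.1.2) id

/-- `𝒢` is the temporal graph of the reduction from the hitting set instance `Cs`. -/
def IsReductionGraph (Cs : Fin m → Finset α) (𝒢 : Finset (Sym2 (W m Cs) × ℕ)) : Prop :=
  ∀ et : Sym2 (W m Cs) × ℕ, et ∈ 𝒢 ↔
    (∃ p q : Incidence Cs, p.1.1 = q.1.1 ∧ p ≠ q ∧
      et = (s(incidenceVertex p, incidenceVertex q), 1)) ∨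
    ∃ p : Incidence Cs, et = (s(incidenceVertex p, setVertex p.1.2), 2)

namespace IsReductionGraph

variable {𝒢 : Finset (Sym2 (W m Cs) × ℕ)}

theorem incidence_incidence_mem (h𝒢 : IsReductionGraph Cs 𝒢) {p q : Incidence Cs}
    (h : p.1.1 = q.1.1) (hne : p ≠ q) :
    (s(incidenceVertex p, incidenceVertex q), 1) ∈ 𝒢 :=
  (h𝒢 _).2 (Or.inl ⟨p, q, h, hne, rfl⟩)

theorem incidence_set_mem (h𝒢 : IsReductionGraph Cs 𝒢) (p : Incidence Cs) :
    (s(incidenceVertex p, setVertex p.1.2), 2) ∈ 𝒢 :=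
  (h𝒢 _).2 (Or.inr ⟨p, rfl⟩)

theorem mem_cases (h𝒢 : IsReductionGraph Cs 𝒢) {u v : W m Cs} {t : ℕ}
    (h : (s(u, v), t) ∈ 𝒢) :
    (t = 1 ∧ ∃ p q : Incidence Cs, p.1.1 = q.1.1 ∧ u = incidenceVertex p ∧
      v = incidenceVertex q) ∨
    (t = 2 ∧ ∃ y z, setIndex y = setIndex z ∧ u = Sum.inr y ∧ v = Sum.inr z) := by
  rcases (h𝒢 _).1 h with ⟨p, q, hpq, -, he⟩ | ⟨p, he⟩ <;> obtain ⟨hends, rfl⟩ := Prod.mk.inj he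
  · rcases Sym2.eq_iff.1 hends with ⟨rfl, rfl⟩ | ⟨rfl, rfl⟩
    · exact Or.inl ⟨rfl, p, q, hpq, rfl, rfl⟩
    · exact Or.inl ⟨rfl, q, p, hpq.symm, rfl, rfl⟩
  · rcases Sym2.eq_iff.1 hends with ⟨rfl, rfl⟩ | ⟨rfl, rfl⟩
    · exact Or.inr ⟨rfl, Sum.inl p, Sum.inr p.1.2, rfl, rfl, rfl⟩
    · exact Or.inr ⟨rfl, Sum.inr p.1.2, Sum.inl p, rfl, rfl, rfl⟩

theorem root_notMem (h𝒢 : IsReductionGraph Cs 𝒢) (v : W m Cs) (t : ℕ) :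
    (s(root, v), t) ∉ 𝒢 := by
  intro h
  rcases h𝒢.mem_cases h with ⟨-, p, q, -, hu, -⟩ | ⟨-, y, z, -, hu, -⟩ <;> cases hu

end IsReductionGraph

/-- The time-`1` edge joining the source `x` to a vertex `e_aS_j`. -/
def rootEdge (p : Incidence Cs) : Sym2 (W m Cs) × ℕ := (s(root, incidenceVertex p), 1)

theorem exists_incidences_of_hittingSet {S : Finset α} (hS : ∀ j, ∃ a ∈ S, a ∈ Cs j) :
    ∃ P : Finset (Incidence Cs), P.card ≤ S.card ∧ ∀ j, ∃ p ∈ P, p.1.1 ∈ Cs j := by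
  classical
  choose f hf using fun a : {a // ∃ j, a ∈ Cs j} => a.2
  let covered := S.subtype fun a => ∃ j, a ∈ Cs j
  have hcovered : covered.card ≤ S.card :=
    (Finset.card_subtype _ S).trans_le (Finset.card_filter_le _ _)
  refine ⟨covered.image fun a => ⟨(a.1, f a), hf a⟩, Finset.card_image_le.trans hcovered,
    fun j => ?_⟩
  obtain ⟨a, ha, haj⟩ := hS j
  have hmem : ⟨a, j, haj⟩ ∈ covered := Finset.mem_subtype.2 ha
  exact ⟨_, Finset.mem_image_of_mem _ hmem, haj⟩

section Reachability

variable {𝒢 G : Finset (Sym2 (W m Cs) × ℕ)}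

theorem journey_root_of_rootEdge_mem (h𝒢 : IsReductionGraph Cs 𝒢) (hG : 𝒢 ⊆ G)
    {p q : Incidence Cs} {v : W m Cs} (hp : rootEdge p ∈ G) (hpq : p.1.1 = q.1.1)
    (h : NSJourney G 1 (incidenceVertex q) v) : NSJourney G 0 root v := by
  refine NSJourney.cons zero_le_one hp ?_
  by_cases hne : p = q
  · exact hne ▸ h
  · exact NSJourney.cons le_rfl (hG (h𝒢.incidence_incidence_mem hpq hne)) h

theorem journey_root_of_hitting (h𝒢 : IsReductionGraph Cs 𝒢) (hG : 𝒢 ⊆ G)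
    (hit : ∀ j, ∃ p, rootEdge p ∈ G ∧ p.1.1 ∈ Cs j) (v : W m Cs) (hv : v ≠ root) :
    NSJourney G 0 root v := by
  have toSet (p : Incidence Cs) : (s(incidenceVertex p, setVertex p.1.2), 2) ∈ G :=
    hG (h𝒢.incidence_set_mem p)
  rcases v with ⟨⟩ | q | j
  · exact absurd rfl hv
  · obtain ⟨p, hp, hpq⟩ := hit q.1.2
    have hback : NSJourney G 2 (setVertex q.1.2) (incidenceVertex q) :=
      NSJourney.single le_rfl (Sym2.eq_swap ▸ toSet q)
    exact journey_root_of_rootEdge_mem h𝒢 hG (q := ⟨(p.1.1, q.1.2), hpq⟩) hp rfl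
      (NSJourney.cons one_le_two (toSet _) hback)
  · obtain ⟨p, hp, hpj⟩ := hit j
    exact journey_root_of_rootEdge_mem h𝒢 hG (q := ⟨(p.1.1, j), hpj⟩) hp rfl
      (NSJourney.single one_le_two (toSet _))

end Reachability

variable [DecidableEq α] {𝒢 : Finset (Sym2 (W m Cs) × ℕ)}

theorem exists_augmentation_of_hittingSet (h𝒢 : IsReductionGraph Cs 𝒢) {S : Finset α}
    (hS : ∀ j, ∃ a ∈ S, a ∈ Cs j) :
    ∃ F : Finset (Sym2 (W m Cs) × ℕ), F.card ≤ S.card ∧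
      (∀ et ∈ F, ¬ et.1.IsDiag ∧ (et.2 = 1 ∨ et.2 = 2) ∧ et ∉ 𝒢) ∧
      ∀ v, v ≠ root → NSJourney (𝒢 ∪ F) 0 root v := by
  obtain ⟨P, hcard, hP⟩ := exists_incidences_of_hittingSet hS
  refine ⟨P.image rootEdge, Finset.card_image_le.trans hcard, ?_, ?_⟩
  · refine Finset.forall_mem_image.2 fun p _ => ⟨?_, Or.inl rfl, h𝒢.root_notMem _ _⟩
    exact fun hdiag => Sum.inl_ne_inr (Sym2.mk_isDiag_iff.1 hdiag)
  · refine journey_root_of_hitting h𝒢 Finset.subset_union_left fun j => ?_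
    obtain ⟨p, hp, hpj⟩ := hP j
    exact ⟨p, Finset.mem_union_right _ (Finset.mem_image_of_mem _ hp), hpj⟩

section Hitting

variable {F : Finset (Sym2 (W m Cs) × ℕ)} (T : Arborescence (𝒢 ∪ F) root) {S : Finset α}

theorem element_mem_of_time_le_one (h𝒢 : IsReductionGraph Cs 𝒢)
    (hS : ∀ p, T.edge (incidenceVertex p) ∈ F → p.1.1 ∈ S) (p : Incidence Cs)
    (hp : T.time (incidenceVertex p) ≤ 1) : p.1.1 ∈ S := by
  suffices ∀ v : W m Cs, ∀ q, v = incidenceVertex q → T.time v ≤ 1 → q.1.1 ∈ S from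
    this _ p rfl hp
  intro v
  induction v using T.induction with
  | root => intro q hq; cases hq
  | step v hv ih =>
    rintro q rfl htime
    rcases Finset.mem_union.1 (T.edge_mem _ hv) with he | he
    · rcases h𝒢.mem_cases he with ⟨-, p', q', hpq, hparent, hq⟩ | ⟨htwo, -⟩
      · cases hq
        exact hpq ▸ ih p' hparent ((T.time_parent_le hv).trans htime)
      · exact absurd (htwo.symm.trans_le htime) (by decide)
    · exact hS q he

theorem hits_setIndex (h𝒢 : IsReductionGraph Cs 𝒢) {rep : Incidence Cs ⊕ Fin m → α}
    (hrep_incidence : ∀ p, rep (Sum.inl p) = p.1.1) (hrep : ∀ y, rep y ∈ Cs (setIndex y))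
    (hS : ∀ y, T.edge (Sum.inr y) ∈ F → rep y ∈ S) (y : Incidence Cs ⊕ Fin m) :
    ∃ a ∈ S, a ∈ Cs (setIndex y) := by
  suffices ∀ v : W m Cs, ∀ z, v = Sum.inr z → ∃ a ∈ S, a ∈ Cs (setIndex z) from this _ y rfl
  intro v
  induction v using T.induction with
  | root => intro z hz; cases hz
  | step v hv ih =>
    rintro z rfl
    rcases Finset.mem_union.1 (T.edge_mem _ hv) with he | he
    · rcases h𝒢.mem_cases he with ⟨hone, -, q, -, -, hz⟩ | ⟨-, y', z', hyz, hparent, hz⟩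
      · cases hz
        have hq : q.1.1 ∈ S := element_mem_of_time_le_one T h𝒢
          (fun p hp => hrep_incidence p ▸ hS _ hp) q hone.le
        exact ⟨_, hq, q.2⟩
      · cases hz
        exact hyz ▸ ih y' hparent
    · exact ⟨_, hS z he, hrep z⟩

end Hitting

theorem exists_hittingSet_of_augmentation (h𝒢 : IsReductionGraph Cs 𝒢)
    (hCne : ∀ j, (Cs j).Nonempty) {F : Finset (Sym2 (W m Cs) × ℕ)} {t₀ : ℕ}
    (hreach : ∀ v, v ≠ root → NSJourney (𝒢 ∪ F) t₀ root v) :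
    ∃ S : Finset α, S.card ≤ F.card ∧ ∀ j, ∃ a ∈ S, a ∈ Cs j := by
  obtain ⟨T⟩ := nonempty_arborescence hreach
  obtain ⟨H, hcard, hH⟩ := T.exists_card_le_forall_edge_mem F
  choose c hc using hCne
  let rep : Incidence Cs ⊕ Fin m → α := Sum.elim (fun p => p.1.1) c
  have hrep : ∀ y, rep y ∈ Cs (setIndex y) := Sum.rec (fun p => p.2) hc
  refine ⟨H.toRight.image rep, Finset.card_image_le.trans (Finset.card_toRight_le.trans hcard),
    fun j => hits_setIndex T h𝒢 (fun _ => rfl) hrep (fun y hy => ?_) (Sum.inr j)⟩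
  exact Finset.mem_image_of_mem rep (Finset.mem_toRight.2 (hH _ Sum.inr_ne_inl hy))

end Reduction

theorem hittingSet_iff_tsa_general {α : Type*} [DecidableEq α] {m : ℕ} (Cs : Fin m → Finset α)
    (hCne : ∀ j : Fin m, (Cs j).Nonempty) (K : ℕ) (𝒢 : Finset (Sym2 (W m Cs) × ℕ))
    (h𝒢 : IsReductionGraph Cs 𝒢) :
    (∃ S' : Finset α, S'.card ≤ K ∧ ∀ j : Fin m, ∃ a ∈ S', a ∈ Cs j) ↔
      (∃ F' : Finset (Sym2 (W m Cs) × ℕ), F'.card ≤ K ∧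
        (∀ et ∈ F', ¬ et.1.IsDiag ∧ (et.2 = 1 ∨ et.2 = 2) ∧ et ∉ 𝒢) ∧
        ∀ v : W m Cs, v ≠ Sum.inl () → NSJourney (𝒢 ∪ F') 0 (Sum.inl ()) v) := by
  constructor
  · rintro ⟨S, hcard, hS⟩
    obtain ⟨F, hF, hadmissible, hreach⟩ := exists_augmentation_of_hittingSet h𝒢 hS
    exact ⟨F, hF.trans hcard, hadmissible, hreach⟩
  · rintro ⟨F, hcard, -, hreach⟩
    obtain ⟨S, hS, hit⟩ := exists_hittingSet_of_augmentation h𝒢 hCne hreach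
    exact ⟨S, hS.trans hcard, hit⟩

theorem hittingSet_iff_tsa {α : Type*} [Fintype α] [DecidableEq α] {m : ℕ}
    (Cs : Fin m → Finset α)
    (hCne : ∀ j : Fin m, (Cs j).Nonempty)
    (hcover : ∀ a : α, ∃ j : Fin m, a ∈ Cs j)
    (K : ℕ) (hK : 1 ≤ K) (hKn : K ≤ Fintype.card α)
    (𝒢 : Finset (Sym2 (W m Cs) × ℕ))
    (h𝒢 : ∀ et : Sym2 (W m Cs) × ℕ, et ∈ 𝒢 ↔
      -- time-1 edges between vertices of V_SC corresponding to the same element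
      (∃ v w : {p : α × Fin m // p.1 ∈ Cs p.2}, v.1.1 = w.1.1 ∧ v ≠ w ∧
        et = (s((Sum.inr (Sum.inl v) : W m Cs), Sum.inr (Sum.inl w)), 1)) ∨
      -- time-2 edges between e_aS_j and S_j
      (∃ v : {p : α × Fin m // p.1 ∈ Cs p.2},
        et = (s((Sum.inr (Sum.inl v) : W m Cs), Sum.inr (Sum.inr v.1.2)), 2))) :
    (∃ S' : Finset α, S'.card ≤ K ∧ ∀ j : Fin m, ∃ a ∈ S', a ∈ Cs j) ↔
      (∃ F' : Finset (Sym2 (W m Cs) × ℕ), F'.card ≤ K ∧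
        (∀ et ∈ F', ¬ et.1.IsDiag ∧ (et.2 = 1 ∨ et.2 = 2) ∧ et ∉ 𝒢) ∧
        ∀ v : W m Cs, v ≠ Sum.inl () → NSJourney (𝒢 ∪ F') 0 (Sum.inl ()) v) :=
  hittingSet_iff_tsa_general Cs hCne K 𝒢 h𝒢

end Stmt8
end

section
/- Let 𝒢 be a temporally connected (non-strict) temporal graph of lifespan 2 on a nonempty finite vertex set, with snapshot components C^1_1, …, C^1_{k_1} at time 1 and C^2_1, …, C^2_{k_2} at time 2. Then k_1 ≤ |C^2_{i_2}| for every i_2 ∈ {1,…,k_2}, and k_2 ≤ |C^1_{i_1}| for every i_1 ∈ {1,…,k_1}. -/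
/-!
STATEMENT 9: In a temporally connected temporal graph of lifespan 2 on a nonempty
finite vertex set, the number of snapshot components at time 1 is at most the size of
every snapshot component at time 2, and vice versa.
-/

namespace Stmt9

/-- Non-strict journeys using temporal edges of `G`, all at times `≥ t₀`,
with nondecreasing time labels (at least one temporal edge is used). -/
inductive NSJourney {V : Type*} (G : Finset (Sym2 V × ℕ)) : ℕ → V → V → Prop
  | single {t₀ t : ℕ} {u v : V} (hle : t₀ ≤ t) (h : (s(u, v), t) ∈ G) : NSJourney G t₀ u v
  | cons {t₀ t : ℕ} {u v w : V} (hle : t₀ ≤ t) (h : (s(u, v), t) ∈ G)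
      (htail : NSJourney G t v w) : NSJourney G t₀ u w

def TemporallyConnected {V : Type*} (G : Finset (Sym2 V × ℕ)) : Prop :=
  ∀ u v : V, u ≠ v → NSJourney G 0 u v

/-- The snapshot of a temporal graph at time `t`; its connected components are the
snapshot components at time `t`. -/
def snapshot {V : Type*} (G : Finset (Sym2 V × ℕ)) (t : ℕ) : SimpleGraph V :=
  SimpleGraph.fromEdgeSet {e | (e, t) ∈ G}

/-!
Cut the time axis at `s`. A journey from `u` to `v` uses only labels `≤ s` up to some vertex `x` and
only labels `> s` from there on, so `x` lies in the early component of `u` and in the late component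
of `v`. Hence every early component meets every late one. As the components of one graph are
disjoint, a component of one period contains at least as many vertices as there are components of
the other.
-/

section

open Set

variable {V : Type*} {G : Finset (Sym2 V × ℕ)}

/-- The footprint of a temporal graph over a set `T` of times: the static graph of all edges present
at some time in `T`, that is, the union of the snapshots at the times in `T`. It represents the part
of the temporal graph before or after a given time. As in `snapshot`, `fromEdgeSet` drops loops. -/
def footprint (G : Finset (Sym2 V × ℕ)) (T : Set ℕ) : SimpleGraph V :=
  SimpleGraph.fromEdgeSet {e | ∃ t ∈ T, (e, t) ∈ G}

theorem footprint_mono {T T' : Set ℕ} (h : T ⊆ T') : footprint G T ≤ footprint G T' :=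
  SimpleGraph.fromEdgeSet_mono fun _ ⟨t, ht, he⟩ => ⟨t, h ht, he⟩

theorem footprint_eq_snapshot {T : Set ℕ} {t : ℕ} (h : ∀ et ∈ G, et.2 ∈ T ↔ et.2 = t) :
    footprint G T = snapshot G t := by
  refine congrArg SimpleGraph.fromEdgeSet (Set.ext fun e => ⟨?_, fun he => ?_⟩)
  · rintro ⟨t', ht', he⟩
    obtain rfl := (h (e, t') he).mp ht'
    exact he
  · exact ⟨t, (h (e, t) he).mpr rfl, he⟩

theorem reachable_footprint_of_mem {T : Set ℕ} {t : ℕ} {u v : V} (ht : t ∈ T)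
    (h : (s(u, v), t) ∈ G) : (footprint G T).Reachable u v := by
  by_cases huv : u = v
  · exact huv ▸ .refl u
  · exact SimpleGraph.Adj.reachable ((SimpleGraph.fromEdgeSet_adj _).mpr ⟨⟨t, ht, h⟩, huv⟩)

theorem NSJourney.reachable_footprint_Ici {t₀ : ℕ} {u v : V} (h : NSJourney G t₀ u v) :
    (footprint G (Ici t₀)).Reachable u v := by
  induction h with
  | single hle h => exact reachable_footprint_of_mem hle h
  | cons hle h _ ih =>
    have tail := ih.mono (footprint_mono (Ici_subset_Ici.mpr hle))
    exact (reachable_footprint_of_mem hle h).trans tail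

theorem NSJourney.exists_reachable_Iic_Ioi {t₀ : ℕ} {u v : V} (h : NSJourney G t₀ u v) (s : ℕ) :
    ∃ x, (footprint G (Iic s)).Reachable u x ∧ (footprint G (Ioi s)).Reachable x v := by
  induction h with
  | @single _ t u v _ h =>
    obtain (early : t ∈ Iic s) | (late : t ∈ Ioi s) := le_or_gt t s
    · exact ⟨v, reachable_footprint_of_mem early h, .refl v⟩
    · exact ⟨u, .refl u, reachable_footprint_of_mem late h⟩
  | @cons _ t u _ _ _ h htail ih =>
    obtain (early : t ∈ Iic s) | (late : t ∈ Ioi s) := le_or_gt t s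
    · obtain ⟨x, hx, hxw⟩ := ih
      exact ⟨x, (reachable_footprint_of_mem early h).trans hx, hxw⟩
    · have tail_late := htail.reachable_footprint_Ici.mono
        (footprint_mono (Ici_subset_Ioi.mpr late))
      exact ⟨u, .refl u, (reachable_footprint_of_mem late h).trans tail_late⟩

theorem TemporallyConnected.exists_reachable_Iic_Ioi (h : TemporallyConnected G) (s : ℕ) (u v : V) :
    ∃ x, (footprint G (Iic s)).Reachable u x ∧ (footprint G (Ioi s)).Reachable x v := by
  by_cases huv : u = v
  · exact ⟨u, .refl u, huv ▸ .refl u⟩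
  · exact (h u v huv).exists_reachable_Iic_Ioi s

theorem TemporallyConnected.supp_inter_supp_nonempty (h : TemporallyConnected G) {s : ℕ}
    (c : (footprint G (Iic s)).ConnectedComponent) (d : (footprint G (Ioi s)).ConnectedComponent) :
    (c.supp ∩ d.supp).Nonempty := by
  obtain ⟨u, rfl⟩ := c.exists_rep
  obtain ⟨v, rfl⟩ := d.exists_rep
  obtain ⟨x, hux, hxv⟩ := h.exists_reachable_Iic_Ioi s u v
  exact ⟨x, SimpleGraph.ConnectedComponent.sound hux.symm, SimpleGraph.ConnectedComponent.sound hxv⟩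

theorem card_connectedComponent_le_encard_of_inter_nonempty {H : SimpleGraph V} {S : Set V}
    (hS : ∀ c : H.ConnectedComponent, (c.supp ∩ S).Nonempty) :
    ENat.card H.ConnectedComponent ≤ S.encard := by
  have surj : SurjOn H.connectedComponentMk S univ := fun c _ =>
    let ⟨x, hxc, hxS⟩ := hS c
    ⟨x, hxS, hxc⟩
  calc ENat.card H.ConnectedComponent = (univ : Set H.ConnectedComponent).encard :=
        (encard_univ _).symm
    _ ≤ (H.connectedComponentMk '' S).encard := encard_le_encard surj
    _ ≤ S.encard := encard_image_le _ S

theorem component_count_le_component_size_general (hconn : TemporallyConnected G) (s : ℕ) :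
    (∀ c : (footprint G (Ioi s)).ConnectedComponent,
      ENat.card (footprint G (Iic s)).ConnectedComponent ≤ c.supp.encard) ∧
    (∀ c : (footprint G (Iic s)).ConnectedComponent,
      ENat.card (footprint G (Ioi s)).ConnectedComponent ≤ c.supp.encard) :=
  ⟨fun late => card_connectedComponent_le_encard_of_inter_nonempty fun early =>
      hconn.supp_inter_supp_nonempty early late,
    fun early => card_connectedComponent_le_encard_of_inter_nonempty fun late =>
      inter_comm early.supp late.supp ▸ hconn.supp_inter_supp_nonempty early late⟩

end

theorem component_count_le_component_size {V : Type*} [Fintype V] [Nonempty V]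
    (𝒢 : Finset (Sym2 V × ℕ))
    (hvalid : ∀ et ∈ 𝒢, ¬ et.1.IsDiag ∧ (et.2 = 1 ∨ et.2 = 2))
    (hmax : ∃ et ∈ 𝒢, et.2 = 2)
    (hconn : TemporallyConnected 𝒢) :
    (∀ c : (snapshot 𝒢 2).ConnectedComponent,
      Nat.card ((snapshot 𝒢 1).ConnectedComponent) ≤ c.supp.ncard) ∧
    (∀ c : (snapshot 𝒢 1).ConnectedComponent,
      Nat.card ((snapshot 𝒢 2).ConnectedComponent) ≤ c.supp.ncard) := by
  have early : footprint 𝒢 (Set.Iic 1) = snapshot 𝒢 1 :=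
    footprint_eq_snapshot fun et het => by
      rw [Set.mem_Iic]
      have := (hvalid et het).2
      omega
  have late : footprint 𝒢 (Set.Ioi 1) = snapshot 𝒢 2 :=
    footprint_eq_snapshot fun et het => by
      rw [Set.mem_Ioi]
      have := (hvalid et het).2
      omega
  have h := component_count_le_component_size_general hconn 1
  rw [early, late] at h
  simpa only [ENat.card_eq_coe_natCard, ← (Set.toFinite _).cast_ncard_eq, Nat.cast_le] using h

end Stmt9
end

section
/- Let G = (V, E) be a finite simple graph on n vertices with connected components C_1, …, C_k, and let c = min_i |C_i| be the minimum size of a component. Let 𝒢 be the temporal graph on V whose temporal edges are ({u,v}, 1) for each {u,v} ∈ E. Then there exists a set F' of exactly n − c temporal edges, all with time label 2, such that 𝒢 ↑ F' is temporally connected (with non-strict journeys). In particular, such a set can be obtained by choosing a component C_ℓ of minimum size and forming |C_ℓ| vertex-disjoint stars at time 2, each centered at a distinct vertex of C_ℓ, whose leaves partition V \ C_ℓ in such a way that every star contains at least one vertex from each component C_i with i ≠ ℓ. -/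
/-!
STATEMENT 10: (1+1)-TCA, upper bound.  Given a static graph `G` on `n` vertices with
minimum component size `c`, placed at time 1, there is a set `F'` of exactly `n − c`
temporal edges at time 2 making the temporal graph temporally connected; moreover `F'`
can be chosen to consist of `c` vertex-disjoint stars centered at the distinct vertices
of a minimum-size component `C_ℓ`, whose leaves partition `V \ C_ℓ`, each star
containing at least one vertex of every other component.
-/

namespace Stmt10

/-- Non-strict journeys using temporal edges of `G`, all at times `≥ t₀`,
with nondecreasing time labels (at least one temporal edge is used). -/
inductive NSJourney {V : Type*} (G : Finset (Sym2 V × ℕ)) : ℕ → V → V → Prop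
  | single {t₀ t : ℕ} {u v : V} (hle : t₀ ≤ t) (h : (s(u, v), t) ∈ G) : NSJourney G t₀ u v
  | cons {t₀ t : ℕ} {u v w : V} (hle : t₀ ≤ t) (h : (s(u, v), t) ∈ G)
      (htail : NSJourney G t v w) : NSJourney G t₀ u w

def TemporallyConnected {V : Type*} (G : Finset (Sym2 V × ℕ)) : Prop :=
  ∀ u v : V, u ≠ v → NSJourney G 0 u v

/-! At time 1 a journey can move freely inside its component. Let `ℓ` be a component of minimum
size: every other component has enough vertices to supply each vertex of `ℓ` with a leaf of its own,
so the stars centered in `ℓ` can all be made to meet all other components. A journey then walks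
at time 1 to a vertex of the star containing its target (to the center, if it starts in `ℓ`) and,
since labels may repeat, crosses this star through its center at time 2. -/

section Journey

variable {V : Type*} {H : Finset (Sym2 V × ℕ)} {G : SimpleGraph V} {s t : ℕ} {u v w : V}

theorem NSJourney.anti_start (hst : s ≤ t) (h : NSJourney H t u v) : NSJourney H s u v := by
  cases h with
  | single hle he => exact .single (hst.trans hle) he
  | cons hle he htail => exact .cons (hst.trans hle) he htail

theorem NSJourney.prepend_reachable (hG : ∀ e ∈ G.edgeSet, (e, s) ∈ H)
    (huv : G.Reachable u v) (h : NSJourney H s v w) : NSJourney H s u w := by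
  obtain ⟨p⟩ := huv
  induction p with
  | nil => exact h
  | cons hadj _ ih => exact .cons le_rfl (hG _ hadj) (ih h)

theorem NSJourney.of_reachable (hG : ∀ e ∈ G.edgeSet, (e, s) ∈ H)
    (huv : G.Reachable u v) (hne : u ≠ v) : NSJourney H s u v := by
  obtain ⟨p⟩ := huv.symm
  cases p with
  | nil => exact absurd rfl hne
  | cons hadj q => exact (single le_rfl (hG _ hadj.symm)).prepend_reachable hG q.reachable.symm

end Journey

section StarEdges

variable {V : Type*} {f : V → V} {S : Finset V} {t : ℕ}

theorem center_eq_and_leaf_eq (hf : ∀ b ∈ S, f b ∉ S) {a b b' : V} (hb : b ∈ S) (hb' : b' ∈ S)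
    (h : s(f b', b') = s(a, b)) : f b' = a ∧ b' = b := by
  rcases Sym2.eq_iff.1 h with hab | ⟨hcenter, -⟩
  · exact hab
  · exact absurd (hcenter ▸ hb) (hf b' hb')

variable [DecidableEq V]

/-- The temporal edges `({f b, b}, t)` for `b ∈ S`. When `f` maps `S` outside `S`, they form
vertex-disjoint stars with leaf set `S`, the star of a leaf `b` being centered at `f b`. -/
def starEdges (f : V → V) (S : Finset V) (t : ℕ) : Finset (Sym2 V × ℕ) :=
  S.image fun b => (s(f b, b), t)

theorem mem_starEdges {e : Sym2 V × ℕ} :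
    e ∈ starEdges f S t ↔ ∃ b ∈ S, (s(f b, b), t) = e :=
  Finset.mem_image

theorem mk_mem_starEdges_iff (hf : ∀ b ∈ S, f b ∉ S) {a b : V} (hb : b ∈ S) :
    (s(a, b), t) ∈ starEdges f S t ↔ f b = a := by
  refine mem_starEdges.trans ⟨?_, fun hab => ⟨b, hb, by rw [hab]⟩⟩
  rintro ⟨b', hb', h⟩
  obtain ⟨hcenter, rfl⟩ := center_eq_and_leaf_eq hf hb hb' (congrArg Prod.fst h)
  exact hcenter

theorem existsUnique_mk_mem_starEdges (hf : ∀ b ∈ S, f b ∉ S) {b : V} (hb : b ∈ S) :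
    ∃! a, (s(a, b), t) ∈ starEdges f S t := by
  simp only [mk_mem_starEdges_iff hf hb, existsUnique_eq']

theorem card_starEdges (hf : ∀ b ∈ S, f b ∉ S) : (starEdges f S t).card = S.card :=
  Finset.card_image_of_injOn fun _ hx _ hy hxy =>
    (center_eq_and_leaf_eq hf hy hx (congrArg Prod.fst hxy)).2

theorem not_isDiag_of_mem_starEdges (hf : ∀ b ∈ S, f b ∉ S) {e : Sym2 V × ℕ}
    (he : e ∈ starEdges f S t) : ¬ e.1.IsDiag := by
  obtain ⟨b, hb, rfl⟩ := mem_starEdges.1 he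
  exact fun hdiag => hf b hb ((Sym2.mk_isDiag_iff.1 hdiag).symm ▸ hb)

end StarEdges

theorem exists_map_surjOn_fibers {α ι β : Type*} [Nonempty β] (π : α → ι)
    (e : ∀ i, β ↪ {a // π a = i}) : ∃ f : α → β, ∀ i b, ∃ a, π a = i ∧ f a = b := by
  refine ⟨fun a => Function.invFun (e (π a)) ⟨a, rfl⟩, fun i b => ?_⟩
  rcases h : e i b with ⟨a, rfl⟩
  exact ⟨a, rfl, by simpa only [h] using Function.leftInverse_invFun (e (π a)).injective b⟩

section StarAssignment

variable {V : Type*} {G : SimpleGraph V} {ℓ : G.ConnectedComponent} {f : V → V}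

/-- A valid star partition around the component `ℓ`, encoded by the map `f` sending each vertex
outside `ℓ` to the center of its star: the centers lie in `ℓ`, and each vertex of `ℓ` is the
center of some vertex of every other component. The values of `f` on `ℓ` are irrelevant. -/
structure IsStarAssignment (ℓ : G.ConnectedComponent) (f : V → V) : Prop where
  mapsTo : Set.MapsTo f ℓ.suppᶜ ℓ.supp
  surjOn : ∀ d ≠ ℓ, Set.SurjOn f d.supp ℓ.supp

theorem exists_isStarAssignment [Finite V]
    (hmin : ∀ d : G.ConnectedComponent, ℓ.supp.ncard ≤ d.supp.ncard) :
    ∃ f, IsStarAssignment ℓ f := by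
  have := Fintype.ofFinite V
  have hembed (d : G.ConnectedComponent) : Nonempty (ℓ.supp ↪ d.supp) := by
    classical exact Function.Embedding.nonempty_of_card_le (by
      simpa only [← Nat.card_eq_fintype_card, Nat.card_coe_set_eq] using hmin d)
  have := ℓ.nonempty_supp.to_subtype
  obtain ⟨f, hf⟩ := exists_map_surjOn_fibers G.connectedComponentMk
    fun d => (hembed d).some
  refine ⟨fun b => f b, fun b _ => (f b).2, fun d _ a ha => ?_⟩
  obtain ⟨b, hb, hba⟩ := hf d ⟨a, ha⟩
  exact ⟨b, hb, congrArg Subtype.val hba⟩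

namespace IsStarAssignment

theorem exists_leaf_reachable (hf : IsStarAssignment ℓ f) {u a : V} (hu : u ∉ ℓ.supp)
    (ha : a ∈ ℓ.supp) : ∃ b ∉ ℓ.supp, G.Reachable u b ∧ f b = a := by
  obtain ⟨b, hb, hba⟩ := hf.surjOn (G.connectedComponentMk u) hu ha
  exact ⟨b, fun hbℓ => hu (hb.symm.trans hbℓ), SimpleGraph.ConnectedComponent.exact hb.symm, hba⟩

variable {H : Finset (Sym2 V × ℕ)} {s t : ℕ}

theorem nsJourney_via_center (hf : IsStarAssignment ℓ f) (hst : s ≤ t)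
    (hG : ∀ e ∈ G.edgeSet, (e, s) ∈ H) (hstar : ∀ b ∉ ℓ.supp, (s(b, f b), t) ∈ H)
    {u a v : V} (ha : a ∈ ℓ.supp) (h : NSJourney H t a v) : NSJourney H s u v := by
  by_cases hu : u ∈ ℓ.supp
  · exact (h.anti_start hst).prepend_reachable hG (ℓ.reachable_of_mem_supp hu ha)
  · obtain ⟨b, hb, hub, rfl⟩ := hf.exists_leaf_reachable hu ha
    exact (NSJourney.cons hst (hstar b hb) h).prepend_reachable hG hub

theorem temporallyConnected (hf : IsStarAssignment ℓ f) (hst : s ≤ t)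
    (hG : ∀ e ∈ G.edgeSet, (e, s) ∈ H) (hstar : ∀ b ∉ ℓ.supp, (s(f b, b), t) ∈ H) :
    TemporallyConnected H := by
  intro u v huv
  suffices NSJourney H s u v from this.anti_start s.zero_le
  have hstar' : ∀ b ∉ ℓ.supp, (s(b, f b), t) ∈ H := fun b hb => Sym2.eq_swap ▸ hstar b hb
  by_cases hv : v ∈ ℓ.supp
  · by_cases hu : u ∈ ℓ.supp
    · exact .of_reachable hG (ℓ.reachable_of_mem_supp hu hv) huv
    · obtain ⟨b, hb, hub, rfl⟩ := hf.exists_leaf_reachable hu hv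
      exact (NSJourney.single hst (hstar' b hb)).prepend_reachable hG hub
  · exact hf.nsJourney_via_center hst hG hstar' (hf.mapsTo hv) (.single le_rfl (hstar v hv))

end IsStarAssignment

end StarAssignment

theorem oneplusone_tca_upper {V : Type*} [Fintype V] [DecidableEq V] [Nonempty V]
    (G : SimpleGraph V) (𝒢 : Finset (Sym2 V × ℕ))
    -- 𝒢 has the temporal edge ({u,v},1) for each edge {u,v} of G, and nothing else
    (h𝒢 : ∀ et : Sym2 V × ℕ, et ∈ 𝒢 ↔ et.1 ∈ G.edgeSet ∧ et.2 = 1)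
    (c : ℕ)
    -- c is the minimum size of a connected component of G
    (hcmin : ∀ d : G.ConnectedComponent, c ≤ d.supp.ncard)
    (hcex : ∃ d : G.ConnectedComponent, d.supp.ncard = c) :
    ∃ F' : Finset (Sym2 V × ℕ),
      F'.card = Fintype.card V - c ∧
      (∀ et ∈ F', ¬ et.1.IsDiag ∧ et.2 = 2) ∧
      TemporallyConnected (𝒢 ∪ F') ∧
      -- the star construction: a minimum component ℓ whose vertices are star centers
      ∃ ℓ : G.ConnectedComponent, ℓ.supp.ncard = c ∧
        -- every added edge joins a center in ℓ to a leaf outside ℓ, at time 2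
        (∀ et ∈ F', ∃ a ∈ ℓ.supp, ∃ b ∉ ℓ.supp, et = (s(a, b), 2)) ∧
        -- the stars are vertex-disjoint and their leaves partition V \ ℓ
        (∀ b : V, b ∉ ℓ.supp → ∃! a : V, (s(a, b), 2) ∈ F') ∧
        -- every star contains at least one vertex from each other component
        (∀ a ∈ ℓ.supp, ∀ d : G.ConnectedComponent, d ≠ ℓ →
          ∃ b ∈ d.supp, (s(a, b), 2) ∈ F') := by
  obtain ⟨ℓ, rfl⟩ := hcex
  obtain ⟨f, hf⟩ := exists_isStarAssignment hcmin
  let leaves : Finset V := ℓ.suppᶜ.toFinite.toFinset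
  have mem_leaves {b : V} : b ∈ leaves ↔ b ∉ ℓ.supp := Set.Finite.mem_toFinset _
  have center_notMem : ∀ b ∈ leaves, f b ∉ leaves := fun b hb hfb =>
    mem_leaves.1 hfb (hf.mapsTo (mem_leaves.1 hb))
  refine ⟨starEdges f leaves 2, ?card, fun et het => ⟨?notDiag, ?time⟩, ?connected, ℓ, rfl,
    fun et het => ?centerLeaf, fun b hb => ?partition, fun a ha d hd => ?meets⟩
  case card =>
    rw [card_starEdges center_notMem, ← Set.ncard_eq_toFinset_card, Set.ncard_compl,
      Nat.card_eq_fintype_card]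
  case notDiag => exact not_isDiag_of_mem_starEdges center_notMem het
  case time => obtain ⟨b, -, rfl⟩ := mem_starEdges.1 het; rfl
  case connected =>
    exact hf.temporallyConnected one_le_two
      (fun e he => Finset.mem_union_left _ ((h𝒢 _).2 ⟨he, rfl⟩))
      (fun b hb => Finset.mem_union_right _ (mem_starEdges.2 ⟨b, mem_leaves.2 hb, rfl⟩))
  case centerLeaf =>
    obtain ⟨b, hb, rfl⟩ := mem_starEdges.1 het
    exact ⟨f b, hf.mapsTo (mem_leaves.1 hb), b, mem_leaves.1 hb, rfl⟩
  case partition => exact existsUnique_mk_mem_starEdges center_notMem (mem_leaves.2 hb)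
  case meets =>
    obtain ⟨b, hb, rfl⟩ := hf.surjOn d hd ha
    exact ⟨b, hb, mem_starEdges.2 ⟨b, mem_leaves.2 fun hbℓ => hd (hb.symm.trans hbℓ), rfl⟩⟩

end Stmt10
end

section
/- Let G = (V, E) be a finite simple graph on n vertices with connected components C_1, …, C_k, and let c = min_i |C_i|. Let 𝒢 be the temporal graph on V whose temporal edges are ({u,v}, 1) for each {u,v} ∈ E. Then every set F' of temporal edges, all with time label 2, such that 𝒢 ↑ F' is temporally connected (with non-strict journeys), satisfies |F'| ≥ n − c. -/
/-!
STATEMENT 11: (1+1)-TCA, lower bound.  Given a static graph `G` on `n` vertices with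
minimum component size `c`, placed at time 1, every set `F'` of temporal edges at time
2 whose addition makes the temporal graph temporally connected has size at least
`n − c`.
-/

namespace Stmt11

/-- Non-strict journeys using temporal edges of `G`, all at times `≥ t₀`,
with nondecreasing time labels (at least one temporal edge is used). -/
inductive NSJourney {V : Type*} (G : Finset (Sym2 V × ℕ)) : ℕ → V → V → Prop
  | single {t₀ t : ℕ} {u v : V} (hle : t₀ ≤ t) (h : (s(u, v), t) ∈ G) : NSJourney G t₀ u v
  | cons {t₀ t : ℕ} {u v w : V} (hle : t₀ ≤ t) (h : (s(u, v), t) ∈ G)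
      (htail : NSJourney G t v w) : NSJourney G t₀ u w

def TemporallyConnected {V : Type*} (G : Finset (Sym2 V × ℕ)) : Prop :=
  ∀ u v : V, u ≠ v → NSJourney G 0 u v

/-!
A journey crosses from labels at most `τ` to larger labels only once, so it is a walk along early
edges followed by a walk along late ones. A journey that starts in a component `d` of the early
graph is thus still in `d` when it takes its first late edge, and every vertex is reachable from `d`
by late edges alone. A vertex outside `d` has a neighbour in the late graph that is closer to `d`;
assigning to it the edge to this neighbour is injective.
-/

/-- The footprint of a temporal graph: the static graph of the pairs that carry at least one label.
Temporal loops leave no trace in it. -/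
def footprint {V : Type*} (T : Finset (Sym2 V × ℕ)) : SimpleGraph V :=
  .fromEdgeSet (Prod.fst '' (T : Set (Sym2 V × ℕ)))

section StaticGraph

variable {V : Type*} {H : SimpleGraph V} {S : Set V}

theorem encard_le_encard_edgeSet_of_forall_exists_adj_lt {α : Type*} [Preorder α] {f : V → α}
    (h : ∀ v ∈ S, ∃ u, H.Adj u v ∧ f u < f v) : S.encard ≤ H.edgeSet.encard := by
  choose! parent hadj hlt using h
  refine Set.encard_le_encard_of_injOn (f := fun v => s(parent v, v)) hadj ?_
  intro v hv w hw hvw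
  obtain ⟨-, heq⟩ | ⟨hpv, hpw⟩ := Sym2.eq_iff.1 hvw
  · exact heq
  · have hfwv : f w < f v := hpv ▸ hlt v hv
    have hfvw : f v < f w := hpw ▸ hlt w hw
    exact absurd hfvw hfwv.asymm

theorem encard_compl_le_encard_edgeSet_of_forall_exists_reachable
    (h : ∀ v ∉ S, ∃ u ∈ S, H.Reachable u v) : Sᶜ.encard ≤ H.edgeSet.encard := by
  let lengths (v : V) : Set ℕ := {n | ∃ u ∈ S, ∃ p : H.Walk u v, p.length = n}
  refine encard_le_encard_edgeSet_of_forall_exists_adj_lt (f := fun v => sInf (lengths v)) ?_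
  intro v hv
  have hne : (lengths v).Nonempty := by
    obtain ⟨u, hu, ⟨p⟩⟩ := h v hv
    exact ⟨p.length, u, hu, p, rfl⟩
  obtain ⟨u, hu, p, hp⟩ := Nat.sInf_mem hne
  have hnil : ¬ p.Nil := fun hnil => hv (hnil.eq ▸ hu)
  have hpen : sInf (lengths p.penultimate) ≤ p.dropLast.length :=
    Nat.sInf_le ⟨u, hu, p.dropLast, rfl⟩
  have hlen : p.dropLast.length + 1 = p.length := p.length_dropLast_add_one hnil
  exact ⟨p.penultimate, p.adj_penultimate hnil, by omega⟩

end StaticGraph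

section Journey

variable {V : Type*} {T T' : Finset (Sym2 V × ℕ)} {t t₀ : ℕ} {u v : V}

theorem footprint_mono (h : T ⊆ T') : footprint T ≤ footprint T' :=
  SimpleGraph.fromEdgeSet_mono (Set.image_mono h)

theorem encard_edgeSet_footprint_le (T : Finset (Sym2 V × ℕ)) :
    (footprint T).edgeSet.encard ≤ T.card := by
  rw [footprint, SimpleGraph.edgeSet_fromEdgeSet]
  calc _ ≤ (Prod.fst '' (T : Set (Sym2 V × ℕ))).encard := Set.encard_le_encard Set.sdiff_subset
    _ ≤ (T : Set (Sym2 V × ℕ)).encard := Set.encard_image_le _ _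
    _ = T.card := Set.encard_coe_eq_coe_finsetCard T

theorem reachable_footprint_of_mem (h : (s(u, v), t) ∈ T) : (footprint T).Reachable u v := by
  obtain rfl | huv := eq_or_ne u v
  · rfl
  · exact SimpleGraph.Adj.reachable ⟨⟨_, h, rfl⟩, huv⟩

theorem NSJourney.reachable_footprint (h : NSJourney T t₀ u v) :
    (footprint {e ∈ T | t₀ ≤ e.2}).Reachable u v := by
  induction h with
  | single hle h => exact reachable_footprint_of_mem (Finset.mem_filter.2 ⟨h, hle⟩)
  | cons hle h _ ih =>
    refine (reachable_footprint_of_mem (Finset.mem_filter.2 ⟨h, hle⟩)).trans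
      (ih.mono (footprint_mono ?_))
    exact Finset.monotone_filter_right T fun _ _ => hle.trans

theorem NSJourney.exists_reachable_footprint (h : NSJourney T t₀ u v) (τ : ℕ) :
    ∃ w, (footprint {e ∈ T | e.2 ≤ τ}).Reachable u w ∧
      (footprint {e ∈ T | τ < e.2}).Reachable w v := by
  induction h with
  | @single _ t u v _ h =>
    obtain hearly | hlate := le_or_gt t τ
    · exact ⟨v, reachable_footprint_of_mem (Finset.mem_filter.2 ⟨h, hearly⟩), .rfl⟩
    · exact ⟨u, .rfl, reachable_footprint_of_mem (Finset.mem_filter.2 ⟨h, hlate⟩)⟩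
  | @cons _ t u v _ _ h htail ih =>
    obtain hearly | hlate := le_or_gt t τ
    · obtain ⟨w, hvw, hw⟩ := ih
      exact ⟨w, (reachable_footprint_of_mem (Finset.mem_filter.2 ⟨h, hearly⟩)).trans hvw, hw⟩
    · have hsub : {e ∈ T | t ≤ e.2} ⊆ {e ∈ T | τ < e.2} :=
        Finset.monotone_filter_right T fun _ _ => hlate.trans_le
      exact ⟨u, .rfl, (reachable_footprint_of_mem (Finset.mem_filter.2 ⟨h, hlate⟩)).trans
        (htail.reachable_footprint.mono (footprint_mono hsub))⟩

end Journey

theorem oneplusone_tca_lower_general {V : Type*} [DecidableEq V] (G : SimpleGraph V)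
    (𝒢 : Finset (Sym2 V × ℕ)) (τ : ℕ) (h𝒢 : ∀ et ∈ 𝒢, et.1 ∈ G.edgeSet ∧ et.2 ≤ τ)
    (d : G.ConnectedComponent) (F' : Finset (Sym2 V × ℕ)) (hF' : ∀ et ∈ F', τ < et.2)
    (hconn : TemporallyConnected (𝒢 ∪ F')) : d.suppᶜ.encard ≤ F'.card := by
  have hearly : footprint {e ∈ 𝒢 ∪ F' | e.2 ≤ τ} ≤ G := by
    rintro u v ⟨⟨et, het, huv⟩, -⟩
    obtain ⟨het | het, hle⟩ : (et ∈ 𝒢 ∨ et ∈ F') ∧ et.2 ≤ τ := by simpa using het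
    · exact G.mem_edgeSet.1 (huv ▸ (h𝒢 et het).1)
    · exact absurd hle (hF' et het).not_ge
  have hlate : {e ∈ 𝒢 ∪ F' | τ < e.2} ⊆ F' := by
    intro et het
    obtain ⟨het, hlt⟩ := Finset.mem_filter.1 het
    exact (Finset.mem_union.1 het).resolve_left fun h => (h𝒢 et h).2.not_gt hlt
  have hreach : ∀ v ∉ d.supp, ∃ w ∈ d.supp, (footprint F').Reachable w v := by
    intro v hv
    obtain ⟨u, hu⟩ := d.nonempty_supp
    obtain ⟨w, huw, hwv⟩ :=
      (hconn u v (ne_of_mem_of_not_mem hu hv)).exists_reachable_footprint τ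
    have hw : w ∈ d.supp :=
      (SimpleGraph.ConnectedComponent.sound (huw.mono hearly).symm).trans hu
    exact ⟨w, hw, hwv.mono (footprint_mono hlate)⟩
  exact (encard_compl_le_encard_edgeSet_of_forall_exists_reachable hreach).trans
    (encard_edgeSet_footprint_le F')

theorem oneplusone_tca_lower {V : Type*} [Fintype V] [DecidableEq V] [Nonempty V]
    (G : SimpleGraph V) (𝒢 : Finset (Sym2 V × ℕ))
    -- 𝒢 has the temporal edge ({u,v},1) for each edge {u,v} of G, and nothing else
    (h𝒢 : ∀ et : Sym2 V × ℕ, et ∈ 𝒢 ↔ et.1 ∈ G.edgeSet ∧ et.2 = 1)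
    (c : ℕ)
    -- c is the minimum size of a connected component of G
    (hcmin : ∀ d : G.ConnectedComponent, c ≤ d.supp.ncard)
    (hcex : ∃ d : G.ConnectedComponent, d.supp.ncard = c)
    (F' : Finset (Sym2 V × ℕ))
    (hF' : ∀ et ∈ F', ¬ et.1.IsDiag ∧ et.2 = 2)
    (hconn : TemporallyConnected (𝒢 ∪ F')) :
    Fintype.card V - c ≤ F'.card := by
  obtain ⟨d, rfl⟩ := hcex
  have hle : d.suppᶜ.encard ≤ F'.card :=
    oneplusone_tca_lower_general G 𝒢 1 (fun et het => ((h𝒢 et).1 het).imp_right le_of_eq) d F'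
      (fun et het => (hF' et het).2 ▸ one_lt_two) hconn
  rw [← Nat.card_eq_fintype_card, ← Set.ncard_compl]
  exact (Set.encard_le_coe_iff_finite_ncard_le.1 hle).2

end Stmt11
end

section
/- Let 𝒢 be a temporal graph of lifespan T on a finite vertex set V with a weight function w assigning a nonnegative weight to each temporal edge, let X = {(u_1,v_1), …, (u_p,v_p)} be a set of p pairs of vertices, and let K ≤ p and B be nonnegative numbers. Let G_T be the temporal expansion of 𝒢: vertices v^t for v ∈ V and t ∈ {1,…,T+1}, and for each temporal edge (e,t) = ({u,v},t) two vertices a_{(e,t)}, a'_{(e,t)}; arcs of weight 0: (v^t, v^{t+1}) for all v, t, and (u^t, a_{(e,t)}), (v^t, a_{(e,t)}), (a'_{(e,t)}, u^{t+1}), (a'_{(e,t)}, v^{t+1}) for each temporal edge; and one arc (a_{(e,t)}, a'_{(e,t)}) of weight w(e,t) for each temporal edge. Then there exists a set S of temporal edges of 𝒢 with total weight at most B such that at least K of the pairs (u_i, v_i) are connected by a strict journey using only temporal edges of S, if and only if there exists a subgraph H_T of G_T with total arc weight at most B such that at least K of the pairs (u_i^1, v_i^{T+1}) are connected by a directed path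 in H_T. -/
/-!
STATEMENT 13: TG-Steiner reduces to DG-Steiner via the temporal expansion (strict
setting).  There is a set `S` of temporal edges of `𝒢` of total weight at most `B`
such that at least `K` of the given pairs are connected by a strict journey using only
edges of `S`, iff there is a subgraph `H` (a subset of the arcs) of the weighted
temporal expansion `G_T` of total arc weight at most `B` such that at least `K` of the
pairs `(u_i^1, v_i^{T+1})` are connected by a directed path in `H`.  (A pair with
`u_i = v_i` is trivially connected.)  In the expansion all arcs have weight 0 except
the arc `(a_{(e,t)}, a'_{(e,t)})` of each temporal edge, which has weight `w (e,t)`.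
-/

namespace Stmt13

/-- Strict journeys using temporal edges of `G`, all at times `≥ t₀`,
with strictly increasing time labels (at least one temporal edge is used). -/
inductive SJourney {V : Type*} (G : Finset (Sym2 V × ℕ)) : ℕ → V → V → Prop
  | single {t₀ t : ℕ} {u v : V} (hle : t₀ ≤ t) (h : (s(u, v), t) ∈ G) : SJourney G t₀ u v
  | cons {t₀ t : ℕ} {u v w : V} (hle : t₀ ≤ t) (h : (s(u, v), t) ∈ G)
      (htail : SJourney G (t + 1) v w) : SJourney G t₀ u w

/-- Vertices of the temporal expansion: `Sum.inl (v, t)` is the copy `v^t`, and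
`Sum.inr ((e, t), false)` (resp. `true`) is the vertex `a_{(e,t)}` (resp. `a'_{(e,t)}`)
of the gadget for a temporal edge `(e, t)`. -/
abbrev EV (V : Type*) := (V × ℕ) ⊕ ((Sym2 V × ℕ) × Bool)

/-- Arcs of the temporal expansion of `G` with lifespan `T`. -/
def ExpArc {V : Type*} (G : Finset (Sym2 V × ℕ)) (T : ℕ) (X Y : EV V) : Prop :=
  (∃ (v : V) (t : ℕ), 1 ≤ t ∧ t ≤ T ∧ X = Sum.inl (v, t) ∧ Y = Sum.inl (v, t + 1)) ∨
  (∃ et ∈ G, ∃ w ∈ et.1, X = Sum.inl (w, et.2) ∧ Y = Sum.inr (et, false)) ∨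
  (∃ et ∈ G, X = Sum.inr (et, false) ∧ Y = Sum.inr (et, true)) ∨
  (∃ et ∈ G, ∃ w ∈ et.1, X = Sum.inr (et, true) ∧ Y = Sum.inl (w, et.2 + 1))

/-- The weight of an arc of the expansion: the arc `(a_{(e,t)}, a'_{(e,t)})` has weight
`w (e,t)`; all other arcs have weight 0. -/
def arcWeight {V : Type*} [DecidableEq V] (w : Sym2 V × ℕ → ℝ) : EV V × EV V → ℝ
  | (Sum.inr (et, false), Sum.inr (et', true)) => if et = et' then w et else 0
  | _ => 0

/-! A directed path in the expansion that crosses the gadget of `(e, t)` enters it from a copy at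
time `t` and leaves it at time `t + 1`, so the gadgets it crosses form a strict journey; conversely
a strict journey becomes a path by inserting waiting arcs. Only the middle arc of a gadget carries
weight, so a subgraph costs as much as the temporal edges whose middle arc it contains. A subgraph
may also contain arcs into a gadget without its middle arc; as such arcs lead to a dead end, paths
are translated backwards from their final vertex. -/

section FiniteSubrelation

variable {α ι : Type*} {r : α → α → Prop}

theorem exists_finset_reflTransGen {x y : α} (h : Relation.ReflTransGen r x y) :
    ∃ H : Finset (α × α), (∀ a ∈ H, r a.1 a.2) ∧
      Relation.ReflTransGen (fun b c => (b, c) ∈ H) x y := by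
  classical
  induction h with
  | refl => exact ⟨∅, by simp, .refl⟩
  | @tail b c _ hbc ih =>
    obtain ⟨H, hHr, hxb⟩ := ih
    refine ⟨insert (b, c) H, (Finset.forall_mem_insert _ _ _).2 ⟨hbc, hHr⟩, ?_⟩
    exact .tail (Relation.ReflTransGen.mono (fun _ _ => Finset.mem_insert_of_mem) _ _ hxb)
      (Finset.mem_insert_self (b, c) H)

theorem exists_finset_forall_reflTransGen {I : Finset ι} {x y : ι → α}
    (h : ∀ i ∈ I, Relation.ReflTransGen r (x i) (y i)) :
    ∃ H : Finset (α × α), (∀ a ∈ H, r a.1 a.2) ∧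
      ∀ i ∈ I, Relation.ReflTransGen (fun b c => (b, c) ∈ H) (x i) (y i) := by
  classical
  choose! H hHr hH using fun i hi => exists_finset_reflTransGen (h i hi)
  refine ⟨I.biUnion H, fun a ha => ?_, fun i hi => ?_⟩
  · obtain ⟨i, hi, hai⟩ := Finset.mem_biUnion.1 ha
    exact hHr i hi a hai
  · have hsub : (fun b c => (b, c) ∈ H i) ≤ fun b c => (b, c) ∈ I.biUnion H :=
      fun _ _ hbc => Finset.mem_biUnion.2 ⟨i, hi, hbc⟩
    exact Relation.ReflTransGen.mono hsub _ _ (hH i hi)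

end FiniteSubrelation

section TemporalExpansion

variable {V : Type*} {G S : Finset (Sym2 V × ℕ)} {T : ℕ}

theorem SJourney.of_le {s t : ℕ} {u v : V} (h : SJourney G t u v) (hst : s ≤ t) :
    SJourney G s u v := by
  cases h with
  | single hle he => exact .single (hst.trans hle) he
  | cons hle he htail => exact .cons (hst.trans hle) he htail

theorem SJourney.of_forall_le {s t : ℕ} {u v : V} (h : SJourney G t u v)
    (hG : ∀ et ∈ G, s ≤ et.2) : SJourney G s u v := by
  cases h with
  | single _ he => exact .single (hG _ he) he
  | cons _ he htail => exact .cons (hG _ he) he htail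

/-- Reachability by a strict journey departing at time `t` or later, where, unlike in `SJourney`,
the empty journey is allowed. -/
def Reaches (S : Finset (Sym2 V × ℕ)) (t : ℕ) (u v : V) : Prop :=
  u = v ∨ SJourney S t u v

theorem Reaches.of_le {s t : ℕ} {u v : V} (h : Reaches S t u v) (hst : s ≤ t) :
    Reaches S s u v :=
  h.imp_right (·.of_le hst)

theorem Reaches.cons {et : Sym2 V × ℕ} {u x v : V} (he : et ∈ S) (hu : u ∈ et.1) (hx : x ∈ et.1)
    (h : Reaches S (et.2 + 1) x v) : Reaches S et.2 u v := by
  by_cases hux : u = x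
  · exact hux ▸ h.of_le et.2.le_succ
  · have hmem : (s(u, x), et.2) ∈ S := (Sym2.mem_and_mem_iff hux).1 ⟨hu, hx⟩ ▸ he
    right
    rcases h with rfl | htail
    · exact .single le_rfl hmem
    · exact .cons le_rfl hmem htail

namespace ExpArc

theorem mono (hSG : S ⊆ G) {X Y : EV V} (h : ExpArc S T X Y) : ExpArc G T X Y :=
  h.imp_right <| Or.imp (fun ⟨et, he, h⟩ => ⟨et, hSG he, h⟩) <|
    Or.imp (fun ⟨et, he, h⟩ => ⟨et, hSG he, h⟩) fun ⟨et, he, h⟩ => ⟨et, hSG he, h⟩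

theorem reflTransGen_wait (v : V) {s t : ℕ} (hs : 1 ≤ s) (hst : s ≤ t) (ht : t ≤ T + 1) :
    Relation.ReflTransGen (ExpArc G T) (Sum.inl (v, s)) (Sum.inl (v, t)) := by
  induction t, hst using Nat.le_induction with
  | base => exact .refl
  | succ n hsn ih =>
    exact (ih (by lia)).tail (Or.inl ⟨v, n, by lia, by lia, rfl, rfl⟩)

theorem reflTransGen_gadget {et : Sym2 V × ℕ} (he : et ∈ G) {u v : V} (hu : u ∈ et.1)
    (hv : v ∈ et.1) :
    Relation.ReflTransGen (ExpArc G T) (Sum.inl (u, et.2)) (Sum.inl (v, et.2 + 1)) :=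
  .head (.inr (.inl ⟨et, he, u, hu, rfl, rfl⟩)) <|
    .head (.inr (.inr (.inl ⟨et, he, rfl, rfl⟩))) <|
      .single (.inr (.inr (.inr ⟨et, he, v, hv, rfl, rfl⟩)))

end ExpArc

theorem SJourney.reflTransGen_expArc {t : ℕ} {u v : V} (h : SJourney G t u v) (ht : 1 ≤ t)
    (hT : ∀ et ∈ G, et.2 ≤ T) :
    Relation.ReflTransGen (ExpArc G T) (Sum.inl (u, t)) (Sum.inl (v, T + 1)) := by
  have wait_then_cross {t₀ t : ℕ} {x y : V} (ht₀ : 1 ≤ t₀) (hle : t₀ ≤ t)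
      (he : (s(x, y), t) ∈ G) :
      Relation.ReflTransGen (ExpArc G T) (Sum.inl (x, t₀)) (Sum.inl (y, t + 1)) :=
    (ExpArc.reflTransGen_wait x ht₀ hle ((hT _ he).trans T.le_succ)).trans
      (ExpArc.reflTransGen_gadget he (Sym2.mem_mk_left x y) (Sym2.mem_mk_right x y))
  induction h with
  | single hle he =>
    exact (wait_then_cross ht hle he).trans <|
      ExpArc.reflTransGen_wait _ (Nat.le_add_left 1 _) (Nat.succ_le_succ (hT _ he)) le_rfl
  | cons hle he _ ih => exact (wait_then_cross ht hle he).trans (ih (Nat.le_add_left 1 _))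

theorem Reaches.reflTransGen_expArc {u v : V} (h : Reaches G 0 u v)
    (hG : ∀ et ∈ G, 1 ≤ et.2 ∧ et.2 ≤ T) :
    Relation.ReflTransGen (ExpArc G T) (Sum.inl (u, 1)) (Sum.inl (v, T + 1)) := by
  rcases h with rfl | hjourney
  · exact ExpArc.reflTransGen_wait u le_rfl (Nat.le_add_left 1 T) le_rfl
  · exact (hjourney.of_forall_le fun et he => (hG et he).1).reflTransGen_expArc le_rfl
      fun et he => (hG et he).2

/-- The arc `(a_{(e,t)}, a'_{(e,t)})` of the temporal edge `(e, t)`, which carries its weight. -/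
def gadgetArc (et : Sym2 V × ℕ) : EV V × EV V :=
  (Sum.inr (et, false), Sum.inr (et, true))

theorem gadgetArc_injective : Function.Injective (gadgetArc (V := V)) := fun _ _ h =>
  congrArg Prod.fst (Sum.inr.inj (congrArg Prod.fst h))

theorem ExpArc.mem_of_gadgetArc {et : Sym2 V × ℕ}
    (h : ExpArc G T (gadgetArc et).1 (gadgetArc et).2) : et ∈ G := by
  simpa [ExpArc, gadgetArc] using h

/-- Reachability of `v` from a vertex of the expansion, read in the temporal graph `S`: the copy
`u^t` stands for being at `u` at time `t`, the vertex `a'_{(e,t)}` for being at either endpoint of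
`e` at time `t + 1`, and `a_{(e,t)}` moreover requires that `(e, t)` can be crossed in `S`. -/
def ExpReaches (S : Finset (Sym2 V × ℕ)) (v : V) : EV V → Prop
  | Sum.inl (u, t) => Reaches S t u v
  | Sum.inr (et, false) => et ∈ S ∧ ∃ x ∈ et.1, Reaches S (et.2 + 1) x v
  | Sum.inr (et, true) => ∃ x ∈ et.1, Reaches S (et.2 + 1) x v

theorem ExpReaches.of_expArc {v : V} {X Y : EV V} (hY : ExpReaches S v Y)
    (harc : ExpArc G T X Y) (hS : ∀ et, gadgetArc et = (X, Y) → et ∈ S) :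
    ExpReaches S v X := by
  rcases harc with ⟨u, t, -, -, rfl, rfl⟩ | ⟨et, -, u, hu, rfl, rfl⟩ | ⟨et, -, rfl, rfl⟩ |
    ⟨et, -, u, hu, rfl, rfl⟩
  · exact Reaches.of_le hY t.le_succ
  · obtain ⟨he, x, hx, hxv⟩ := hY
    exact Reaches.cons he hu hx hxv
  · exact ⟨hS et rfl, hY⟩
  · exact ⟨u, hu, hY⟩

section Subgraph

variable {H : Finset (EV V × EV V)}

open scoped Classical in
/-- The temporal edges of `G` whose weighted arc belongs to the subgraph `H` of the expansion. -/
noncomputable def crossedEdges (G : Finset (Sym2 V × ℕ)) (H : Finset (EV V × EV V)) :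
    Finset (Sym2 V × ℕ) :=
  G.filter fun et => gadgetArc et ∈ H

theorem mem_crossedEdges {et : Sym2 V × ℕ} :
    et ∈ crossedEdges G H ↔ et ∈ G ∧ gadgetArc et ∈ H := by
  simp only [crossedEdges, Finset.mem_filter]

theorem crossedEdges_subset : crossedEdges G H ⊆ G :=
  fun _ het => (mem_crossedEdges.1 het).1

theorem sum_arcWeight_eq_sum_crossedEdges [DecidableEq V] (w : Sym2 V × ℕ → ℝ)
    (hH : ∀ a ∈ H, ExpArc G T a.1 a.2) :
    ∑ a ∈ H, arcWeight w a = ∑ et ∈ crossedEdges G H, w et := by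
  symm
  refine Finset.sum_of_injOn gadgetArc gadgetArc_injective.injOn
    (fun _ het => (mem_crossedEdges.1 het).2) ?_ (fun _ _ => (if_pos rfl).symm)
  rintro ⟨X, Y⟩ hmem hnot
  rcases hH _ hmem with ⟨u, t, -, -, rfl, rfl⟩ | ⟨et, -, u, -, rfl, rfl⟩ | ⟨et, he, rfl, rfl⟩ |
    ⟨et, -, u, -, rfl, rfl⟩
  · rfl
  · rfl
  · exact absurd ⟨et, mem_crossedEdges.2 ⟨he, hmem⟩, rfl⟩ hnot
  · rfl

theorem reaches_crossedEdges_of_reflTransGen (hH : ∀ a ∈ H, ExpArc G T a.1 a.2) {s t : ℕ}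
    {u v : V} (h : Relation.ReflTransGen (fun X Y => (X, Y) ∈ H) (Sum.inl (u, s))
      (Sum.inl (v, t))) :
    Reaches (crossedEdges G H) s u v := by
  suffices ExpReaches (crossedEdges G H) v (Sum.inl (u, s)) from this
  refine Relation.ReflTransGen.head_induction_on h (Or.inl rfl) fun {X Y} hXY _ hY => ?_
  refine hY.of_expArc (hH _ hXY) fun et het => ?_
  have hmem : gadgetArc et ∈ H := het ▸ hXY
  exact mem_crossedEdges.2 ⟨(hH _ hmem).mem_of_gadgetArc, hmem⟩

end Subgraph

end TemporalExpansion

theorem tgSteiner_iff_dgSteiner_general {V ι : Type*} [DecidableEq V]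
    (G : Finset (Sym2 V × ℕ)) (T : ℕ) (hG : ∀ et ∈ G, 1 ≤ et.2 ∧ et.2 ≤ T)
    (w : Sym2 V × ℕ → ℝ) (hw : ∀ et ∈ G, 0 ≤ w et) (pairs : ι → V × V) (K : ℕ) (B : ℝ) :
    (∃ S ⊆ G, (∑ et ∈ S, w et) ≤ B ∧
        ∃ I : Finset ι, K ≤ I.card ∧ ∀ i ∈ I,
          (pairs i).1 = (pairs i).2 ∨ SJourney S 0 (pairs i).1 (pairs i).2) ↔
      (∃ H : Finset (EV V × EV V),
        (∀ a ∈ H, ExpArc G T a.1 a.2) ∧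
        (∑ a ∈ H, arcWeight w a) ≤ B ∧
        ∃ I : Finset ι, K ≤ I.card ∧ ∀ i ∈ I,
          Relation.ReflTransGen (fun X Y : EV V => (X, Y) ∈ H)
            (Sum.inl ((pairs i).1, 1)) (Sum.inl ((pairs i).2, T + 1))) := by
  constructor
  · rintro ⟨S, hSG, hSB, I, hKI, hreach⟩
    obtain ⟨H, hHS, hpath⟩ := exists_finset_forall_reflTransGen fun i hi =>
      Reaches.reflTransGen_expArc (hreach i hi) fun et he => hG et (hSG he)
    have hweight : ∑ a ∈ H, arcWeight w a ≤ ∑ et ∈ S, w et := by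
      rw [sum_arcWeight_eq_sum_crossedEdges w hHS]
      exact Finset.sum_le_sum_of_subset_of_nonneg crossedEdges_subset
        fun et he _ => hw et (hSG he)
    exact ⟨H, fun a ha => (hHS a ha).mono hSG, hweight.trans hSB, I, hKI, hpath⟩
  · rintro ⟨H, hHG, hHB, I, hKI, hpath⟩
    exact ⟨crossedEdges G H, crossedEdges_subset,
      (sum_arcWeight_eq_sum_crossedEdges w hHG).symm.trans_le hHB, I, hKI, fun i hi =>
        (reaches_crossedEdges_of_reflTransGen hHG (hpath i hi)).of_le zero_le_one⟩

theorem tgSteiner_iff_dgSteiner {V : Type*} [Fintype V] [DecidableEq V]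
    (G : Finset (Sym2 V × ℕ)) (T : ℕ)
    (hvalid : ∀ et ∈ G, ¬ et.1.IsDiag ∧ 1 ≤ et.2)
    (hle : ∀ et ∈ G, et.2 ≤ T)
    (hmax : ∃ et ∈ G, et.2 = T)
    (w : Sym2 V × ℕ → ℝ) (hw : ∀ et, 0 ≤ w et)
    (p : ℕ) (pairs : Fin p → V × V)
    (K : ℕ) (hKp : K ≤ p) (B : ℝ) (hB : 0 ≤ B) :
    (∃ S ⊆ G, (∑ et ∈ S, w et) ≤ B ∧
        ∃ I : Finset (Fin p), K ≤ I.card ∧ ∀ i ∈ I,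
          (pairs i).1 = (pairs i).2 ∨ SJourney S 0 (pairs i).1 (pairs i).2) ↔
      (∃ H : Finset (EV V × EV V),
        (∀ a ∈ H, ExpArc G T a.1 a.2) ∧
        (∑ a ∈ H, arcWeight w a) ≤ B ∧
        ∃ I : Finset (Fin p), K ≤ I.card ∧ ∀ i ∈ I,
          Relation.ReflTransGen (fun X Y : EV V => (X, Y) ∈ H)
            (Sum.inl ((pairs i).1, 1)) (Sum.inl ((pairs i).2, T + 1))) :=
  tgSteiner_iff_dgSteiner_general G T (fun et he => ⟨(hvalid et he).2, hle et he⟩) w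
    (fun et _ => hw et) pairs K B

end Stmt13
end

section
/- Let 𝒢 be a temporal graph of lifespan T on a finite vertex set V. Define the directed graph G_T' (the non-strict temporal expansion of 𝒢) as follows: for each v ∈ V and each t ∈ {1, …, T+1} there is a vertex v^t; for each v ∈ V and t ∈ {1, …, T} there is an arc (v^t, v^{t+1}); for each temporal edge (e,t) = ({u,v}, t) of 𝒢 there are two vertices a_{(e,t)} and a'_{(e,t)} and five arcs (u^t, a_{(e,t)}), (v^t, a_{(e,t)}), (a_{(e,t)}, a'_{(e,t)}), (a'_{(e,t)}, u^{t+1}), (a'_{(e,t)}, v^{t+1}); and additionally, for every two distinct temporal edges (e,t) and (f,t) at the same time t that share an endpoint, the arcs (a'_{(e,t)}, a_{(f,t)}) and (a'_{(f,t)}, a_{(e,t)}). Then for all vertices u, v ∈ V, there is a non-strict journey from u to v in 𝒢 if and only if there is a directed path from u^1 to v^{T+1} in G_T' that uses at least one arc of the form (a_{(e,t)}, a'_{(e,t)}). -/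
/-!
STATEMENT 14: Correctness of the non-strict temporal expansion.  In addition to the
arcs of the (strict) temporal expansion, `G_T'` has, for every two distinct temporal
edges `(e,t)` and `(f,t)` at the same time that share an endpoint, the arcs
`(a'_{(e,t)}, a_{(f,t)})` and `(a'_{(f,t)}, a_{(e,t)})`.  Then a non-strict journey
from `u` to `v` exists in `𝒢` iff there is a directed path from `u^1` to `v^{T+1}` in
`G_T'` using at least one arc of the form `(a_{(e,t)}, a'_{(e,t)})`.
-/

namespace Stmt14

/-- Non-strict journeys using temporal edges of `G`, all at times `≥ t₀`,
with nondecreasing time labels (at least one temporal edge is used). -/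
inductive NSJourney {V : Type*} (G : Finset (Sym2 V × ℕ)) : ℕ → V → V → Prop
  | single {t₀ t : ℕ} {u v : V} (hle : t₀ ≤ t) (h : (s(u, v), t) ∈ G) : NSJourney G t₀ u v
  | cons {t₀ t : ℕ} {u v w : V} (hle : t₀ ≤ t) (h : (s(u, v), t) ∈ G)
      (htail : NSJourney G t v w) : NSJourney G t₀ u w

/-- Vertices of the temporal expansion: `Sum.inl (v, t)` is the copy `v^t`, and
`Sum.inr ((e, t), false)` (resp. `true`) is the vertex `a_{(e,t)}` (resp. `a'_{(e,t)}`)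
of the gadget for a temporal edge `(e, t)`. -/
abbrev EV (V : Type*) := (V × ℕ) ⊕ ((Sym2 V × ℕ) × Bool)

/-- Arcs of the (strict) temporal expansion of `G` with lifespan `T`. -/
def ExpArc {V : Type*} (G : Finset (Sym2 V × ℕ)) (T : ℕ) (X Y : EV V) : Prop :=
  (∃ (v : V) (t : ℕ), 1 ≤ t ∧ t ≤ T ∧ X = Sum.inl (v, t) ∧ Y = Sum.inl (v, t + 1)) ∨
  (∃ et ∈ G, ∃ w ∈ et.1, X = Sum.inl (w, et.2) ∧ Y = Sum.inr (et, false)) ∨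
  (∃ et ∈ G, X = Sum.inr (et, false) ∧ Y = Sum.inr (et, true)) ∨
  (∃ et ∈ G, ∃ w ∈ et.1, X = Sum.inr (et, true) ∧ Y = Sum.inl (w, et.2 + 1))

/-- Arcs of the non-strict temporal expansion: the arcs of the strict expansion,
plus the arcs `(a'_{(e,t)}, a_{(f,t)})` for distinct temporal edges `(e,t)`, `(f,t)`
at the same time step sharing an endpoint. -/
def ExpArc' {V : Type*} (G : Finset (Sym2 V × ℕ)) (T : ℕ) (X Y : EV V) : Prop :=
  ExpArc G T X Y ∨
  (∃ et ∈ G, ∃ ft ∈ G, et ≠ ft ∧ et.2 = ft.2 ∧ (∃ z : V, z ∈ et.1 ∧ z ∈ ft.1) ∧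
    X = Sum.inr (et, true) ∧ Y = Sum.inr (ft, false))

/-- The arcs of the form `(a_{(e,t)}, a'_{(e,t)})`. -/
def SpecialArc {V : Type*} (G : Finset (Sym2 V × ℕ)) (X Y : EV V) : Prop :=
  ∃ et ∈ G, X = Sum.inr (et, false) ∧ Y = Sum.inr (et, true)

/-!
A journey that takes the temporal edges `e₁, e₂, …` is followed in the expansion by moving from
`a'_{e₁}` to `a'_{e₂}` and so on: through an additional arc while the time stands still, and
along copies of the shared endpoint when the time increases. Conversely, having a journey to `v`
is inherited backwards along the arcs of a path. The one delicate case is a path that leaves a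
gadget through the endpoint by which it entered; there a non-strict journey may cross the edge
back and forth at the same time.
-/

section Journeys

variable {V : Type*} {G : Finset (Sym2 V × ℕ)}

theorem NSJourney.restart {s t : ℕ} {u v : V} (hst : ∀ et ∈ G, t ≤ et.2 → s ≤ et.2)
    (h : NSJourney G t u v) : NSJourney G s u v := by
  cases h with
  | single hle he => exact .single (hst _ he hle) he
  | cons hle he htail => exact .cons (hst _ he hle) he htail

theorem NSJourney.anti {s t : ℕ} {u v : V} (hst : s ≤ t) (h : NSJourney G t u v) :
    NSJourney G s u v :=
  h.restart fun _ _ => hst.trans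

theorem NSJourney.of_mem_edge {et : Sym2 V × ℕ} (het : et ∈ G) {w z : V} (hw : w ∈ et.1)
    (hz : z ∈ et.1) : NSJourney G et.2 w z := by
  obtain ⟨e, t⟩ := et
  rcases eq_or_ne w z with rfl | hwz
  · obtain ⟨y, rfl⟩ := Sym2.mem_iff_exists.1 hw
    exact .cons le_rfl het (.single le_rfl (Sym2.eq_swap ▸ het))
  · obtain rfl : e = s(w, z) := (Sym2.mem_and_mem_iff hwz).1 ⟨hw, hz⟩
    exact .single le_rfl het

theorem NSJourney.cons_of_mem_edge {et : Sym2 V × ℕ} (het : et ∈ G) {w z v : V}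
    (hw : w ∈ et.1) (hz : z ∈ et.1) (h : NSJourney G et.2 z v) : NSJourney G et.2 w v := by
  obtain ⟨e, t⟩ := et
  rcases eq_or_ne w z with rfl | hwz
  · exact h
  · obtain rfl : e = s(w, z) := (Sym2.mem_and_mem_iff hwz).1 ⟨hw, hz⟩
    exact .cons le_rfl het h

end Journeys

section Arcs

variable {V : Type*} {G : Finset (Sym2 V × ℕ)} {T : ℕ} {et ft : Sym2 V × ℕ}

theorem ExpArc'.wait (w : V) {t : ℕ} (ht : 1 ≤ t) (htT : t ≤ T) :
    ExpArc' G T (.inl (w, t)) (.inl (w, t + 1)) :=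
  .inl (.inl ⟨w, t, ht, htT, rfl, rfl⟩)

theorem ExpArc'.enter (het : et ∈ G) {w : V} (hw : w ∈ et.1) :
    ExpArc' G T (.inl (w, et.2)) (.inr (et, false)) :=
  .inl (.inr (.inl ⟨et, het, w, hw, rfl, rfl⟩))

theorem ExpArc'.traverse (het : et ∈ G) : ExpArc' G T (.inr (et, false)) (.inr (et, true)) :=
  .inl (.inr (.inr (.inl ⟨et, het, rfl, rfl⟩)))

theorem ExpArc'.leave (het : et ∈ G) {w : V} (hw : w ∈ et.1) :
    ExpArc' G T (.inr (et, true)) (.inl (w, et.2 + 1)) :=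
  .inl (.inr (.inr (.inr ⟨et, het, w, hw, rfl, rfl⟩)))

theorem ExpArc'.transfer (het : et ∈ G) (hft : ft ∈ G) (hne : et ≠ ft) (htime : et.2 = ft.2)
    {z : V} (hze : z ∈ et.1) (hzf : z ∈ ft.1) :
    ExpArc' G T (.inr (et, true)) (.inr (ft, false)) :=
  .inr ⟨et, het, ft, hft, hne, htime, ⟨z, hze, hzf⟩, rfl, rfl⟩

theorem ExpArc'.wait_or_enter_of_copy {w : V} {t : ℕ} {Y : EV V}
    (h : ExpArc' G T (.inl (w, t)) Y) :
    Y = .inl (w, t + 1) ∨ ∃ et ∈ G, et.2 = t ∧ w ∈ et.1 ∧ Y = .inr (et, false) := by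
  rcases h with (⟨_, _, -, -, hX, rfl⟩ | ⟨et, het, _, hw, hX, rfl⟩ | ⟨_, -, hX, -⟩ |
    ⟨_, -, _, -, hX, -⟩) | ⟨_, -, _, -, -, -, -, hX, -⟩ <;> cases hX
  · exact .inl rfl
  · exact .inr ⟨et, het, rfl, hw, rfl⟩

end Arcs

section Paths

variable {V : Type*} {G : Finset (Sym2 V × ℕ)} {T : ℕ} {et ft : Sym2 V × ℕ}

/-- Directed paths in the non-strict temporal expansion `G_T'`, encoded as reachability
(a path and a walk between two vertices exist simultaneously). -/
abbrev ExpPath (G : Finset (Sym2 V × ℕ)) (T : ℕ) : EV V → EV V → Prop :=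
  Relation.ReflTransGen (ExpArc' G T)

theorem ExpPath.wait (w : V) {s t : ℕ} (hs : 1 ≤ s) (hst : s ≤ t) (ht : t ≤ T + 1) :
    ExpPath G T (.inl (w, s)) (.inl (w, t)) := by
  induction t, hst using Nat.le_induction with
  | base => exact .refl
  | succ t hst ih => exact (ih (by lia)).tail (.wait w (by lia) (by lia))

theorem ExpPath.enter (het : et ∈ G) {w : V} (hw : w ∈ et.1) {s : ℕ} (hs : 1 ≤ s)
    (hst : s ≤ et.2) (ht : et.2 ≤ T) : ExpPath G T (.inl (w, s)) (.inr (et, false)) :=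
  (ExpPath.wait w hs hst (by lia)).tail (.enter het hw)

theorem ExpPath.leave (het : et ∈ G) {w : V} (hw : w ∈ et.1) (ht : et.2 ≤ T) :
    ExpPath G T (.inr (et, true)) (.inl (w, T + 1)) :=
  .head (.leave het hw) (ExpPath.wait w (by lia) (by lia) le_rfl)

theorem ExpPath.gadget_to_gadget (het : et ∈ G) (hft : ft ∈ G) {z : V} (hze : z ∈ et.1)
    (hzf : z ∈ ft.1) (htime : et.2 ≤ ft.2) (ht : ft.2 ≤ T) :
    ExpPath G T (.inr (et, true)) (.inr (ft, true)) := by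
  rcases eq_or_ne et ft with rfl | hne
  · exact .refl
  suffices ExpPath G T (.inr (et, true)) (.inr (ft, false)) from this.tail (.traverse hft)
  rcases htime.eq_or_lt with heq | hlt
  · exact .single (.transfer het hft hne heq hze hzf)
  · exact .head (.leave het hze) (ExpPath.enter hft hzf (by lia) hlt ht)

theorem NSJourney.exists_expPath (hle : ∀ et ∈ G, et.2 ≤ T) {s : ℕ} {u v : V}
    (h : NSJourney G s u v) :
    ∃ et ∈ G, s ≤ et.2 ∧ u ∈ et.1 ∧ ExpPath G T (.inr (et, true)) (.inl (v, T + 1)) := by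
  induction h with
  | single hs he =>
    exact ⟨_, he, hs, Sym2.mem_mk_left _ _, .leave he (Sym2.mem_mk_right _ _) (hle _ he)⟩
  | cons hs he _ ih =>
    obtain ⟨ft, hft, htime, hv, hpath⟩ := ih
    exact ⟨_, he, hs, Sym2.mem_mk_left _ _,
      (ExpPath.gadget_to_gadget he hft (Sym2.mem_mk_right _ _) hv htime (hle ft hft)).trans hpath⟩

theorem ExpPath.exists_entry {w : V} {s : ℕ} {g : (Sym2 V × ℕ) × Bool}
    (h : ExpPath G T (.inl (w, s)) (.inr g)) :
    ∃ et ∈ G, s ≤ et.2 ∧ w ∈ et.1 ∧ ExpPath G T (.inr (et, false)) (.inr g) := by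
  generalize hX : (.inl (w, s) : EV V) = X at h
  induction h using Relation.ReflTransGen.head_induction_on generalizing s with
  | refl => cases hX
  | head harc hpath ih =>
    subst hX
    rcases harc.wait_or_enter_of_copy with rfl | ⟨et, het, rfl, hw, rfl⟩
    · obtain ⟨et, het, hs, hw, hentry⟩ := ih rfl
      exact ⟨et, het, (Nat.le_succ s).trans hs, hw, hentry⟩
    · exact ⟨et, het, le_rfl, hw, hpath⟩

end Paths

section Delivers

variable {V : Type*} {G : Finset (Sym2 V × ℕ)} {T : ℕ} {v : V} {X Y : EV V}

/-- The invariant of a path towards a copy of `v`: a traveller at a vertex of the expansion can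
still get to `v` by a journey. At a copy of `v` itself no journey is asked for, whereas on a
gadget there must be one from either endpoint of its edge, starting at the time of the gadget. -/
def Delivers (G : Finset (Sym2 V × ℕ)) (v : V) : EV V → Prop
  | .inl (w, t) => w = v ∨ NSJourney G t w v
  | .inr (et, _) => ∀ w ∈ et.1, NSJourney G et.2 w v

theorem Delivers.of_arc (h : ExpArc' G T X Y) (hY : Delivers G v Y) : Delivers G v X := by
  rcases h with (⟨w, t, -, -, rfl, rfl⟩ | ⟨et, -, w, hw, rfl, rfl⟩ | ⟨et, -, rfl, rfl⟩ |
    ⟨et, het, w, hw, rfl, rfl⟩) | ⟨et, het, ft, -, -, htime, ⟨z, hze, hzf⟩, rfl, rfl⟩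
  · exact hY.imp_right (.anti (Nat.le_succ t))
  · exact .inr (hY w hw)
  · exact hY
  · intro x hx
    rcases hY with rfl | hjourney
    · exact .of_mem_edge het hx hw
    · exact .cons_of_mem_edge het hx hw (hjourney.anti (Nat.le_succ _))
  · exact fun x hx => .cons_of_mem_edge het hx hze (htime ▸ hY z hzf)

theorem Delivers.of_expPath (h : ExpPath G T X Y) (hY : Delivers G v Y) : Delivers G v X :=
  h.head_induction_on hY fun harc _ => .of_arc harc

end Delivers

theorem nonstrict_expansion_correct_general {V : Type*} {G : Finset (Sym2 V × ℕ)} {T : ℕ}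
    (hle : ∀ et ∈ G, et.2 ≤ T) {s : ℕ} (hs : 1 ≤ s) (u v : V) :
    NSJourney G s u v ↔
      ∃ X Y : EV V,
        ExpPath G T (.inl (u, s)) X ∧ SpecialArc G X Y ∧ ExpPath G T Y (.inl (v, T + 1)) := by
  constructor
  · intro h
    obtain ⟨et, het, hst, hu, hpath⟩ := h.exists_expPath hle
    exact ⟨_, _, .enter het hu hs hst (hle et het), ⟨et, het, rfl, rfl⟩, hpath⟩
  · rintro ⟨_, _, hbefore, ⟨et, het, rfl, rfl⟩, hafter⟩
    obtain ⟨ft, -, hst, hu, hentry⟩ := hbefore.exists_entry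
    have hdelivers : Delivers G v (.inr (ft, false)) :=
      .of_expPath (hentry.trans (.head (.traverse het) hafter)) (.inl rfl)
    exact (hdelivers u hu).anti hst

theorem nonstrict_expansion_correct {V : Type*} [Fintype V] [DecidableEq V]
    (G : Finset (Sym2 V × ℕ)) (T : ℕ)
    (hvalid : ∀ et ∈ G, ¬ et.1.IsDiag ∧ 1 ≤ et.2)
    (hle : ∀ et ∈ G, et.2 ≤ T)
    (hmax : ∃ et ∈ G, et.2 = T)
    (u v : V) :
    NSJourney G 0 u v ↔
      ∃ X Y : EV V,
        Relation.ReflTransGen (ExpArc' G T) (Sum.inl (u, 1)) X ∧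
        SpecialArc G X Y ∧
        Relation.ReflTransGen (ExpArc' G T) Y (Sum.inl (v, T + 1)) := by
  have hstart : NSJourney G 0 u v ↔ NSJourney G 1 u v :=
    ⟨.restart fun et het _ => (hvalid et het).2, .anti zero_le_one⟩
  exact hstart.trans (nonstrict_expansion_correct_general hle le_rfl u v)

end Stmt14
end

section
/- Let 𝒢 be a temporal graph of lifespan 2 on a nonempty finite vertex set V. Suppose there exists a set F' of at most K temporal edges (with endpoints in V and time labels in {1,2}) such that 𝒢 ↑ F' is temporally connected (with non-strict journeys). Then there exists a set F'' of at most K temporal edges such that 𝒢 ↑ F'' is temporally connected and for every snapshot component C^1 of 𝒢 ↑ F'' at time 1 and every snapshot component C^2 of 𝒢 ↑ F'' at time 2, C^1 ∩ C^2 ≠ ∅; equivalently, augmenting 𝒢 by at most K temporal edges to achieve temporal connectivity is possible if and only if the snapshot components of 𝒢 at times 1 and 2 can be merged, by at most K merge operations each uniting two current components at time 1 or two current components at time 2, into families in which every time-1 component intersects every time-2 component. -/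
/-!
STATEMENT 15: For a temporal graph `𝒢` of lifespan 2 on a nonempty finite vertex set:
if `𝒢` can be augmented by at most `K` temporal edges (time labels in {1,2}) so as to
become temporally connected, then it can be done so that, in the augmented graph, every
snapshot component at time 1 intersects every snapshot component at time 2.
Equivalently, such an augmentation by at most `K` temporal edges exists iff the
snapshot components of `𝒢` at times 1 and 2 can be merged, by at most `K` merge
operations (each uniting two current components at time 1 or two current components at
time 2), into families in which every time-1 group intersects every time-2 group.  The
merging is encoded by grouping maps `f` and `g` whose fibres over their ranges are the
groups; the number of merge operations is `(k₁ − #time-1 groups) + (k₂ − #time-2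
groups)`.
-/

namespace Stmt15

/-- Non-strict journeys using temporal edges of `G`, all at times `≥ t₀`,
with nondecreasing time labels (at least one temporal edge is used). -/
inductive NSJourney {V : Type*} (G : Finset (Sym2 V × ℕ)) : ℕ → V → V → Prop
  | single {t₀ t : ℕ} {u v : V} (hle : t₀ ≤ t) (h : (s(u, v), t) ∈ G) : NSJourney G t₀ u v
  | cons {t₀ t : ℕ} {u v w : V} (hle : t₀ ≤ t) (h : (s(u, v), t) ∈ G)
      (htail : NSJourney G t v w) : NSJourney G t₀ u w

def TemporallyConnected {V : Type*} (G : Finset (Sym2 V × ℕ)) : Prop :=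
  ∀ u v : V, u ≠ v → NSJourney G 0 u v

/-- The snapshot of a temporal graph at time `t`; its connected components are the
snapshot components at time `t`. -/
def snapshot {V : Type*} (G : Finset (Sym2 V × ℕ)) (t : ℕ) : SimpleGraph V :=
  SimpleGraph.fromEdgeSet {e | (e, t) ∈ G}

/-!
A non-strict journey in a temporal graph with time labels `1` and `2` walks inside a time-1
component and then inside a time-2 component. Hence temporal connectivity already says that every
time-1 component meets every time-2 component, and `F'' = F'` works.

Adding one edge to a snapshot lowers its number of components by at most one, so the components of
the augmented snapshots arise from those of `𝒢` by no more merge operations than there are added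
edges. Conversely, a grouping of the components is realised by joining each component other than
the chosen representative of its group to that representative.
-/

section Fibers

variable {α β : Type*}

/-- The number of merge operations that unite the elements of `α` into the nonempty fibres of `f`.
It is meant for finite `α`, where `Nat.card` has no junk value and the subtraction is exact. -/
noncomputable def mergeCount (f : α → β) : ℕ :=
  Nat.card α - Nat.card (Set.range f)

/-- A chosen representative of the fibre of `f` through a given point, the same for all points of
the fibre. -/
noncomputable def fiberRep (f : α → β) : α → α :=
  Set.rangeSplitting f ∘ Set.rangeFactorization f

theorem fiberRep_eq_fiberRep_iff (f : α → β) {a b : α} :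
    fiberRep f a = fiberRep f b ↔ f a = f b :=
  (Set.rangeSplitting_injective f).eq_iff.trans Subtype.ext_iff

theorem range_fiberRep (f : α → β) : Set.range (fiberRep f) = Set.range (Set.rangeSplitting f) :=
  Set.rangeFactorization_surjective.range_comp _

theorem card_range_fiberRep (f : α → β) :
    Nat.card (Set.range (fiberRep f)) = Nat.card (Set.range f) := by
  rw [range_fiberRep, Nat.card_range_of_injective (Set.rangeSplitting_injective f)]

theorem fiberRep_fiberRep (f : α → β) (a : α) : fiberRep f (fiberRep f a) = fiberRep f a :=
  (fiberRep_eq_fiberRep_iff f).2 (Set.apply_rangeSplitting f _)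

theorem ncard_fiberRep_ne_le_mergeCount [Finite α] (f : α → β) :
    {a | fiberRep f a ≠ a}.ncard ≤ mergeCount f := by
  have hsub : {a | fiberRep f a ≠ a} ⊆ (Set.range (fiberRep f))ᶜ := by
    rintro a ha ⟨b, rfl⟩
    exact ha (fiberRep_fiberRep f b)
  calc {a | fiberRep f a ≠ a}.ncard
      ≤ (Set.range (fiberRep f))ᶜ.ncard := Set.ncard_le_ncard hsub
    _ = mergeCount f := by
        rw [Set.ncard_compl, ← Nat.card_coe_set_eq, card_range_fiberRep, mergeCount]

end Fibers

section Setoids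

variable {α : Type*}

/-- Every class of `r` intersects every class of `s`; the classes are given by representatives. -/
def ClassesMeet (r s : Setoid α) : Prop :=
  ∀ a b, ∃ c, r a c ∧ s b c

theorem ClassesMeet.mono {r r' s s' : Setoid α} (h : ClassesMeet r s) (hr : r ≤ r') (hs : s ≤ s') :
    ClassesMeet r' s' := fun a b ↦
  let ⟨c, hac, hbc⟩ := h a b
  ⟨c, hr hac, hs hbc⟩

end Setoids

section Components

open SimpleGraph

variable {V β γ : Type*} {G H : SimpleGraph V}

/-- Two vertices are equivalent when `f` puts their components into the same group. -/
def groupSetoid (f : G.ConnectedComponent → β) : Setoid V :=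
  Setoid.ker (f ∘ G.connectedComponentMk)

theorem groupSetoid_apply {f : G.ConnectedComponent → β} {u v : V} :
    groupSetoid f u v ↔ f (G.connectedComponentMk u) = f (G.connectedComponentMk v) :=
  Iff.rfl

theorem classesMeet_groupSetoid_iff {f : G.ConnectedComponent → β}
    {g : H.ConnectedComponent → γ} :
    ClassesMeet (groupSetoid f) (groupSetoid g) ↔
      ∀ r ∈ Set.range f, ∀ c ∈ Set.range g, ∃ r' c' v, f r' = r ∧ g c' = c ∧
        G.connectedComponentMk v = r' ∧ H.connectedComponentMk v = c' := by
  simp [ClassesMeet, groupSetoid_apply, ConnectedComponent.forall, eq_comm]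

theorem card_connectedComponent_le_card_sup_edge_add_one (G : SimpleGraph V)
    [Finite G.ConnectedComponent] (u v : V) :
    Nat.card G.ConnectedComponent ≤ Nat.card (G ⊔ edge u v).ConnectedComponent + 1 := by
  classical
  -- Redirecting the component of `u` to that of `v` respects the new edge, and of all components of
  -- `G` only that of `u` can be missed.
  let redirect : V → G.ConnectedComponent := fun a ↦
    if G.Reachable a u then G.connectedComponentMk v else G.connectedComponentMk a
  have redirect_eq_of_adj {a b : V} (hab : (G ⊔ edge u v).Adj a b) : redirect a = redirect b := by
    obtain hab | hab := hab
    · have hreach : G.Reachable a u ↔ G.Reachable b u :=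
        ⟨hab.reachable.symm.trans, hab.reachable.trans⟩
      simp only [redirect, hreach, ConnectedComponent.connectedComponentMk_eq_of_adj hab]
    · obtain ⟨⟨rfl, rfl⟩ | ⟨rfl, rfl⟩, -⟩ := (edge_adj ..).1 hab <;> simp [redirect]
  have redirect_eq_of_walk {a b : V} (p : (G ⊔ edge u v).Walk a b) : redirect a = redirect b := by
    induction p with
    | nil => rfl
    | cons hadj _ ih => exact (redirect_eq_of_adj hadj).trans ih
  let recover : Option (G ⊔ edge u v).ConnectedComponent → G.ConnectedComponent
    | none => G.connectedComponentMk u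
    | some c => c.lift redirect fun _ _ p _ ↦ redirect_eq_of_walk p
  have recover_surjective : recover.Surjective := by
    refine ConnectedComponent.ind fun a ↦ ?_
    by_cases ha : G.Reachable a u
    · exact ⟨none, ConnectedComponent.sound ha.symm⟩
    · exact ⟨some (connectedComponentMk _ a), if_neg ha⟩
  have : Finite (G ⊔ edge u v).ConnectedComponent :=
    .of_surjective _ (ConnectedComponent.surjective_map_ofLE le_sup_left)
  simpa only [Finite.card_option] using Nat.card_le_card_of_surjective recover recover_surjective

theorem card_connectedComponent_le_card_sup_add_ncard_edgeSet (G : SimpleGraph V)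
    [Finite G.ConnectedComponent] (hH : H.edgeSet.Finite) :
    Nat.card G.ConnectedComponent ≤ Nat.card (G ⊔ H).ConnectedComponent + H.edgeSet.ncard := by
  suffices ∀ E : Set (Sym2 V), E.Finite → ∀ G : SimpleGraph V, Finite G.ConnectedComponent →
      Nat.card G.ConnectedComponent ≤ Nat.card (G ⊔ fromEdgeSet E).ConnectedComponent + E.ncard by
    simpa using this H.edgeSet hH G inferInstance
  intro E hE
  induction E, hE using Set.Finite.induction_on with
  | empty => simp
  | @insert e E he hE ih =>
    intro G _
    induction e with | _ u v =>
    have : Finite (G ⊔ edge u v).ConnectedComponent :=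
      .of_surjective _ (ConnectedComponent.surjective_map_ofLE le_sup_left)
    calc Nat.card G.ConnectedComponent
        ≤ Nat.card (G ⊔ edge u v).ConnectedComponent + 1 :=
          card_connectedComponent_le_card_sup_edge_add_one G u v
      _ ≤ Nat.card (G ⊔ edge u v ⊔ fromEdgeSet E).ConnectedComponent + E.ncard + 1 := by
          gcongr
          exact ih _ this
      _ = Nat.card (G ⊔ fromEdgeSet (insert s(u, v) E)).ConnectedComponent +
            (insert s(u, v) E).ncard := by
          rw [Set.ncard_insert_of_notMem he hE, Set.insert_eq, fromEdgeSet_union, ← sup_assoc, edge,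
            add_assoc]

theorem exists_grouping_of_le (h : G ≤ H) :
    ∃ f : G.ConnectedComponent → G.ConnectedComponent,
      Nat.card (Set.range f) = Nat.card H.ConnectedComponent ∧
        H.reachableSetoid ≤ groupSetoid f := by
  let π : G.ConnectedComponent → H.ConnectedComponent := .map (Hom.ofLE h)
  have π_surjective : π.Surjective := ConnectedComponent.surjective_map_ofLE h
  refine ⟨fiberRep π, ?_, fun {a b} hab ↦
    (fiberRep_eq_fiberRep_iff π).2 (ConnectedComponent.sound hab)⟩
  rw [card_range_fiberRep, π_surjective.range_eq, Nat.card_univ]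

theorem exists_grouping_of_sup (G : SimpleGraph V) [Finite G.ConnectedComponent]
    (hH : H.edgeSet.Finite) :
    ∃ f : G.ConnectedComponent → G.ConnectedComponent,
      mergeCount f ≤ H.edgeSet.ncard ∧ (G ⊔ H).reachableSetoid ≤ groupSetoid f := by
  obtain ⟨f, hcard, hle⟩ := exists_grouping_of_le (le_sup_left : G ≤ G ⊔ H)
  refine ⟨f, ?_, hle⟩
  rw [mergeCount, hcard, Nat.sub_le_iff_le_add']
  exact card_connectedComponent_le_card_sup_add_ncard_edgeSet G hH

/-- A graph that realises the grouping `f` of the components of `G`: it joins each component to the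
representative component of its group, by an edge between the vertices chosen by `Quot.out`. -/
noncomputable def mergeGraph (f : G.ConnectedComponent → β) : SimpleGraph V :=
  fromEdgeSet ((fun c ↦ s(c.out, (fiberRep f c).out)) '' {c | fiberRep f c ≠ c})

theorem edgeSet_mergeGraph_subset (f : G.ConnectedComponent → β) :
    (mergeGraph f).edgeSet ⊆ (fun c ↦ s(c.out, (fiberRep f c).out)) '' {c | fiberRep f c ≠ c} :=
  (edgeSet_fromEdgeSet _).trans_subset Set.sdiff_subset

theorem finite_edgeSet_mergeGraph [Finite G.ConnectedComponent] (f : G.ConnectedComponent → β) :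
    (mergeGraph f).edgeSet.Finite :=
  ((Set.toFinite _).image _).subset (edgeSet_mergeGraph_subset f)

theorem ncard_edgeSet_mergeGraph_le [Finite G.ConnectedComponent] (f : G.ConnectedComponent → β) :
    (mergeGraph f).edgeSet.ncard ≤ mergeCount f :=
  calc (mergeGraph f).edgeSet.ncard
      ≤ ((fun c ↦ s(c.out, (fiberRep f c).out)) '' {c | fiberRep f c ≠ c}).ncard :=
        Set.ncard_le_ncard (edgeSet_mergeGraph_subset f) ((Set.toFinite _).image _)
    _ ≤ {c | fiberRep f c ≠ c}.ncard := Set.ncard_image_le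
    _ ≤ mergeCount f := ncard_fiberRep_ne_le_mergeCount f

theorem reachable_mergeGraph_out_out (f : G.ConnectedComponent → β) (c : G.ConnectedComponent) :
    (mergeGraph f).Reachable c.out (fiberRep f c).out := by
  by_cases hc : c.out = (fiberRep f c).out
  · rw [← hc]
  · refine Adj.reachable ((fromEdgeSet_adj _).2 ⟨⟨c, fun hfix ↦ hc ?_, rfl⟩, hc⟩)
    rw [hfix]

theorem reachable_sup_mergeGraph_out (f : G.ConnectedComponent → β) (v : V) :
    (G ⊔ mergeGraph f).Reachable v (fiberRep f (G.connectedComponentMk v)).out := by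
  have hout : G.Reachable v (G.connectedComponentMk v).out :=
    ConnectedComponent.exact (Quot.out_eq _).symm
  exact (hout.mono le_sup_left).trans ((reachable_mergeGraph_out_out f _).mono le_sup_right)

theorem groupSetoid_le_reachableSetoid_sup_mergeGraph (f : G.ConnectedComponent → β) :
    groupSetoid f ≤ (G ⊔ mergeGraph f).reachableSetoid := by
  intro u v huv
  have hrep := (fiberRep_eq_fiberRep_iff f).2 huv
  have hu := reachable_sup_mergeGraph_out f u
  rw [hrep] at hu
  exact hu.trans (reachable_sup_mergeGraph_out f v).symm

end Components

section TemporalGraphs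

variable {V : Type*} {G : Finset (Sym2 V × ℕ)} {s t : ℕ} {u v w : V}

theorem snapshot_adj : (snapshot G t).Adj u v ↔ (s(u, v), t) ∈ G ∧ u ≠ v :=
  SimpleGraph.fromEdgeSet_adj _

theorem snapshot_reachable_of_mem (h : (s(u, v), t) ∈ G) : (snapshot G t).Reachable u v := by
  obtain rfl | huv := eq_or_ne u v
  · rfl
  · exact (snapshot_adj.2 ⟨h, huv⟩).reachable

theorem snapshot_union [DecidableEq V] (G F : Finset (Sym2 V × ℕ)) (t : ℕ) :
    snapshot (G ∪ F) t = snapshot G t ⊔ snapshot F t := by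
  ext u v
  simp only [SimpleGraph.sup_adj, snapshot_adj, Finset.mem_union, or_and_right]

theorem edgeSet_snapshot_subset (G : Finset (Sym2 V × ℕ)) (t : ℕ) :
    (snapshot G t).edgeSet ⊆ {e | (e, t) ∈ G} :=
  (SimpleGraph.edgeSet_fromEdgeSet _).trans_subset Set.sdiff_subset

theorem finite_edgeSet_snapshot (G : Finset (Sym2 V × ℕ)) (t : ℕ) :
    (snapshot G t).edgeSet.Finite :=
  (G.finite_toSet.preimage (Prod.mk_left_injective t).injOn).subset (edgeSet_snapshot_subset G t)

theorem ncard_edgeSet_snapshot_add_le (hst : s ≠ t) (F : Finset (Sym2 V × ℕ)) :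
    (snapshot F s).edgeSet.ncard + (snapshot F t).edgeSet.ncard ≤ F.card := by
  have ncard_le (t : ℕ) : (snapshot F t).edgeSet.ncard ≤ (F.filter (·.2 = t)).card := by
    rw [← Set.ncard_coe_finset]
    exact Set.ncard_le_ncard_of_injOn (·, t)
      (fun e he ↦ by simpa using edgeSet_snapshot_subset F t he) (Prod.mk_left_injective t).injOn
  have hdisj : Disjoint (F.filter (·.2 = s)) (F.filter (·.2 = t)) :=
    Finset.disjoint_filter.2 fun _ _ hs ht ↦ hst (hs.symm.trans ht)
  classical
  calc _ ≤ (F.filter (·.2 = s)).card + (F.filter (·.2 = t)).card :=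
        add_le_add (ncard_le s) (ncard_le t)
    _ = (F.filter (·.2 = s) ∪ F.filter (·.2 = t)).card := (Finset.card_union_of_disjoint hdisj).symm
    _ ≤ F.card := Finset.card_le_card
        (Finset.union_subset (Finset.filter_subset _ _) (Finset.filter_subset _ _))

theorem exists_snapshot_eq_and_snapshot_eq (hst : s ≠ t) {H₁ H₂ : SimpleGraph V}
    (h₁ : H₁.edgeSet.Finite) (h₂ : H₂.edgeSet.Finite) :
    ∃ F : Finset (Sym2 V × ℕ), F.card ≤ H₁.edgeSet.ncard + H₂.edgeSet.ncard ∧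
      (∀ et ∈ F, ¬ et.1.IsDiag ∧ (et.2 = s ∨ et.2 = t)) ∧
      snapshot F s = H₁ ∧ snapshot F t = H₂ := by
  classical
  refine ⟨h₁.toFinset ×ˢ {s} ∪ h₂.toFinset ×ˢ {t}, ?_, ?_, ?_, ?_⟩
  · rw [Set.ncard_eq_toFinset_card _ h₁, Set.ncard_eq_toFinset_card _ h₂]
    exact (Finset.card_union_le _ _).trans_eq (by simp)
  · rintro ⟨e, τ⟩ he
    simp only [Finset.mem_union, Finset.mem_product, Set.Finite.mem_toFinset,
      Finset.mem_singleton] at he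
    obtain ⟨he, hτ⟩ | ⟨he, hτ⟩ := he
    · exact ⟨H₁.not_isDiag_of_mem_edgeSet he, .inl hτ⟩
    · exact ⟨H₂.not_isDiag_of_mem_edgeSet he, .inr hτ⟩
  · ext u v
    simpa [snapshot_adj, hst.symm] using H₁.ne_of_adj
  · ext u v
    simpa [snapshot_adj, hst] using H₂.ne_of_adj

theorem NSJourney.anti (hst : s ≤ t) (h : NSJourney G t u v) : NSJourney G s u v := by
  cases h with
  | single hle hmem => exact .single (hst.trans hle) hmem
  | cons hle hmem htail => exact .cons (hst.trans hle) hmem htail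

theorem NSJourney.of_reachable (h : (snapshot G t).Reachable u v) (huv : u ≠ v) :
    NSJourney G t u v := by
  obtain ⟨p⟩ := h
  induction p with
  | nil => exact absurd rfl huv
  | @cons a b c hadj p ih =>
    have hmem := (snapshot_adj.1 hadj).1
    obtain rfl | hbc := eq_or_ne b c
    · exact .single le_rfl hmem
    · exact .cons le_rfl hmem (ih hbc)

theorem NSJourney.reachable_trans (h : (snapshot G t).Reachable u v) (hvw : NSJourney G t v w) :
    NSJourney G t u w := by
  obtain ⟨p⟩ := h
  induction p with
  | nil => exact hvw
  | cons hadj _ ih => exact .cons le_rfl (snapshot_adj.1 hadj).1 (ih hvw)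

theorem temporallyConnected_of_classesMeet (hst : s ≤ t)
    (h : ClassesMeet (snapshot G s).reachableSetoid (snapshot G t).reachableSetoid) :
    TemporallyConnected G := by
  intro u v huv
  obtain ⟨z, huz, hvz⟩ := h u v
  suffices NSJourney G s u v from this.anti s.zero_le
  obtain rfl | hzv := eq_or_ne z v
  · exact .of_reachable huz huv
  · exact .reachable_trans huz ((NSJourney.of_reachable hvz.symm hzv).anti hst)

theorem NSJourney.reachable_snapshot (h : NSJourney G s u v)
    (hG : ∀ et ∈ G, s ≤ et.2 → et.2 = t) : (snapshot G t).Reachable u v := by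
  induction h with
  | single hle hmem =>
    obtain rfl := hG _ hmem hle
    exact snapshot_reachable_of_mem hmem
  | cons hle hmem _ ih =>
    obtain rfl := hG _ hmem hle
    exact (snapshot_reachable_of_mem hmem).trans (ih fun et het h ↦ hG et het (hle.trans h))

theorem NSJourney.exists_reachable_reachable {t₀ : ℕ} (h : NSJourney G t₀ u v) (hst : s < t)
    (hG : ∀ et ∈ G, et.2 = s ∨ et.2 = t) :
    ∃ z, (snapshot G s).Reachable u z ∧ (snapshot G t).Reachable z v := by
  induction h with
  | @single _ τ u v _ hmem =>
    obtain rfl | rfl : τ = s ∨ τ = t := hG _ hmem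
    · exact ⟨v, snapshot_reachable_of_mem hmem, .rfl⟩
    · exact ⟨u, .rfl, snapshot_reachable_of_mem hmem⟩
  | @cons _ τ u v w _ hmem htail ih =>
    obtain rfl | rfl : τ = s ∨ τ = t := hG _ hmem
    · obtain ⟨z, hvz, hzw⟩ := ih
      exact ⟨z, (snapshot_reachable_of_mem hmem).trans hvz, hzw⟩
    · have hvw := htail.reachable_snapshot fun et het hle ↦ (hG et het).resolve_left
        (hst.trans_le hle).ne'
      exact ⟨u, .rfl, (snapshot_reachable_of_mem hmem).trans hvw⟩

theorem TemporallyConnected.classesMeet (h : TemporallyConnected G) (hst : s < t)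
    (hG : ∀ et ∈ G, et.2 = s ∨ et.2 = t) :
    ClassesMeet (snapshot G s).reachableSetoid (snapshot G t).reachableSetoid := by
  intro u v
  obtain rfl | huv := eq_or_ne u v
  · exact ⟨u, .rfl, .rfl⟩
  · obtain ⟨z, huz, hzv⟩ := (h u v huv).exists_reachable_reachable hst hG
    exact ⟨z, huz, hzv.symm⟩

end TemporalGraphs

theorem augmentation_normalization_and_merging {V : Type*} [Fintype V] [DecidableEq V]
    [Nonempty V] (𝒢 : Finset (Sym2 V × ℕ))
    (hvalid : ∀ et ∈ 𝒢, ¬ et.1.IsDiag ∧ (et.2 = 1 ∨ et.2 = 2))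
    (hmax : ∃ et ∈ 𝒢, et.2 = 2)
    (K : ℕ) (hK : 1 ≤ K) :
    -- if an augmentation by ≤ K temporal edges yields temporal connectivity, then one
    -- exists in which every time-1 component meets every time-2 component
    ((∃ F' : Finset (Sym2 V × ℕ), F'.card ≤ K ∧
        (∀ et ∈ F', ¬ et.1.IsDiag ∧ (et.2 = 1 ∨ et.2 = 2)) ∧
        TemporallyConnected (𝒢 ∪ F')) →
      ∃ F'' : Finset (Sym2 V × ℕ), F''.card ≤ K ∧
        (∀ et ∈ F'', ¬ et.1.IsDiag ∧ (et.2 = 1 ∨ et.2 = 2)) ∧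
        TemporallyConnected (𝒢 ∪ F'') ∧
        ∀ u v : V, ∃ z : V,
          (snapshot (𝒢 ∪ F'') 1).Reachable u z ∧ (snapshot (𝒢 ∪ F'') 2).Reachable v z) ∧
    -- equivalently: an augmentation by ≤ K temporal edges yields temporal connectivity
    -- iff at most K merge operations make every time-1 group meet every time-2 group
    ((∃ F' : Finset (Sym2 V × ℕ), F'.card ≤ K ∧
        (∀ et ∈ F', ¬ et.1.IsDiag ∧ (et.2 = 1 ∨ et.2 = 2)) ∧
        TemporallyConnected (𝒢 ∪ F')) ↔
      (∃ (f : (snapshot 𝒢 1).ConnectedComponent → (snapshot 𝒢 1).ConnectedComponent)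
         (g : (snapshot 𝒢 2).ConnectedComponent → (snapshot 𝒢 2).ConnectedComponent),
        (Nat.card ((snapshot 𝒢 1).ConnectedComponent) - Nat.card (Set.range f)) +
            (Nat.card ((snapshot 𝒢 2).ConnectedComponent) - Nat.card (Set.range g)) ≤ K ∧
        ∀ r ∈ Set.range f, ∀ c ∈ Set.range g,
          ∃ (r' : (snapshot 𝒢 1).ConnectedComponent)
            (c' : (snapshot 𝒢 2).ConnectedComponent) (v : V),
            f r' = r ∧ g c' = c ∧
            (snapshot 𝒢 1).connectedComponentMk v = r' ∧
            (snapshot 𝒢 2).connectedComponentMk v = c')) := by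
  have classesMeet {F : Finset (Sym2 V × ℕ)}
      (hF : ∀ et ∈ F, ¬ et.1.IsDiag ∧ (et.2 = 1 ∨ et.2 = 2)) (htc : TemporallyConnected (𝒢 ∪ F)) :
      ClassesMeet (snapshot (𝒢 ∪ F) 1).reachableSetoid (snapshot (𝒢 ∪ F) 2).reachableSetoid :=
    htc.classesMeet one_lt_two fun et het ↦
      (Finset.mem_union.1 het).elim (fun h ↦ (hvalid et h).2) fun h ↦ (hF et h).2
  refine ⟨fun ⟨F, hcard, hF, htc⟩ ↦ ⟨F, hcard, hF, htc, classesMeet hF htc⟩, ?_, ?_⟩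
  · rintro ⟨F, hcard, hF, htc⟩
    obtain ⟨f, hf, hle_f⟩ := exists_grouping_of_sup (snapshot 𝒢 1) (finite_edgeSet_snapshot F 1)
    obtain ⟨g, hg, hle_g⟩ := exists_grouping_of_sup (snapshot 𝒢 2) (finite_edgeSet_snapshot F 2)
    have hcount := ncard_edgeSet_snapshot_add_le (by decide : 1 ≠ 2) F
    have hmeet := classesMeet hF htc
    rw [snapshot_union, snapshot_union] at hmeet
    exact ⟨f, g, (add_le_add hf hg).trans (hcount.trans hcard),
      classesMeet_groupSetoid_iff.1 (hmeet.mono hle_f hle_g)⟩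
  · rintro ⟨f, g, hcount, hfg⟩
    obtain ⟨F, hcard, hF, hF₁, hF₂⟩ := exists_snapshot_eq_and_snapshot_eq (by decide : 1 ≠ 2)
      (finite_edgeSet_mergeGraph f) (finite_edgeSet_mergeGraph g)
    have hmerge := add_le_add (ncard_edgeSet_mergeGraph_le f) (ncard_edgeSet_mergeGraph_le g)
    refine ⟨F, hcard.trans (hmerge.trans hcount), hF,
      temporallyConnected_of_classesMeet one_le_two ?_⟩
    rw [snapshot_union, snapshot_union, hF₁, hF₂]
    exact (classesMeet_groupSetoid_iff.2 hfg).mono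
      (groupSetoid_le_reachableSetoid_sup_mergeGraph f)
      (groupSetoid_le_reachableSetoid_sup_mergeGraph g)

end Stmt15
end
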